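/- arXiv:2205.06685 — 3 statements merged into one kernel-verified Lean document; each statement's English description precedes it below -/
import Mathlib

section
/- Let (C_n) be the sequence defined by C_0 = 0, C_1 = 0, C_2 = 1, and C_{n+3} = C_{n+2} + C_n for n ≥ 0. Then for any prime p not dividing 2·3·29·31, p divides C_p if and only if there exist integers X, Y with p = X^2 + 31Y^2. -/
/-!
Substituting `t = 3 * x - 1` in `x ^ 3 = x ^ 2 + 1` gives `t ^ 3 - 3 * t - 29 = 0`, and `p ∣ C p`
means that Frobenius fixes the three roots `t` in characteristic `p`. By Cardano, `t = u + 1 / u`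
with `u ^ 3 + 1 / u ^ 3 = 29`, so if `-31` is a square modulo `p` the condition is that `u ^ 3` is
a cube in `𝔽_p(√-3)`. Write `Q = x ^ 2 + x * y + 8 * y ^ 2` for the principal form of discriminant
`-31`. If `p ∣ Q`, then `u ^ 3` is congruent to `A / y` for
`A = (29 * y + 3 * (2 * x + y) * √-3) / 2`, which has norm `27 * Q + y ^ 2`. By cubic reciprocity,
`u ^ 3` is a cube if and only if `(p / A)₃ = 1`. Since `27 * Q ≡ -y ^ 2` modulo the norm of `A`,
and `(y / A)₃ = 1` because `y` divides the trace of `A`, one gets `(Q / A)₃ = 1`. Reduction of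
forms shows that `Q` represents `p` or `2 * p` as soon as `-31` is a square modulo `p`. In the
first case `(p / A)₃ = 1`; in the second `(p / A)₃` is the inverse of `(2 / A)₃`, which is not `1`,
as `y` is odd. For odd `p` the form `Q` represents `p` exactly when `X ^ 2 + 31 * Y ^ 2` does.
-/

namespace Cordonnier

open QuadraticAlgebra

section QuadraticOrder

variable {R : Type*} [CommRing R] [IsDomain R] {a b : R}

lemma not_dvd_im_of_prime_norm {x : QuadraticAlgebra R a b} (hx : Prime x.norm) :
    ¬ x.norm ∣ x.im := by
  intro him
  have hre : x.norm ∣ x.re := by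
    refine hx.dvd_of_dvd_pow (n := 2) ?_
    have : x.re ^ 2 = x.norm - x.im * (b * x.re - a * x.im) := by rw [norm_def]; ring
    exact this ▸ dvd_sub dvd_rfl (him.mul_right _)
  obtain ⟨y, hy⟩ := algebraMap_dvd_iff.mpr ⟨hre, him⟩
  have hsq : x.norm * 1 = x.norm * (x.norm * y.norm) := by
    conv_lhs => rw [hy, map_mul, QuadraticAlgebra.norm_algebraMap]
    ring
  exact hx.not_isUnit (.of_mul_eq_one _ (mul_left_cancel₀ hx.ne_zero hsq).symm)

variable [IsPrincipalIdealRing R]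

lemma exists_dvd_sub_algebraMap_of_prime_norm {x : QuadraticAlgebra R a b} (hx : Prime x.norm)
    (z : QuadraticAlgebra R a b) : ∃ n : R, x ∣ z - algebraMap R _ n := by
  obtain ⟨u, v, huv⟩ := hx.coprime_iff_not_dvd.mpr (not_dvd_im_of_prime_norm hx)
  rw [norm_def] at huv
  -- Modulo `x`, multiplying `x.re + x.im * ω ≡ 0` by `v` gives `ω ≡ -v * x.re`.
  refine ⟨z.re - z.im * v * x.re,
    algebraMap R _ (z.im * v) + algebraMap R _ (u * z.im) * star x * ω, ?_⟩
  ext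
  · simp only [map_sub, map_mul, re_sub, algebraMap_re, re_mul, algebraMap_im, mul_zero, add_zero,
      im_mul, zero_mul, sub_sub_cancel, re_add, re_star, im_star, mul_neg, neg_zero, omega_re,
      omega_im, mul_one, zero_add, im_add]
    ring
  · simp only [map_sub, map_mul, im_sub, algebraMap_im, im_mul, re_mul, algebraMap_re, mul_zero,
      add_zero, zero_mul, sub_self, sub_zero, im_add, re_star, im_star, mul_neg, neg_zero,
      omega_im, mul_one, omega_re, zero_add, re_add]
    linear_combination (-z.im) * huv

theorem prime_of_prime_norm {x : QuadraticAlgebra R a b} (hx : Prime x.norm) : Prime x := by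
  have dvd_of_dvd {n : R} (h : x ∣ algebraMap R _ n) : x.norm ∣ n := by
    have := map_dvd QuadraticAlgebra.norm h
    rw [QuadraticAlgebra.norm_algebraMap] at this
    exact hx.dvd_of_dvd_pow this
  have dvd_norm : x ∣ algebraMap R _ x.norm := ⟨star x, algebraMap_norm_eq_mul_star x⟩
  refine ⟨?_, fun h => hx.not_isUnit (h.map QuadraticAlgebra.norm), fun y z hyz => ?_⟩
  · rintro rfl
    exact hx.ne_zero (QuadraticAlgebra.norm_zero)
  obtain ⟨m, hm⟩ := exists_dvd_sub_algebraMap_of_prime_norm hx y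
  obtain ⟨n, hn⟩ := exists_dvd_sub_algebraMap_of_prime_norm hx z
  have hmn : x ∣ algebraMap R _ (m * n) := by
    rw [map_mul, ← dvd_iff_dvd_of_dvd_sub (dvd_mul_sub_mul hm hn)]
    exact hyz
  refine (hx.dvd_or_dvd (dvd_of_dvd hmn)).imp (fun h => ?_) (fun h => ?_)
  · exact (dvd_iff_dvd_of_dvd_sub hm).mpr (dvd_norm.trans (map_dvd _ h))
  · exact (dvd_iff_dvd_of_dvd_sub hn).mpr (dvd_norm.trans (map_dvd _ h))

end QuadraticOrder

/-- The ring `ℤ[ω]` of Eisenstein integers, with `ω ^ 2 = -1 - ω`. -/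
abbrev EisensteinInt := QuadraticAlgebra ℤ (-1) (-1)

namespace EisensteinInt

lemma norm_eq (x : EisensteinInt) : x.norm = x.re ^ 2 - x.re * x.im + x.im ^ 2 := by
  rw [norm_def]; ring

lemma intCast_norm (x : EisensteinInt) : (x.norm : EisensteinInt) = x * star x := by
  simpa using algebraMap_norm_eq_mul_star x

lemma intCast_dvd_iff {n : ℤ} {x : EisensteinInt} :
    (n : EisensteinInt) ∣ x ↔ n ∣ x.re ∧ n ∣ x.im := by
  simpa using algebraMap_dvd_iff (r := n) (z := x)

lemma norm_nonneg (x : EisensteinInt) : 0 ≤ x.norm := by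
  rw [norm_eq]; nlinarith [sq_nonneg (2 * x.re - x.im), sq_nonneg x.im]

lemma norm_eq_zero_iff {x : EisensteinInt} : x.norm = 0 ↔ x = 0 := by
  refine ⟨fun h => ?_, fun h => h ▸ QuadraticAlgebra.norm_zero⟩
  have hsq : (2 * x.re - x.im) ^ 2 + 3 * x.im ^ 2 = 0 := by
    rw [norm_eq] at h; linear_combination 4 * h
  have him : x.im = 0 := by nlinarith [sq_nonneg (2 * x.re - x.im), sq_nonneg x.im]
  have hre : x.re = 0 := by rw [him] at hsq; nlinarith
  ext <;> assumption

instance : NoZeroDivisors EisensteinInt where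
  eq_zero_or_eq_zero_of_mul_eq_zero {x y} h := by
    rw [← norm_eq_zero_iff, ← norm_eq_zero_iff, ← mul_eq_zero, ← map_mul, h,
      QuadraticAlgebra.norm_zero]

instance : IsDomain EisensteinInt := NoZeroDivisors.to_isDomain _

lemma omega_sq_add_omega_add_one : (ω : EisensteinInt) ^ 2 + ω + 1 = 0 := by
  rw [pow_two]; ext <;> simp

lemma omega_isPrimitiveRoot : IsPrimitiveRoot (ω : EisensteinInt) 3 := by
  refine IsPrimitiveRoot.iff_orderOf.mpr (orderOf_eq_prime ?_ fun h => ?_)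
  · linear_combination (ω - 1) * omega_sq_add_omega_add_one
  · simpa using congrArg im h

lemma mul_star_of_pow_three_eq_one {x : EisensteinInt} (hx : x ^ 3 = 1) : x * star x = 1 := by
  have hnorm : x.norm = 1 :=
    (pow_eq_one_iff_of_nonneg x.norm_nonneg three_ne_zero).mp (by rw [← map_pow, hx, map_one])
  rw [← intCast_norm, hnorm, Int.cast_one]

lemma eq_one_of_natCast_dvd_sub_one {x : EisensteinInt} (hx : x ^ 3 = 1) {q : ℕ} (hq : q.Prime)
    (hq3 : q ≠ 3) (h : (q : EisensteinInt) ∣ x - 1) : x = 1 := by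
  have hfactor : (x - 1) * (x ^ 2 + x + 1) = 0 := by linear_combination hx
  refine (mul_eq_zero.mp hfactor).elim sub_eq_zero.mp fun hroot => ?_
  have h3 : ((q : ℤ) : EisensteinInt) ∣ (3 : ℤ) := by
    have : ((3 : ℤ) : EisensteinInt) = -((x - 1) * (x + 2)) := by
      push_cast; linear_combination hroot
    rw [this, Int.cast_natCast]
    exact (h.mul_right _).neg_right
  rw [intCast_dvd_iff, re_intCast] at h3
  have h3 : q ∣ 3 := Int.natCast_dvd_natCast.mp h3.1
  exact absurd ((Nat.prime_dvd_prime_iff_eq hq Nat.prime_three).mp h3) hq3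

section RingHom

variable {k : Type*} [Field k] (φ : EisensteinInt →+* k)

lemma map_eq (x : EisensteinInt) : φ x = x.re + x.im * φ ω := by
  have : x = (x.re : EisensteinInt) + (x.im : EisensteinInt) * ω := by ext <;> simp
  conv_lhs => rw [this]
  simp

lemma map_omega : φ ω ^ 2 + φ ω + 1 = 0 := by
  simpa using congrArg φ omega_sq_add_omega_add_one

lemma map_omega_pow_three : φ ω ^ 3 = 1 := by
  rw [← map_pow, omega_isPrimitiveRoot.pow_eq_one, map_one]

lemma map_star (x : EisensteinInt) : φ (star x) = x.re - x.im - x.im * φ ω := by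
  rw [map_eq]
  simp only [re_star, neg_mul, one_mul, Int.cast_add, Int.cast_neg, im_star]
  ring

lemma map_mul_map_star (x : EisensteinInt) : φ x * φ (star x) = x.norm := by
  rw [← map_mul, ← intCast_norm, map_intCast]

lemma map_injective [CharZero k] : Function.Injective φ := by
  refine (injective_iff_map_eq_zero φ).mpr fun x hx => norm_eq_zero_iff.mp ?_
  have := map_mul_map_star φ x
  rw [hx, zero_mul] at this
  exact_mod_cast this.symm

lemma nonempty_ringHom (k : Type*) [Field k] [IsAlgClosed k] : Nonempty (EisensteinInt →+* k) := by
  obtain ⟨z, hz⟩ := IsAlgClosed.exists_root (.X ^ 2 + .X + 1 : Polynomial k) <| by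
    rw [show (.X ^ 2 + .X + 1 : Polynomial k).degree = 2 by compute_degree!]; norm_num
  have hz : z ^ 2 + z + 1 = 0 := by simpa using hz
  have hlift : z * z = (-1 : ℤ) • 1 + (-1 : ℤ) • z := by
    rw [neg_one_smul, neg_one_smul]
    linear_combination hz
  exact ⟨(lift (R := ℤ) ⟨z, hlift⟩ : EisensteinInt →ₐ[ℤ] k).toRingHom⟩

variable {q : ℕ} [Fact q.Prime] [CharP k q]

lemma map_pow_char (x : EisensteinInt) : φ x ^ q = x.re + x.im * φ ω ^ q := by
  rw [map_eq, add_pow_char, mul_pow, ← frobenius_def, ← frobenius_def, map_intCast, map_intCast]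

lemma map_pow_char_of_mod_three_eq_one (hq : q % 3 = 1) (x : EisensteinInt) : φ x ^ q = φ x := by
  rw [map_pow_char, map_eq φ x, pow_eq_pow_mod q (map_omega_pow_three φ), hq, pow_one]

lemma map_pow_char_of_mod_three_eq_two (hq : q % 3 = 2) (x : EisensteinInt) :
    φ x ^ q = φ (star x) := by
  rw [map_pow_char, map_star, pow_eq_pow_mod q (map_omega_pow_three φ), hq]
  linear_combination (x.im : k) * map_omega φ

lemma natCast_dvd_of_map_eq_zero (hq3 : q ≠ 3) {x : EisensteinInt} (hx : φ x = 0)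
    (hx' : φ (star x) = 0) : (q : EisensteinInt) ∣ x := by
  have h3 : (3 : k) ≠ 0 := by
    rw [← Nat.cast_ofNat, Ne, CharP.cast_eq_zero_iff k q,
      Nat.prime_dvd_prime_iff_eq Fact.out Nat.prime_three]
    exact hq3
  rw [map_eq] at hx
  rw [map_star] at hx'
  have him : (x.im : k) = 0 := by
    have : 3 * (x.im : k) = 0 := by
      linear_combination (-1 - 2 * φ ω) * (hx - hx') + 4 * x.im * map_omega φ
    exact (mul_eq_zero.mp this).resolve_left h3
  have hre : (x.re : k) = 0 := by simpa [him] using hx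
  rw [CharP.intCast_eq_zero_iff k q] at him hre
  exact_mod_cast intCast_dvd_iff.mpr ⟨hre, him⟩

end RingHom

lemma natCast_dvd_of_forall_map_eq_zero (k : Type*) [Field k] [IsAlgClosed k] {q : ℕ}
    [Fact q.Prime] [CharP k q] (hq3 : q ≠ 3) {x : EisensteinInt}
    (h : ∀ φ : EisensteinInt →+* k, φ x = 0) : (q : EisensteinInt) ∣ x := by
  obtain ⟨φ⟩ := nonempty_ringHom k
  exact natCast_dvd_of_map_eq_zero φ hq3 (h φ) (h (φ.comp (starRingEnd EisensteinInt)))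

lemma eq_one_of_map_eq_one {k : Type*} [Field k] (φ : EisensteinInt →+* k) {q : ℕ}
    [Fact q.Prime] [CharP k q] (hq3 : q ≠ 3) {x : EisensteinInt} (hx : x ^ 3 = 1)
    (h : φ x = 1) : x = 1 := by
  refine eq_one_of_natCast_dvd_sub_one hx Fact.out hq3 (natCast_dvd_of_map_eq_zero φ hq3 ?_ ?_)
  · rw [map_sub, h, map_one, sub_self]
  · have := congrArg φ (mul_star_of_pow_three_eq_one hx)
    rw [map_mul, h, one_mul, map_one] at this
    rw [star_sub, star_one, map_sub, this, map_one, sub_self]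

lemma natCast_dvd_of_dvd_norm {p : ℕ} (hp : p.Prime) (hp3 : p % 3 = 2) {x : EisensteinInt}
    (h : (p : ℤ) ∣ x.norm) : (p : EisensteinInt) ∣ x := by
  have : Fact p.Prime := ⟨hp⟩
  refine natCast_dvd_of_forall_map_eq_zero (AlgebraicClosure (ZMod p)) (by omega) fun φ => ?_
  have hnorm : φ x ^ (p + 1) = 0 := by
    rw [pow_succ', map_pow_char_of_mod_three_eq_two φ hp3, map_mul_map_star,
      CharP.intCast_eq_zero_iff _ p]
    exact h
  exact (pow_eq_zero_iff p.succ_ne_zero).mp hnorm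

end EisensteinInt

lemma mod_three_eq_one_or_two {q : ℕ} (hq : q.Prime) (hq3 : q ≠ 3) : q % 3 = 1 ∨ q % 3 = 2 := by
  have : ¬ 3 ∣ q := fun h => hq3 ((Nat.prime_dvd_prime_iff_eq Nat.prime_three hq).mp h).symm
  omega

section CubicCharacter

variable {F k : Type*} [Field F] [Fintype F] [Field k] {X : MulChar F k} {ψ : AddChar F k}

lemma gaussSum_pow_three (hX : X ^ 3 = 1) (hX1 : X ≠ 1) (hψ : ψ.IsPrimitive) :
    gaussSum X ψ ^ 3 = Fintype.card F * jacobiSum X X := by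
  have hord : orderOf X = 3 := orderOf_eq_prime hX hX1
  have := gaussSum_pow_eq_prod_jacobiSum (χ := X) (by omega) hψ
  rw [hord, MulChar.val_neg_one_eq_one_of_odd_order (by decide) hX, one_mul] at this
  simpa using this

lemma gaussSum_mul_gaussSum_sq (hX : X ^ 3 = 1) (hX1 : X ≠ 1) (hψ : ψ.IsPrimitive) :
    gaussSum X ψ * gaussSum (X ^ 2) ψ = Fintype.card F := by
  have := gaussSum_mul_gaussSum_pow_orderOf_sub_one hX1 hψ
  rwa [orderOf_eq_prime hX hX1, MulChar.val_neg_one_eq_one_of_odd_order (by decide) hX,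
    one_mul] at this

variable {q : ℕ} [Fact q.Prime] [CharP k q]

lemma gaussSum_pow_char (hq : (q : F) ≠ 0) :
    gaussSum X ψ ^ q * X q ^ q = gaussSum (X ^ q) ψ := by
  rw [gaussSum_frob, AddChar.pow_mulShift, ← gaussSum_mulShift (X ^ q) ψ (Units.mk0 _ hq),
    Units.val_mk0, MulChar.pow_apply' _ (NeZero.ne q), mul_comm]

lemma gaussSum_sq_pow (hX : X ^ 3 = 1) (hX1 : X ≠ 1) (hψ : ψ.IsPrimitive)
    (hcard : (Fintype.card F : k) ≠ 0) (hq : (q : F) ≠ 0) (hq3 : q ≠ 3) :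
    gaussSum (X ^ 2) ψ ^ (3 * ((q + 1) / 3)) =
      gaussSum X ψ ^ (3 * ((q + 1) / 3)) * X q ^ (2 * q) := by
  have hc : X q ^ 3 = 1 := by
    rw [← MulChar.pow_apply' _ three_ne_zero, hX, MulChar.one_apply hq.isUnit]
  have hgg := gaussSum_mul_gaussSum_sq hX hX1 hψ
  have hg : gaussSum X ψ ≠ 0 := left_ne_zero_of_mul (hgg ▸ hcard)
  have hg2 : gaussSum (X ^ 2) ψ ≠ 0 := right_ne_zero_of_mul (hgg ▸ hcard)
  have hfrob := gaussSum_pow_char (X := X) (ψ := ψ) hq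
  have hfrob2 := gaussSum_pow_char (X := X ^ 2) (ψ := ψ) hq
  rw [pow_eq_pow_mod q hc, pow_eq_pow_mod q hX] at hfrob
  rw [MulChar.pow_apply' _ two_ne_zero, ← pow_mul, ← pow_mul, pow_eq_pow_mod (2 * q) hc,
    pow_eq_pow_mod (2 * q) hX] at hfrob2
  rw [pow_eq_pow_mod (2 * q) hc]
  rcases mod_three_eq_one_or_two Fact.out hq3 with h | h
  · have hM : q = 3 * ((q + 1) / 3) + 1 := by omega
    rw [h, pow_one, pow_one] at hfrob
    rw [show 2 * q % 3 = 2 by omega] at hfrob2 ⊢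
    have hgM : gaussSum X ψ ^ (3 * ((q + 1) / 3)) * X q = 1 := by
      apply mul_right_cancel₀ hg
      rw [one_mul, mul_right_comm, ← pow_succ, ← hM, hfrob]
    have hg2M : gaussSum (X ^ 2) ψ ^ (3 * ((q + 1) / 3)) * X q ^ 2 = 1 := by
      apply mul_right_cancel₀ hg2
      rw [one_mul, mul_right_comm, ← pow_succ, ← hM, hfrob2]
    linear_combination X q * hg2M - X q * hgM
      - gaussSum (X ^ 2) ψ ^ (3 * ((q + 1) / 3)) * hc
  · have hM : 3 * ((q + 1) / 3) = q + 1 := by omega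
    rw [h] at hfrob
    rw [show 2 * q % 3 = 1 by omega, pow_one] at hfrob2 ⊢
    rw [pow_one] at hfrob2
    generalize gaussSum (X ^ 2) ψ = g at *
    rw [hM, pow_succ, pow_succ]
    linear_combination gaussSum X ψ ^ q * X q * hfrob2 - g ^ q * hfrob

theorem jacobiSum_sq_pow (hX : X ^ 3 = 1) (hX1 : X ≠ 1) (hψ : ψ.IsPrimitive)
    (hcard : (Fintype.card F : k) ≠ 0) (hq : (q : F) ≠ 0) (hq3 : q ≠ 3) :
    jacobiSum (X ^ 2) (X ^ 2) ^ ((q + 1) / 3) =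
      jacobiSum X X ^ ((q + 1) / 3) * X q ^ (2 * q) := by
  have hX2 : (X ^ 2) ^ 3 = 1 := by rw [← pow_mul, mul_comm, pow_mul, hX, one_pow]
  have hX21 : X ^ 2 ≠ 1 := fun h => hX1 (by rw [← hX, pow_succ, h, one_mul])
  apply mul_left_cancel₀ (pow_ne_zero ((q + 1) / 3) hcard)
  rw [← mul_assoc, ← mul_pow, ← mul_pow, ← gaussSum_pow_three hX hX1 hψ,
    ← gaussSum_pow_three hX2 hX21 hψ, ← pow_mul, ← pow_mul]
  exact gaussSum_sq_pow hX hX1 hψ hcard hq hq3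

end CubicCharacter

namespace EisensteinInt

section MulChar

variable {F : Type*} [Field F] {χ : MulChar F EisensteinInt}

lemma ringHomComp_star (hχ : χ ^ 3 = 1) :
    χ.ringHomComp (starRingEnd EisensteinInt) = χ⁻¹ := by
  rw [eq_inv_iff_mul_eq_one]
  refine MulChar.ext fun a => ?_
  have ha : χ a ^ 3 = 1 := by rw [← MulChar.pow_apply_coe, hχ, MulChar.one_apply_coe]
  rw [MulChar.mul_apply, MulChar.ringHomComp_apply, MulChar.one_apply_coe, starRingEnd_apply,
    mul_comm, mul_star_of_pow_three_eq_one ha]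

variable [Fintype F]

lemma three_dvd_im_jacobiSum (hχ : χ ^ 3 = 1) (hcard : 3 ∣ Fintype.card F - 1) :
    3 ∣ (jacobiSum χ χ).im := by
  obtain ⟨z, -, hz⟩ := exists_jacobiSum_eq_neg_one_add (by decide) hχ hχ hcard
    omega_isPrimitiveRoot
  have homega : (ω - 1 : EisensteinInt) ^ 2 = ((-3 : ℤ) : EisensteinInt) * ω := by
    push_cast; linear_combination omega_sq_add_omega_add_one
  refine ⟨-(z * ω).im, ?_⟩
  rw [hz, homega, mul_left_comm, im_add, im_neg, im_one, im_mul, re_intCast, im_intCast]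
  ring

lemma norm_jacobiSum (hχ : χ ^ 3 = 1) (hχ1 : χ ≠ 1) :
    (jacobiSum χ χ).norm = Fintype.card F := by
  obtain ⟨φ⟩ := nonempty_ringHom (AlgebraicClosure ℚ)
  have hφ := MulChar.ringHomComp_ne_one_iff (χ := χ) (map_injective φ)
  have hχ2 : χ * χ ≠ 1 := fun h => hχ1 (by rw [← hχ, pow_succ, pow_two, h, one_mul])
  have key := jacobiSum_mul_jacobiSum_inv (χ := χ.ringHomComp φ) (φ := χ.ringHomComp φ)
    (by rw [ringChar.eq_zero]; exact (CharP.ringChar_ne_zero_of_finite F).symm)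
    (hφ.mpr hχ1) (hφ.mpr hχ1)
    (by rwa [← MulChar.ringHomComp_mul, MulChar.ringHomComp_ne_one_iff (map_injective φ)])
  rw [MulChar.ringHomComp_inv, ← ringHomComp_star hχ, jacobiSum_ringHomComp,
    jacobiSum_ringHomComp, jacobiSum_ringHomComp, starRingEnd_apply, map_mul_map_star] at key
  exact_mod_cast key

lemma map_star_jacobiSum_pow (hχ : χ ^ 3 = 1) (hχ1 : χ ≠ 1) {k : Type*} [Field k] {q : ℕ}
    [Fact q.Prime] [CharP k q] (φ : EisensteinInt →+* k) {ψ : AddChar F k} (hψ : ψ.IsPrimitive)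
    (hcard : (Fintype.card F : k) ≠ 0) (hq : (q : F) ≠ 0) (hq3 : q ≠ 3) :
    φ (star (jacobiSum χ χ)) ^ ((q + 1) / 3) =
      φ (jacobiSum χ χ) ^ ((q + 1) / 3) * φ (χ q) ^ (2 * q) := by
  have hX : χ.ringHomComp φ ^ 3 = 1 := by
    rw [MulChar.ringHomComp_pow, hχ, MulChar.ringHomComp_one]
  have hX1 : χ.ringHomComp φ ≠ 1 := by
    refine fun h => hχ1 (MulChar.ext fun a => ?_)
    rw [MulChar.one_apply_coe]
    refine eq_one_of_map_eq_one φ hq3 ?_ ?_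
    · rw [← MulChar.pow_apply_coe, hχ, MulChar.one_apply_coe]
    · rw [← MulChar.ringHomComp_apply, h, MulChar.one_apply_coe]
  have hstar : φ (star (jacobiSum χ χ)) =
      jacobiSum (χ.ringHomComp φ ^ 2) (χ.ringHomComp φ ^ 2) := by
    have hinv : χ ^ 2 = χ⁻¹ := by rw [eq_inv_iff_mul_eq_one, ← pow_succ, hχ]
    rw [MulChar.ringHomComp_pow, hinv, ← ringHomComp_star hχ, jacobiSum_ringHomComp,
      jacobiSum_ringHomComp, starRingEnd_apply]
  rw [hstar, ← jacobiSum_ringHomComp, ← MulChar.ringHomComp_apply]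
  exact jacobiSum_sq_pow hX hX1 hψ hcard hq hq3

end MulChar

lemma exists_cubic_mulChar {p : ℕ} [Fact p.Prime] (hp : p % 3 = 1) :
    ∃ χ : MulChar (ZMod p) EisensteinInt, χ ^ 3 = 1 ∧ χ ≠ 1 := by
  obtain ⟨χ, hχ⟩ := MulChar.exists_mulChar_orderOf (ZMod p) (by rw [ZMod.card]; omega)
    omega_isPrimitiveRoot
  exact ⟨χ, hχ ▸ pow_orderOf_eq_one χ, by rintro rfl; simp at hχ⟩

/-- `F` is a cubic residue symbol `n ↦ (n / A)₃` with lower argument `A`. Cubic reciprocity is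
stated rationally, as a congruence modulo `q` between `A` and its conjugate: raising `A` to the
power `(q + 1) / 3` plays the role of Euler's criterion in both residue classes of `q` modulo `3`,
and `F q ^ (2 * q)` is `F q ^ 2` if `q ≡ 1` and `F q` if `q ≡ 2`. -/
structure IsCubicSymbol (A : EisensteinInt) (F : ℤ →* EisensteinInt) : Prop where
  map_eq_of_modEq {m n : ℤ} : m ≡ n [ZMOD A.norm] → F m = F n
  pow_three_eq_one {n : ℤ} : IsCoprime n A.norm → F n ^ 3 = 1
  reciprocity {q : ℕ} : q.Prime → q ≠ 3 → ¬ (q : ℤ) ∣ A.norm →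
    (q : EisensteinInt) ∣ star A ^ ((q + 1) / 3) - A ^ ((q + 1) / 3) * F q ^ (2 * q)

namespace IsCubicSymbol

variable {A B : EisensteinInt} {F G : ℤ →* EisensteinInt}

lemma intCast (n : ℤ) : IsCubicSymbol n 1 where
  map_eq_of_modEq _ := rfl
  pow_three_eq_one _ := one_pow 3
  reciprocity _ _ _ := by simp

lemma mul (hF : IsCubicSymbol A F) (hG : IsCubicSymbol B G) : IsCubicSymbol (A * B) (F * G) where
  map_eq_of_modEq h := by
    rw [map_mul] at h
    rw [MonoidHom.mul_apply, MonoidHom.mul_apply, hF.map_eq_of_modEq (h.of_mul_right _),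
      hG.map_eq_of_modEq (h.of_mul_left _)]
  pow_three_eq_one h := by
    rw [map_mul] at h
    rw [MonoidHom.mul_apply, mul_pow, hF.pow_three_eq_one h.of_mul_right_left,
      hG.pow_three_eq_one h.of_mul_right_right, one_mul]
  reciprocity {q} hq hq3 hN := by
    rw [map_mul] at hN
    have key := dvd_mul_sub_mul (hF.reciprocity hq hq3 fun h => hN (h.mul_right _))
      (hG.reciprocity hq hq3 fun h => hN (h.mul_left _))
    rw [star_mul', mul_pow, mul_pow, MonoidHom.mul_apply, mul_pow, mul_mul_mul_comm]
    exact key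

lemma star (hF : IsCubicSymbol A F) : IsCubicSymbol (star A) (F ^ 2) where
  map_eq_of_modEq h := by
    rw [QuadraticAlgebra.norm_star] at h
    rw [MonoidHom.pow_apply, MonoidHom.pow_apply, hF.map_eq_of_modEq h]
  pow_three_eq_one h := by
    rw [QuadraticAlgebra.norm_star] at h
    rw [MonoidHom.pow_apply, pow_right_comm, hF.pow_three_eq_one h, one_pow]
  reciprocity {q} hq hq3 hN := by
    rw [QuadraticAlgebra.norm_star] at hN
    have hFq : F q ^ 3 = 1 := hF.pow_three_eq_one
      ((Nat.prime_iff_prime_int.mp hq).coprime_iff_not_dvd.mpr hN)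
    have hpow : F q ^ (2 * q) * (F q ^ 2) ^ (2 * q) = 1 := by
      rw [← mul_pow, ← pow_succ', hFq, one_pow]
    have key := ((hF.reciprocity hq hq3 hN).mul_right ((F q ^ 2) ^ (2 * q))).neg_right
    rw [sub_mul, mul_assoc, hpow, mul_one, neg_sub] at key
    rwa [star_star, MonoidHom.pow_apply]

lemma jacobiSum {p : ℕ} [Fact p.Prime] {χ : MulChar (ZMod p) EisensteinInt} (hχ : χ ^ 3 = 1)
    (hχ1 : χ ≠ 1) :
    IsCubicSymbol (jacobiSum χ χ) (χ.toMonoidHom.comp (Int.castRingHom (ZMod p))) := by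
  have hnorm : (_root_.jacobiSum χ χ).norm = p := by rw [norm_jacobiSum hχ hχ1, ZMod.card]
  have hcoprime {n : ℤ} (hn : IsCoprime n p) : (n : ZMod p) ≠ 0 := by
    rw [Ne, ZMod.intCast_zmod_eq_zero_iff_dvd]
    exact (Nat.prime_iff_prime_int.mp Fact.out).coprime_iff_not_dvd.mp hn.symm
  constructor
  · intro m n h
    rw [hnorm] at h
    simp [(ZMod.intCast_eq_intCast_iff m n p).mpr h]
  · intro n hn
    change χ (n : ZMod p) ^ 3 = 1
    rw [← MulChar.pow_apply' _ three_ne_zero, hχ, MulChar.one_apply (hcoprime (hnorm ▸ hn)).isUnit]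
  · intro q hq hq3 hN
    have : Fact q.Prime := ⟨hq⟩
    rw [hnorm] at hN
    have hpq : p ≠ q := by rintro rfl; exact hN dvd_rfl
    refine natCast_dvd_of_forall_map_eq_zero (AlgebraicClosure (ZMod q)) hq3 fun φ => ?_
    have hcard : (Fintype.card (ZMod p) : AlgebraicClosure (ZMod q)) ≠ 0 := by
      rw [ZMod.card, Ne, CharP.cast_eq_zero_iff _ q]; exact_mod_cast hN
    have : NeZero (p : AlgebraicClosure (ZMod q)) := ⟨ZMod.card p ▸ hcard⟩
    obtain ⟨ζ, hζ⟩ := HasEnoughRootsOfUnity.exists_primitiveRoot (AlgebraicClosure (ZMod q)) p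
    have hqp : (q : ZMod p) ≠ 0 := by
      rw [Ne, ZMod.natCast_eq_zero_iff, Nat.prime_dvd_prime_iff_eq Fact.out hq]
      exact hpq
    have key := map_star_jacobiSum_pow hχ hχ1 φ
      (AddChar.zmodChar_primitive_of_primitive_root p hζ) hcard hqp hq3
    simpa [sub_eq_zero] using key

end IsCubicSymbol

section Values

variable {A : EisensteinInt} {F : ℤ →* EisensteinInt}

lemma natCast_dvd_of_dvd_mul {q : ℕ} (hq : q.Prime) {x y : EisensteinInt}
    (hx : ¬ (q : ℤ) ∣ x.norm) (h : (q : EisensteinInt) ∣ x * y) : (q : EisensteinInt) ∣ y := by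
  have hq := Nat.prime_iff_prime_int.mp hq
  have hxy : ((q : ℤ) : EisensteinInt) ∣ x.norm * y := by
    rw [intCast_norm, mul_right_comm]
    exact_mod_cast h.mul_right _
  rw [intCast_dvd_iff] at hxy
  simp only [re_mul, im_mul, re_intCast, im_intCast, zero_mul, mul_zero, add_zero] at hxy
  exact_mod_cast intCast_dvd_iff.mpr
    ⟨(hq.dvd_or_dvd hxy.1).resolve_left hx, (hq.dvd_or_dvd hxy.2).resolve_left hx⟩

lemma IsCubicSymbol.map_neg_one (hF : IsCubicSymbol A F) : F (-1) = 1 := by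
  have h3 : F (-1) ^ 3 = 1 := hF.pow_three_eq_one isCoprime_one_left.neg_left
  have h2 : F (-1) ^ 2 = 1 := by rw [← map_pow, neg_one_sq, map_one]
  rwa [pow_succ, h2, one_mul] at h3

lemma natCast_dvd_star_pow_sub_pow {q : ℕ} (hq : q.Prime) (hq3 : q ≠ 3)
    (h : (q : ℤ) ∣ A.im ∨ (q : ℤ) ∣ trace A) :
    (q : EisensteinInt) ∣ star A ^ ((q + 1) / 3) - A ^ ((q + 1) / 3) := by
  by_cases him : (q : ℤ) ∣ A.im
  · have hstar : ((q : ℤ) : EisensteinInt) ∣ star A - A := by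
      rw [intCast_dvd_iff]
      simpa using ⟨him, dvd_sub him.neg_right him⟩
    exact (Int.cast_natCast (R := EisensteinInt) q ▸ hstar).trans (sub_dvd_pow_sub_pow _ _ _)
  · have htrace := h.resolve_left him
    have hq2 : q ≠ 2 := by
      rintro rfl
      rw [trace_def] at htrace
      push_cast at htrace him
      omega
    have heven : Even ((q + 1) / 3) := by
      have := hq.eq_two_or_odd
      have := mod_three_eq_one_or_two hq hq3
      rw [Nat.even_iff]
      omega
    have hstar : ((q : ℤ) : EisensteinInt) ∣ star A - -A := by
      rw [sub_neg_eq_add, add_comm, ← algebraMap_trace_eq_add_star]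
      simpa using Int.cast_dvd_cast (α := EisensteinInt) _ _ htrace
    rw [← heven.neg_pow A]
    exact (Int.cast_natCast (R := EisensteinInt) q ▸ hstar).trans (sub_dvd_pow_sub_pow _ _ _)

theorem IsCubicSymbol.map_eq_one_iff (hF : IsCubicSymbol A F) {q : ℕ} (hq : q.Prime) (hq3 : q ≠ 3)
    (hqA : ¬ (q : ℤ) ∣ A.norm) :
    F q = 1 ↔ (q : EisensteinInt) ∣ Star.star A ^ ((q + 1) / 3) - A ^ ((q + 1) / 3) := by
  have hrec := hF.reciprocity hq hq3 hqA
  refine ⟨fun h => by simpa [h] using hrec, fun h => ?_⟩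
  have hF3 : F q ^ 3 = 1 :=
    hF.pow_three_eq_one ((Nat.prime_iff_prime_int.mp hq).coprime_iff_not_dvd.mpr hqA)
  have hF2q : F q ^ (2 * q) = 1 := by
    refine eq_one_of_natCast_dvd_sub_one (by rw [pow_right_comm, hF3, one_pow]) hq hq3 ?_
    refine natCast_dvd_of_dvd_mul (x := A ^ ((q + 1) / 3)) hq ?_ ?_
    · rw [map_pow]
      exact fun h => hqA ((Nat.prime_iff_prime_int.mp hq).dvd_of_dvd_pow h)
    · rw [mul_sub_one, ← sub_sub_sub_cancel_left]
      exact dvd_sub h hrec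
  have hgcd : Nat.gcd 3 (2 * q) = 1 := by
    have := mod_three_eq_one_or_two hq hq3
    exact (Nat.Prime.coprime_iff_not_dvd Nat.prime_three).mpr (by omega)
  simpa [hgcd] using pow_gcd_eq_one.mpr ⟨hF3, hF2q⟩

lemma IsCubicSymbol.map_prime_eq_one (hF : IsCubicSymbol A F) {q : ℕ} (hq : q.Prime)
    (hq3 : q ≠ 3) (hqA : ¬ (q : ℤ) ∣ A.norm) (h : (q : ℤ) ∣ A.im ∨ (q : ℤ) ∣ trace A) :
    F q = 1 :=
  (hF.map_eq_one_iff hq hq3 hqA).mpr (natCast_dvd_star_pow_sub_pow hq hq3 h)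

lemma IsCubicSymbol.map_eq_one_of_dvd_trace (hF : IsCubicSymbol A F) {n : ℤ}
    (hn : n ∣ trace A) (hcop : IsCoprime n A.norm) (hn3 : ¬ 3 ∣ n) : F n = 1 := by
  have natCast_eq_one (m : ℕ) : (m : ℤ) ∣ n → F m = 1 := by
    induction m using induction_on_primes with
    | zero => exact fun h => absurd (zero_dvd_iff.mp h ▸ dvd_zero 3) hn3
    | one => simp
    | prime_mul q m hq ih =>
      intro h
      rw [Nat.cast_mul] at h ⊢
      have hqn := dvd_of_mul_right_dvd h
      rw [map_mul, ih (dvd_of_mul_left_dvd h), mul_one]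
      refine hF.map_prime_eq_one hq ?_ ?_ (.inr (hqn.trans hn))
      · rintro rfl
        exact hn3 hqn
      · rw [← (Nat.prime_iff_prime_int.mp hq).coprime_iff_not_dvd]
        exact hcop.of_isCoprime_of_dvd_left hqn
  have habs := natCast_eq_one n.natAbs (Int.natAbs_dvd.mpr dvd_rfl)
  rcases n.natAbs_eq with h | h
  · rwa [h]
  · rw [h, ← neg_one_mul (n.natAbs : ℤ), map_mul, hF.map_neg_one, one_mul, habs]

lemma IsCubicSymbol.map_two_ne_one (hF : IsCubicSymbol A F) (hA : Odd A.norm)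
    (him : Odd A.im) : F 2 ≠ 1 := by
  intro h
  have hdvd := (hF.map_eq_one_iff Nat.prime_two (by decide) (by
    rw [Nat.cast_ofNat, ← even_iff_two_dvd, Int.not_even_iff_odd]; exact hA)).mp h
  have hdvd : ((2 : ℤ) : EisensteinInt) ∣ Star.star A - A := by simpa using hdvd
  have hre : 2 ∣ A.im := by simpa using (intCast_dvd_iff.mp hdvd).1
  exact Int.not_even_iff_odd.mpr him (even_iff_two_dvd.mpr hre)

end Values

/-- An Eisenstein integer is primary if it is congruent to a rational integer prime to `3` modulo
`3`; this is the classical notion up to sign. -/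
def IsPrimary (A : EisensteinInt) : Prop :=
  3 ∣ A.im ∧ ¬ 3 ∣ A.re

namespace IsPrimary

variable {A B : EisensteinInt}

lemma not_three_dvd_norm (hA : IsPrimary A) : ¬ 3 ∣ A.norm := by
  intro h
  refine hA.2 (Int.prime_three.dvd_of_dvd_pow (n := 2) ?_)
  rw [norm_eq] at h
  have : A.re ^ 2 = (A.re ^ 2 - A.re * A.im + A.im ^ 2) + A.im * (A.re - A.im) := by ring
  exact this ▸ dvd_add h (hA.1.mul_right _)

lemma of_mul (hA : IsPrimary (A * B)) (hAim : 3 ∣ A.im) : IsPrimary B := by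
  have hnorm := hA.not_three_dvd_norm
  rw [map_mul] at hnorm
  have hre : ¬ 3 ∣ A.re := fun h => hnorm (by
    rw [norm_eq A, pow_two, pow_two]
    exact (((h.mul_right _).sub (h.mul_right _)).add (hAim.mul_right _)).mul_right _)
  have him : 3 ∣ A.re * B.im := by
    have : A.re * B.im = (A * B).im - A.im * (B.re - B.im) := by
      rw [im_mul]
      ring
    exact this ▸ dvd_sub hA.1 (hAim.mul_right _)
  have him := (Int.prime_three.dvd_or_dvd him).resolve_left hre
  refine ⟨him, fun h => hnorm ?_⟩
  rw [norm_eq B, pow_two, pow_two]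
  exact (((h.mul_right _).sub (h.mul_right _)).add (him.mul_right _)).mul_left _

lemma eq_intCast_of_norm_eq_one (hA : IsPrimary A) (h : A.norm = 1) : A = A.re := by
  obtain ⟨c, hc⟩ := hA.1
  rw [norm_eq] at h
  have hc0 : c = 0 := by
    by_contra hc0
    have : 0 < c ^ 2 := by positivity
    rw [hc] at h
    nlinarith [sq_nonneg (2 * A.re - 3 * c)]
  ext <;> simp [hc, hc0]

lemma exists_dvd (hA : IsPrimary A) (h : A.norm ≠ 1) :
    ∃ B F, IsCubicSymbol B F ∧ 3 ∣ B.im ∧ 1 < B.norm ∧ B ∣ A := by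
  obtain ⟨p, hp, hpA⟩ := Nat.exists_prime_and_dvd (n := A.norm.natAbs) <| by
    have := A.norm_nonneg; omega
  have hpA : (p : ℤ) ∣ A.norm := Int.natCast_dvd.mpr hpA
  have hp1 : (1 : ℤ) < p := by exact_mod_cast hp.one_lt
  have hp3 : p ≠ 3 := by rintro rfl; exact hA.not_three_dvd_norm hpA
  rcases mod_three_eq_one_or_two hp hp3 with hmod | hmod
  · have : Fact p.Prime := ⟨hp⟩
    obtain ⟨χ, hχ, hχ1⟩ := exists_cubic_mulChar hmod
    have hnorm : (jacobiSum χ χ).norm = p := by rw [norm_jacobiSum hχ hχ1, ZMod.card]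
    have him : 3 ∣ (jacobiSum χ χ).im := three_dvd_im_jacobiSum hχ (by rw [ZMod.card]; omega)
    have hsymbol := IsCubicSymbol.jacobiSum hχ hχ1
    generalize jacobiSum χ χ = J at *
    have hJ : Prime J := prime_of_prime_norm (hnorm ▸ Nat.prime_iff_prime_int.mp hp)
    have hJA : J ∣ A * star A := by
      rw [← intCast_norm]
      refine Dvd.dvd.trans ⟨star J, intCast_norm J⟩ (Int.cast_dvd_cast _ _ (hnorm ▸ hpA))
    rcases hJ.dvd_or_dvd hJA with hdvd | hdvd
    · exact ⟨J, _, hsymbol, him, hnorm ▸ hp1, hdvd⟩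
    · refine ⟨star J, _, hsymbol.star, by simpa using him, ?_, ?_⟩
      · rwa [QuadraticAlgebra.norm_star, hnorm]
      · simpa [starRingEnd_apply] using map_dvd (starRingEnd EisensteinInt) hdvd
  · refine ⟨(p : ℤ), 1, .intCast p, by simp, ?_, ?_⟩
    · rw [QuadraticAlgebra.norm_intCast]
      exact one_lt_pow₀ hp1 two_ne_zero
    · exact_mod_cast natCast_dvd_of_dvd_norm hp hmod hpA

theorem exists_isCubicSymbol (hA : IsPrimary A) : ∃ F, IsCubicSymbol A F := by
  induction hn : A.norm.toNat using Nat.strong_induction_on generalizing A with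
  | _ n ih =>
  by_cases h1 : A.norm = 1
  · exact ⟨1, hA.eq_intCast_of_norm_eq_one h1 ▸ .intCast _⟩
  obtain ⟨B, F, hF, hBim, hB, c, rfl⟩ := hA.exists_dvd h1
  have hc : 0 < c.norm := by
    refine c.norm_nonneg.lt_of_ne' fun h => hA.not_three_dvd_norm ?_
    rw [map_mul, h, mul_zero]
    exact dvd_zero 3
  have hlt : c.norm < (B * c).norm := by rw [map_mul]; exact lt_mul_of_one_lt_left hc hB
  obtain ⟨G, hG⟩ := ih _ (by omega) (hA.of_mul hBim) rfl
  exact ⟨F * G, hF.mul hG⟩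

end IsPrimary

end EisensteinInt

section Recurrence

/-- `C` is the sequence `(C_n)` of the theorem: Narayana's cows sequence, shifted to start with
`0, 0, 1`. -/
structure IsCordonnier (C : ℕ → ℤ) : Prop where
  zero : C 0 = 0
  one : C 1 = 0
  two : C 2 = 1
  add_three (n : ℕ) : C (n + 3) = C (n + 2) + C n

lemma IsCordonnier.pow_add_two {C : ℕ → ℤ} (hC : IsCordonnier C) {R : Type*} [CommRing R] {x : R}
    (hx : x ^ 3 = x ^ 2 + 1) (n : ℕ) :
    x ^ (n + 2) = C (n + 2) * x ^ 2 + C n * x + C (n + 1) := by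
  induction n with
  | zero => simp [hC.zero, hC.one, hC.two]
  | succ n ih =>
    rw [add_right_comm, pow_succ, ih, hC.add_three]
    push_cast
    linear_combination (C (n + 2) : R) * hx

variable {k : Type*} [Field k] {t₀ t₁ t₂ : k}

/-- `t₀, t₁, t₂` are the roots, with multiplicity, of `t ^ 3 - 3 * t - 29`. This is the
characteristic polynomial `x ^ 3 - x ^ 2 - 1` of the recurrence after the substitution
`t = 3 * x - 1`, up to the factor `27`. -/
structure IsRootTriple (t₀ t₁ t₂ : k) : Prop where
  add_add : t₀ + t₁ + t₂ = 0
  mul_add_mul_add_mul : t₀ * t₁ + t₁ * t₂ + t₂ * t₀ = -3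
  mul_mul : t₀ * t₁ * t₂ = 29

lemma exists_isRootTriple (k : Type*) [Field k] [IsAlgClosed k] :
    ∃ t₀ t₁ t₂ : k, IsRootTriple t₀ t₁ t₂ := by
  let P : Cubic k := ⟨1, 0, -3, -29⟩
  obtain ⟨t₀, t₁, t₂, h⟩ := (P.splits_iff_roots_eq_three (φ := RingHom.id k) one_ne_zero).mp
    (IsAlgClosed.splits _)
  have hb := Cubic.b_eq_three_roots one_ne_zero h
  have hc := Cubic.c_eq_three_roots one_ne_zero h
  have hd := Cubic.d_eq_three_roots one_ne_zero h
  simp only [P, RingHom.id_apply, one_mul] at hb hc hd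
  exact ⟨t₀, t₁, t₂, by linear_combination hb, by linear_combination -hc,
    by linear_combination hd⟩

namespace IsRootTriple

lemma rotate (h : IsRootTriple t₀ t₁ t₂) : IsRootTriple t₁ t₂ t₀ where
  add_add := by linear_combination h.add_add
  mul_add_mul_add_mul := by linear_combination h.mul_add_mul_add_mul
  mul_mul := by linear_combination h.mul_mul

lemma pow_three (h : IsRootTriple t₀ t₁ t₂) : t₀ ^ 3 = 3 * t₀ + 29 := by
  linear_combination t₀ ^ 2 * h.add_add - t₀ * h.mul_add_mul_add_mul + h.mul_mul

lemma discr (h : IsRootTriple t₀ t₁ t₂) :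
    ((t₀ - t₁) * (t₁ - t₂) * (t₂ - t₀)) ^ 2 = -31 * 27 ^ 2 := by
  obtain rfl : t₂ = -t₀ - t₁ := by linear_combination h.add_add
  have hc : t₀ ^ 2 + t₀ * t₁ + t₁ ^ 2 = 3 := by linear_combination -h.mul_add_mul_add_mul
  have hd : t₀ * t₁ * (t₀ + t₁) = -29 := by linear_combination -h.mul_mul
  calc _ = 4 * (t₀ ^ 2 + t₀ * t₁ + t₁ ^ 2) ^ 3 - 27 * (t₀ * t₁ * (t₀ + t₁)) ^ 2 := by ring
    _ = -31 * 27 ^ 2 := by rw [hc, hd]; norm_num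

variable {p : ℕ} [Fact p.Prime] [CharP k p]

lemma pow_char_eq_self_of_affine (h : IsRootTriple t₀ t₁ t₂) (h3 : (3 : k) ≠ 0)
    (h29 : (29 : k) ≠ 0) {b c : k} (h₀ : t₀ ^ p = b * t₀ + c) (h₁ : t₁ ^ p = b * t₁ + c)
    (h₂ : t₂ ^ p = b * t₂ + c) : t₀ ^ p = t₀ := by
  have hadd := congrArg (frobenius k p) h.add_add
  have hmul_add := congrArg (frobenius k p) h.mul_add_mul_add_mul
  have hmul := congrArg (frobenius k p) h.mul_mul
  simp only [map_add, map_mul, map_neg, map_zero, map_ofNat, frobenius_def, h₀, h₁, h₂]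
    at hadd hmul_add hmul
  obtain rfl : c = 0 := by
    refine mul_left_cancel₀ h3 ?_
    linear_combination hadd - b * h.add_add
  have hb2 : b ^ 2 = 1 := by
    refine mul_left_cancel₀ h3 ?_
    linear_combination b ^ 2 * h.mul_add_mul_add_mul - hmul_add
  have hb3 : b ^ 3 = 1 := by
    refine mul_left_cancel₀ h29 ?_
    linear_combination hmul - b ^ 3 * h.mul_mul
  rw [h₀]
  linear_combination t₀ * hb3 - b * t₀ * hb2

end IsRootTriple

variable {p : ℕ} [Fact p.Prime] [CharP k p] {C : ℕ → ℤ}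

lemma IsCordonnier.exists_pow_char_eq (hC : IsCordonnier C) (h3 : (3 : k) ≠ 0) :
    ∃ b c : k, ∀ t : k, t ^ 3 = 3 * t + 29 → t ^ p = C p / 3 * t ^ 2 + b * t + c := by
  obtain ⟨n, hn⟩ : ∃ n, p = n + 2 := ⟨p - 2, by have := (Fact.out : p.Prime).two_le; omega⟩
  refine ⟨2 * C p / 3 + C n, C p / 3 + C n + 3 * C (n + 1) - 1, fun t ht => ?_⟩
  have hx : ((1 + t) / 3) ^ 3 = ((1 + t) / 3) ^ 2 + 1 := by
    field_simp
    linear_combination ht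
  have hpow := hC.pow_add_two hx n
  rw [← hn, ← frobenius_def, map_div₀, map_add, map_one, map_ofNat, frobenius_def] at hpow
  field_simp at hpow ⊢
  linear_combination hpow

theorem IsCordonnier.dvd_iff_pow_char_eq_self (hC : IsCordonnier C) (h3 : (3 : k) ≠ 0)
    (h29 : (29 : k) ≠ 0) (h31 : (31 : k) ≠ 0) (h : IsRootTriple t₀ t₁ t₂) :
    (p : ℤ) ∣ C p ↔ t₀ ^ p = t₀ ∧ t₁ ^ p = t₁ ∧ t₂ ^ p = t₂ := by
  obtain ⟨b, c, hbc⟩ := hC.exists_pow_char_eq (k := k) (p := p) h3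
  have hpow₀ := hbc t₀ h.pow_three
  have hpow₁ := hbc t₁ h.rotate.pow_three
  have hpow₂ := hbc t₂ h.rotate.rotate.pow_three
  rw [← CharP.intCast_eq_zero_iff k p]
  constructor
  · intro h0
    simp only [h0, zero_div, zero_mul, zero_add] at hpow₀ hpow₁ hpow₂
    exact ⟨h.pow_char_eq_self_of_affine h3 h29 hpow₀ hpow₁ hpow₂,
      h.rotate.pow_char_eq_self_of_affine h3 h29 hpow₁ hpow₂ hpow₀,
      h.rotate.rotate.pow_char_eq_self_of_affine h3 h29 hpow₂ hpow₀ hpow₁⟩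
  · rintro ⟨hfix₀, hfix₁, hfix₂⟩
    rw [hfix₀] at hpow₀
    rw [hfix₁] at hpow₁
    rw [hfix₂] at hpow₂
    have hdiscr : ((t₀ - t₁) * (t₁ - t₂) * (t₂ - t₀)) ^ 2 ≠ 0 := by
      have h27 : (27 : k) = 3 ^ 3 := by norm_num
      rw [h.discr, h27]
      exact mul_ne_zero (neg_ne_zero.mpr h31) (pow_ne_zero _ (pow_ne_zero _ h3))
    -- A quadratic polynomial vanishing at three distinct points has leading coefficient zero.
    have hlead : (C p / 3 : k) = 0 := by
      refine (mul_eq_zero.mp ?_).resolve_left (ne_zero_pow two_ne_zero hdiscr)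
      linear_combination (t₁ - t₂) * hpow₀ + (t₂ - t₀) * hpow₁ + (t₀ - t₁) * hpow₂
    exact (div_eq_zero_iff.mp hlead).resolve_right h3

lemma exists_dvd_sq_add_self_add_eight (h : IsRootTriple t₀ t₁ t₂) (h2 : (2 : k) ≠ 0)
    (h3 : (3 : k) ≠ 0) (h₀ : t₀ ^ p = t₀) (h₁ : t₁ ^ p = t₁) (h₂ : t₂ ^ p = t₂) :
    ∃ β : ℤ, (p : ℤ) ∣ β ^ 2 + β + 8 := by
  have h27 : (27 : k) ≠ 0 := by
    convert pow_ne_zero 3 h3 using 1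
    norm_num
  obtain ⟨x, hx⟩ : ∃ x : k, x = ((t₀ - t₁) * (t₁ - t₂) * (t₂ - t₀) / 27 - 1) / 2 := ⟨_, rfl⟩
  have hroot : x ^ 2 + x + 8 = 0 := by
    rw [hx]
    field_simp
    linear_combination h.discr
  have hfix : x ^ p = x := by
    rw [hx]
    simp only [← frobenius_def, map_sub, map_mul, map_div₀, map_ofNat, map_one]
    simp only [frobenius_def, h₀, h₁, h₂]
  obtain ⟨β, rfl⟩ :=
    (mem_bot_iff_intCast p k).mp ((Subfield.mem_bot_iff_pow_eq_self k p).mpr hfix)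
  exact ⟨β, (CharP.intCast_eq_zero_iff k p _).mp (by exact_mod_cast hroot)⟩

end Recurrence
section Cardano

variable {k : Type*} [Field k] {w u v : k}

lemma isRootTriple_of_cardano (hw : w ^ 2 + w + 1 = 0) (huv : u * v = 1)
    (hsum : u ^ 3 + v ^ 3 = 29) :
    IsRootTriple (u + v) (u * w + v * w ^ 2) (u * w ^ 2 + v * w) where
  add_add := by linear_combination (u + v) * hw
  mul_add_mul_add_mul := by
    linear_combination
      ((u + v) ^ 2 + (u ^ 2 + v ^ 2) * (w - 1) + u * v * (w ^ 2 - w + 1)) * hw - 3 * huv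
  mul_mul := by
    linear_combination
      (u + v) * ((u ^ 2 + v ^ 2) * (w - 1) + u * v * (w ^ 2 - w + 1)) * hw + hsum

lemma pow_eq_or_pow_eq_of_add_pow_eq_add (huv : u * v = 1) {n : ℕ} (h : u ^ n + v ^ n = u + v) :
    u ^ n = u ∨ u ^ n = v := by
  have huvn : u ^ n * v ^ n = 1 := by rw [← mul_pow, huv, one_pow]
  have hmul : (u ^ n - u) * (u ^ n - v) = 0 := by linear_combination u ^ n * h + huv - huvn
  exact (mul_eq_zero.mp hmul).imp sub_eq_zero.mp sub_eq_zero.mp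

lemma pow_eq_pow_iff_pow_eq_one {p : ℕ} {e f : k} (hef : e * f = 1)
    (he : (p % 3 = 1 ∧ e ^ p = e) ∨ (p % 3 = 2 ∧ e ^ p = f)) :
    f ^ ((p + 1) / 3) = e ^ ((p + 1) / 3) ↔ e ^ ((p + 1) / 3) = 1 := by
  have hmul : e ^ ((p + 1) / 3) * f ^ ((p + 1) / 3) = 1 := by rw [← mul_pow, hef, one_pow]
  have hcube : (e ^ ((p + 1) / 3)) ^ 3 = 1 := by
    rw [← pow_mul]
    rcases he with ⟨hp, he⟩ | ⟨hp, he⟩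
    · refine mul_right_cancel₀ (left_ne_zero_of_mul_eq_one hef) ?_
      rw [← pow_succ, one_mul]
      convert he using 2
      omega
    · rw [mul_comm, ← hef, ← he, ← pow_succ']
      congr 1
      omega
  constructor
  · intro h
    rw [h] at hmul
    rwa [pow_succ, pow_two, hmul, one_mul] at hcube
  · intro h
    rw [h, one_mul] at hmul
    rw [h, hmul]

variable {p : ℕ} [Fact p.Prime] [CharP k p]

lemma pow_char_eq_self_iff_of_mod_three_eq_one (hp : p % 3 = 1) (hw : w ^ 3 = 1)
    (huv : u * v = 1) (hne : u ^ 3 ≠ v ^ 3) (hu : (u ^ 3) ^ p = u ^ 3) :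
    ((u + v) ^ p = u + v ∧ (u * w + v * w ^ 2) ^ p = u * w + v * w ^ 2 ∧
      (u * w ^ 2 + v * w) ^ p = u * w ^ 2 + v * w) ↔ (u ^ 3) ^ ((p + 1) / 3) = 1 := by
  have hpow : u ^ p = (u ^ 3) ^ ((p + 1) / 3) * u := by
    rw [← pow_mul, ← pow_succ]
    congr 1
    omega
  constructor
  · rintro ⟨hfix, -, -⟩
    rw [add_pow_char] at hfix
    rcases pow_eq_or_pow_eq_of_add_pow_eq_add huv hfix with h | h
    · exact mul_right_cancel₀ (left_ne_zero_of_mul_eq_one huv) (by rw [← hpow, h, one_mul])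
    · exact absurd (by rw [← hu, pow_right_comm, h]) hne
  · intro h
    rw [h, one_mul] at hpow
    have hvp : v ^ p = v := by rw [← inv_eq_of_mul_eq_one_right huv, inv_pow, hpow]
    have hwp : w ^ p = w := by
      rw [← Nat.div_add_mod p 3, hp, pow_succ, pow_mul, hw, one_pow, one_mul]
    simp only [add_pow_char, mul_pow, hpow, hvp, pow_right_comm w 2 p, hwp, and_self]

lemma pow_char_eq_self_iff_of_mod_three_eq_two (hp : p % 3 = 2) (hw : w ^ 3 = 1)
    (huv : u * v = 1) (hne : u ^ 3 ≠ v ^ 3) (hu : (u ^ 3) ^ p = v ^ 3) :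
    ((u + v) ^ p = u + v ∧ (u * w + v * w ^ 2) ^ p = u * w + v * w ^ 2 ∧
      (u * w ^ 2 + v * w) ^ p = u * w ^ 2 + v * w) ↔ (u ^ 3) ^ ((p + 1) / 3) = 1 := by
  have hpow : u ^ p * u = (u ^ 3) ^ ((p + 1) / 3) := by
    rw [← pow_mul, ← pow_succ]
    congr 1
    omega
  constructor
  · rintro ⟨hfix, -, -⟩
    rw [add_pow_char] at hfix
    rcases pow_eq_or_pow_eq_of_add_pow_eq_add huv hfix with h | h
    · exact absurd (by rw [← hu, pow_right_comm, h]) hne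
    · rw [← hpow, h, mul_comm, huv]
  · intro h
    rw [h] at hpow
    have hup : u ^ p = v := by
      rw [eq_inv_of_mul_eq_one_left hpow, inv_eq_of_mul_eq_one_right huv]
    have hvp : v ^ p = u := by
      rw [← inv_eq_of_mul_eq_one_right huv, inv_pow, hup, inv_eq_of_mul_eq_one_left huv]
    have hwp : w ^ p = w ^ 2 := by
      rw [← Nat.div_add_mod p 3, hp, pow_add, pow_mul, hw, one_pow, one_mul]
    have hw4 : (w ^ 2) ^ 2 = w := by linear_combination w * hw
    simp only [add_pow_char, mul_pow, hup, hvp, pow_right_comm w 2 p, hwp, hw4]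
    exact ⟨add_comm _ _, add_comm _ _, add_comm _ _⟩

lemma IsCordonnier.dvd_iff_pow_eq_one {C : ℕ → ℤ} (hC : IsCordonnier C) [IsAlgClosed k]
    (h3 : (3 : k) ≠ 0) (h29 : (29 : k) ≠ 0) (h31 : (31 : k) ≠ 0) (hw : w ^ 2 + w + 1 = 0)
    {e f : k} (hef : e * f = 1) (hsum : e + f = 29)
    (he : (p % 3 = 1 ∧ e ^ p = e) ∨ (p % 3 = 2 ∧ e ^ p = f)) :
    (p : ℤ) ∣ C p ↔ e ^ ((p + 1) / 3) = 1 := by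
  obtain ⟨u, rfl⟩ := IsAlgClosed.exists_pow_nat_eq e three_pos
  have huv : u * u⁻¹ = 1 :=
    mul_inv_cancel₀ (ne_zero_pow three_ne_zero (left_ne_zero_of_mul_eq_one hef))
  obtain rfl : u⁻¹ ^ 3 = f := by rw [inv_pow, inv_eq_of_mul_eq_one_right hef]
  have hw3 : w ^ 3 = 1 := by linear_combination (w - 1) * hw
  have hne : u ^ 3 ≠ u⁻¹ ^ 3 := by
    intro h
    refine mul_ne_zero h31 (pow_ne_zero 3 h3) ?_
    rw [← h] at hsum hef
    linear_combination 4 * hef - (2 * u ^ 3 + 29) * hsum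
  rw [hC.dvd_iff_pow_char_eq_self h3 h29 h31 (isRootTriple_of_cardano hw huv hsum)]
  rcases he with ⟨hp, he⟩ | ⟨hp, he⟩
  · exact pow_char_eq_self_iff_of_mod_three_eq_one hp hw3 huv hne he
  · exact pow_char_eq_self_iff_of_mod_three_eq_two hp hw3 huv hne he

end Cardano

section Criterion

open EisensteinInt

variable {C : ℕ → ℤ} {p : ℕ} {A : EisensteinInt}

lemma IsCordonnier.dvd_iff_map_star_pow_eq (hC : IsCordonnier C) [Fact p.Prime] {k : Type*}
    [Field k] [IsAlgClosed k] [CharP k p] (φ : EisensteinInt →+* k) (hpe : ¬ p ∣ 3 * 29 * 31)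
    {s : ℤ} (hs : ¬ (p : ℤ) ∣ s) (hnorm : A.norm ≡ s ^ 2 [ZMOD p])
    (htrace : trace A ≡ 29 * s [ZMOD p]) :
    (p : ℤ) ∣ C p ↔ φ (star A) ^ ((p + 1) / 3) = φ A ^ ((p + 1) / 3) := by
  have ofNat_ne_zero {n : ℕ} (hn : n ∣ 3 * 29 * 31) : (n : k) ≠ 0 := by
    rw [Ne, CharP.cast_eq_zero_iff k p]
    exact fun h => hpe (h.trans hn)
  have hp3 : p ≠ 3 := by rintro rfl; exact hpe (by decide)
  have hs0 : (s : k) ≠ 0 := by rwa [Ne, CharP.intCast_eq_zero_iff k p]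
  have hsp : (s : k) ^ p = s := by rw [← frobenius_def, map_intCast]
  have hef : φ A / s * (φ (star A) / s) = 1 := by
    rw [← CharP.intCast_eq_intCast k p] at hnorm
    rw [div_mul_div_comm, map_mul_map_star, hnorm]
    push_cast
    field_simp
  have hsum : φ A / s + φ (star A) / s = 29 := by
    rw [← CharP.intCast_eq_intCast k p] at htrace
    rw [← add_div, ← map_add, ← algebraMap_trace_eq_add_star, div_eq_iff hs0]
    simpa using htrace
  have hfrob : (p % 3 = 1 ∧ (φ A / s) ^ p = φ A / s) ∨
      (p % 3 = 2 ∧ (φ A / s) ^ p = φ (star A) / s) := by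
    rw [div_pow, hsp]
    refine (mod_three_eq_one_or_two Fact.out hp3).imp (fun h => ⟨h, ?_⟩) (fun h => ⟨h, ?_⟩)
    · rw [map_pow_char_of_mod_three_eq_one φ h]
    · rw [map_pow_char_of_mod_three_eq_two φ h]
  rw [hC.dvd_iff_pow_eq_one (by exact_mod_cast ofNat_ne_zero (n := 3) (by decide))
      (by exact_mod_cast ofNat_ne_zero (n := 29) (by decide))
      (by exact_mod_cast ofNat_ne_zero (n := 31) (by decide)) (map_omega φ) hef hsum hfrob,
    ← pow_eq_pow_iff_pow_eq_one hef hfrob, div_pow, div_pow, div_left_inj' (pow_ne_zero _ hs0)]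

lemma IsCordonnier.dvd_iff_dvd_star_pow_sub_pow (hC : IsCordonnier C) (hp : p.Prime)
    (hpe : ¬ p ∣ 3 * 29 * 31) {s : ℤ} (hs : ¬ (p : ℤ) ∣ s) (hnorm : A.norm ≡ s ^ 2 [ZMOD p])
    (htrace : trace A ≡ 29 * s [ZMOD p]) :
    (p : ℤ) ∣ C p ↔ (p : EisensteinInt) ∣ star A ^ ((p + 1) / 3) - A ^ ((p + 1) / 3) := by
  have : Fact p.Prime := ⟨hp⟩
  have hp3 : p ≠ 3 := by rintro rfl; exact hpe (by decide)
  obtain ⟨φ⟩ := nonempty_ringHom (AlgebraicClosure (ZMod p))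
  rw [hC.dvd_iff_map_star_pow_eq φ hpe hs hnorm htrace, ← map_pow, ← map_pow, ← sub_eq_zero,
    ← map_sub]
  refine ⟨fun h => natCast_dvd_of_map_eq_zero φ hp3 h ?_, ?_⟩
  · rw [star_sub, star_pow, star_pow, star_star, ← neg_sub, map_neg, h, neg_zero]
  · rintro ⟨y, hy⟩
    rw [hy, map_mul, map_natCast, CharP.cast_eq_zero, zero_mul]

theorem IsCordonnier.dvd_iff_map_eq_one (hC : IsCordonnier C) (hp : p.Prime)
    (hpe : ¬ p ∣ 3 * 29 * 31) {F : ℤ →* EisensteinInt} (hF : IsCubicSymbol A F) {s : ℤ}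
    (hs : ¬ (p : ℤ) ∣ s) (hnorm : A.norm ≡ s ^ 2 [ZMOD p]) (htrace : trace A ≡ 29 * s [ZMOD p]) :
    (p : ℤ) ∣ C p ↔ F p = 1 := by
  have hp3 : p ≠ 3 := by rintro rfl; exact hpe (by decide)
  have hpA : ¬ (p : ℤ) ∣ A.norm := by
    rw [hnorm.dvd_iff]
    exact fun h => hs ((Nat.prime_iff_prime_int.mp hp).dvd_of_dvd_pow h)
  rw [hC.dvd_iff_dvd_star_pow_sub_pow hp hpe hs hnorm htrace, hF.map_eq_one_iff hp hp3 hpA]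

end Criterion

section BinaryForm

lemma exists_translate_abs_le {a : ℤ} (ha : 0 < a) (b : ℤ) : ∃ j, |b + 2 * a * j| ≤ a := by
  refine ⟨-((b + a) / (2 * a)), ?_⟩
  have hdiv := Int.emod_add_mul_ediv (b + a) (2 * a)
  have hnonneg := Int.emod_nonneg (b + a) (b := 2 * a) (by omega)
  have hlt := Int.emod_lt_of_pos (b + a) (b := 2 * a) (by omega)
  rw [abs_le]
  constructor <;> linarith

theorem exists_form_pos_three_mul_sq_le {D a b c : ℤ} (hD : 0 < D) (ha : 0 < a)
    (h : b ^ 2 + D = 4 * a * c) :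
    ∃ x y : ℤ, 0 < a * x ^ 2 + b * x * y + c * y ^ 2 ∧
      3 * (a * x ^ 2 + b * x * y + c * y ^ 2) ^ 2 ≤ D := by
  induction hn : a.toNat using Nat.strong_induction_on generalizing a b c with
  | _ n ih =>
  by_cases hle : 3 * a ^ 2 ≤ D
  · exact ⟨1, 0, by simpa using ha, by simpa using hle⟩
  obtain ⟨j, hj⟩ := exists_translate_abs_le ha b
  have h' : (b + 2 * a * j) ^ 2 + D = 4 * (c + b * j + a * j ^ 2) * a := by linear_combination h
  have hc : 0 < c + b * j + a * j ^ 2 := by nlinarith [sq_nonneg (b + 2 * a * j)]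
  have hlt : c + b * j + a * j ^ 2 < a := by nlinarith [sq_le_sq' (abs_le.mp hj).1 (abs_le.mp hj).2]
  obtain ⟨x, y, hxy⟩ := ih _ (by omega) hc h' rfl
  refine ⟨y + j * x, x, ?_⟩
  have heq : a * (y + j * x) ^ 2 + b * (y + j * x) * x + c * x ^ 2 =
      (c + b * j + a * j ^ 2) * x ^ 2 + (b + 2 * a * j) * x * y + a * y ^ 2 := by ring
  rwa [heq]

lemma three_dvd_of_three_dvd_form {x y : ℤ} (h : 3 ∣ x ^ 2 + x * y + 8 * y ^ 2) :
    3 ∣ x ∧ 3 ∣ y := by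
  have key : ∀ a b : ZMod 3, a ^ 2 + a * b + 8 * b ^ 2 = 0 → a = 0 ∧ b = 0 := by decide
  simp only [← Nat.cast_ofNat (R := ℤ) (n := 3), ← ZMod.intCast_zmod_eq_zero_iff_dvd] at h ⊢
  exact key x y (by exact_mod_cast h)

theorem exists_form_eq_or_eq_mul_two {p : ℕ} (hp : p.Prime) (hp3 : p ≠ 3) {β : ℤ}
    (hβ : (p : ℤ) ∣ β ^ 2 + β + 8) :
    ∃ x y : ℤ, x ^ 2 + x * y + 8 * y ^ 2 = p ∨ x ^ 2 + x * y + 8 * y ^ 2 = p * 2 := by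
  obtain ⟨c, hc⟩ := hβ
  obtain ⟨x, y, hpos, hle⟩ := exists_form_pos_three_mul_sq_le (D := 31) (b := 2 * β + 1) (c := c)
    (by decide) (Int.natCast_pos.mpr hp.pos) (by linear_combination 4 * hc)
  have hform : (p * x + β * y) ^ 2 + (p * x + β * y) * y + 8 * y ^ 2 =
      p * (p * x ^ 2 + (2 * β + 1) * x * y + c * y ^ 2) := by linear_combination y ^ 2 * hc
  generalize p * x ^ 2 + (2 * β + 1) * x * y + c * y ^ 2 = m at *
  have hm : m ≤ 3 := by nlinarith
  refine ⟨p * x + β * y, y, ?_⟩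
  interval_cases m
  · exact .inl (by rw [hform, mul_one])
  · exact .inr hform
  · exfalso
    obtain ⟨⟨u, hu⟩, v, hv⟩ := three_dvd_of_three_dvd_form (hform ▸ dvd_mul_left 3 _)
    rw [hu, hv] at hform
    have : 3 ∣ p := by
      have : (3 : ℤ) ∣ p := ⟨u ^ 2 + u * v + 8 * v ^ 2, by linarith⟩
      exact_mod_cast this
    exact hp3 ((Nat.prime_dvd_prime_iff_eq Nat.prime_three hp).mp this).symm

lemma even_form_of_odd (x : ℤ) {y : ℤ} (hy : Odd y) : Even (x ^ 2 + x * y + 8 * y ^ 2) := by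
  have h8 : Even (8 : ℤ) := by decide
  rcases Int.even_or_odd x with hx | hx <;> simp [parity_simps, hx, hy, h8]

lemma exists_form_eq_iff_of_odd {n : ℤ} (hn : Odd n) :
    (∃ x y : ℤ, x ^ 2 + x * y + 8 * y ^ 2 = n) ↔ ∃ X Y : ℤ, n = X ^ 2 + 31 * Y ^ 2 := by
  constructor
  · rintro ⟨x, y, rfl⟩
    obtain ⟨z, rfl⟩ : Even y := Int.not_odd_iff_even.mp fun hy =>
      Int.not_even_iff_odd.mpr hn (even_form_of_odd x hy)
    exact ⟨x + z, z, by ring⟩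
  · rintro ⟨X, Y, rfl⟩
    exact ⟨X - Y, 2 * Y, by ring⟩

lemma isCoprime_of_squarefree_form {x y : ℤ} (h : Squarefree (x ^ 2 + x * y + 8 * y ^ 2)) :
    IsCoprime x y := by
  refine IsRelPrime.isCoprime fun d hx hy => h d ?_
  rw [pow_two, pow_two]
  exact ((mul_dvd_mul hx hx).add (mul_dvd_mul hx hy)).add ((mul_dvd_mul hy hy).mul_left 8)

lemma not_dvd_of_dvd_form {x y q : ℤ} (hxy : IsCoprime x y) (hq : Prime q)
    (h : q ∣ x ^ 2 + x * y + 8 * y ^ 2) : ¬ q ∣ y := by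
  intro hy
  have hx : q ∣ x ^ 2 := by
    have : x ^ 2 = (x ^ 2 + x * y + 8 * y ^ 2) - y * (x + 8 * y) := by ring
    exact this ▸ dvd_sub h (hy.mul_right _)
  exact hq.not_isUnit (hxy.isUnit_of_dvd' (hq.dvd_of_dvd_pow hx) hy)

lemma exists_form_eq_mul_of_not_three_dvd {x y : ℤ} (hxy : IsCoprime x y)
    (h31 : ¬ 31 ∣ x ^ 2 + x * y + 8 * y ^ 2) :
    ∃ x' y' n : ℤ, x' ^ 2 + x' * y' + 8 * y' ^ 2 = n * (x ^ 2 + x * y + 8 * y ^ 2) ∧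
      IsCoprime x' y' ∧ ¬ 3 ∣ y' ∧ (Odd y → Odd y') ∧ (n = 1 ∨ n = 31 ∧ 31 ∣ 2 * x' + y') := by
  by_cases hy : 3 ∣ y
  swap
  · exact ⟨x, y, 1, (one_mul _).symm, hxy, hy, id, .inl rfl⟩
  have hp31 : Prime (31 : ℤ) := by norm_num
  -- Multiply `x + y * (1 + √-31) / 2`, whose norm is the value of the form, by `√-31`.
  refine ⟨-x - 16 * y, 2 * x + y, 31, by ring, ?_, fun h => ?_, ?_, .inr ⟨rfl, -y, by ring⟩⟩
  · have h31y : IsCoprime 31 (2 * x + y) := by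
      refine hp31.coprime_iff_not_dvd.mpr fun h => h31 ?_
      refine IsCoprime.dvd_of_dvd_mul_left (y := 4) ⟨-1, 8, by norm_num⟩ ?_
      have hsq : 4 * (x ^ 2 + x * y + 8 * y ^ 2) = (2 * x + y) ^ 2 + 31 * y ^ 2 := by ring
      exact hsq ▸ dvd_add (dvd_pow h two_ne_zero) (dvd_mul_right _ _)
    have hx : IsCoprime x (2 * x + y) := by
      rw [mul_comm, add_comm]; exact hxy.add_mul_left_right 2
    have := h31y.mul_left hx
    have heq : 31 * x = -x - 16 * y + (2 * x + y) * 16 := by ring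
    rw [heq] at this
    exact this.of_add_mul_left_left
  · have hx : 3 ∣ x := by omega
    exact Int.prime_three.not_isUnit (hxy.isUnit_of_dvd' hx hy)
  · exact (even_two_mul x).add_odd

end BinaryForm

section CardanoElement

open EisensteinInt

/-- The element `(29 * y + 3 * (2 * x + y) * √-3) / 2` of `ℤ[ω]`. Its norm is `y ^ 2` modulo
`x ^ 2 + x * y + 8 * y ^ 2`, so that there, divided by `y`, it and its conjugate are the two
cubes of Cardano's formula for `t ^ 3 - 3 * t - 29`. -/
def cardanoElement (x y : ℤ) : EisensteinInt :=
  ⟨3 * x + 16 * y, 3 * (2 * x + y)⟩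

variable {x y : ℤ}

lemma norm_cardanoElement :
    (cardanoElement x y).norm = 27 * (x ^ 2 + x * y + 8 * y ^ 2) + y ^ 2 := by
  rw [norm_eq, cardanoElement]
  ring

lemma trace_cardanoElement : trace (cardanoElement x y) = 29 * y := by
  rw [trace_def, cardanoElement]
  ring

lemma isPrimary_cardanoElement (hy : ¬ 3 ∣ y) : IsPrimary (cardanoElement x y) :=
  ⟨dvd_mul_right _ _, by simp only [cardanoElement]; omega⟩

lemma isCoprime_norm_cardanoElement (hxy : IsCoprime x y) (hy : ¬ 3 ∣ y) :
    IsCoprime y (cardanoElement x y).norm := by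
  have h3 : IsCoprime y 3 := (Int.prime_three.coprime_iff_not_dvd.mpr hy).symm
  have := (h3.pow_right (n := 3)).mul_right (hxy.symm.pow_right (n := 2))
  have heq : (cardanoElement x y).norm = 3 ^ 3 * x ^ 2 + y * (27 * x + 217 * y) := by
    rw [norm_cardanoElement]
    ring
  exact heq ▸ this.add_mul_left_right _

lemma odd_norm_cardanoElement (hy : Odd y) : Odd (cardanoElement x y).norm := by
  rw [norm_cardanoElement]
  exact ((even_form_of_odd x hy).mul_left 27).add_odd hy.pow

end CardanoElement

namespace EisensteinInt.IsCubicSymbol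

variable {x y : ℤ} {F : ℤ →* EisensteinInt}

lemma cardanoElement_map_form (hF : IsCubicSymbol (cardanoElement x y) F) (hxy : IsCoprime x y)
    (hy : ¬ 3 ∣ y) : F (x ^ 2 + x * y + 8 * y ^ 2) = 1 := by
  have hcop := isCoprime_norm_cardanoElement hxy hy
  have hFy : F y = 1 :=
    hF.map_eq_one_of_dvd_trace (trace_cardanoElement ▸ dvd_mul_left y 29) hcop hy
  have h3 : IsCoprime 3 (cardanoElement x y).norm :=
    Int.prime_three.coprime_iff_not_dvd.mpr (isPrimary_cardanoElement hy).not_three_dvd_norm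
  have hmod : 3 ^ 3 * (x ^ 2 + x * y + 8 * y ^ 2) ≡ -1 * y ^ 2 [ZMOD (cardanoElement x y).norm] :=
    (Int.modEq_iff_dvd.mpr ⟨1, by rw [norm_cardanoElement]; ring⟩).symm
  have := hF.map_eq_of_modEq hmod
  rwa [map_mul, map_pow, hF.pow_three_eq_one h3, one_mul, map_mul, hF.map_neg_one, one_mul,
    map_pow, hFy, one_pow] at this

lemma cardanoElement_map_thirty_one (hF : IsCubicSymbol (cardanoElement x y) F)
    (hxy : IsCoprime x y) (h : 31 ∣ 2 * x + y) : F 31 = 1 := by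
  have hp31 : Prime (31 : ℤ) := by norm_num
  have hy : ¬ 31 ∣ y := fun hy =>
    hp31.not_isUnit (hxy.isUnit_of_dvd' (by omega) hy)
  refine hF.map_prime_eq_one (q := 31) (by norm_num) (by decide) (fun hnorm => hy ?_)
    (.inl (h.mul_left 3))
  have hsq : (29 * y) ^ 2 = 4 * (cardanoElement x y).norm - 27 * (2 * x + y) ^ 2 := by
    rw [norm_cardanoElement]
    ring
  have hdvd : 31 ∣ 29 * y :=
    hp31.dvd_of_dvd_pow (hsq ▸ (hnorm.mul_left 4).sub ((dvd_pow h two_ne_zero).mul_left 27))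
  exact IsCoprime.dvd_of_dvd_mul_left (y := 29) ⟨-14, 15, by norm_num⟩ hdvd

end EisensteinInt.IsCubicSymbol

namespace IsCordonnier

variable {C : ℕ → ℤ} {p : ℕ}

theorem exists_dvd_iff_map_eq_one (hC : IsCordonnier C) (hp : p.Prime) (hpe : ¬ p ∣ 3 * 29 * 31)
    {x y m : ℤ} (hxy : IsCoprime x y) (h : x ^ 2 + x * y + 8 * y ^ 2 = p * m) (hm : ¬ 31 ∣ m) :
    ∃ F : ℤ →* EisensteinInt, ((p : ℤ) ∣ C p ↔ F m = 1) ∧ (Odd y → F 2 ≠ 1) := by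
  have h31 : ¬ 31 ∣ x ^ 2 + x * y + 8 * y ^ 2 := by
    rw [h, Prime.dvd_mul (by norm_num)]
    refine not_or.mpr ⟨fun h31 => hpe ?_, hm⟩
    obtain rfl : 31 = p := (Nat.prime_dvd_prime_iff_eq (by norm_num) hp).mp (by exact_mod_cast h31)
    exact dvd_mul_left _ _
  obtain ⟨x', y', n, hform, hxy', hy3, hodd, hn⟩ := exists_form_eq_mul_of_not_three_dvd hxy h31
  obtain ⟨F, hF⟩ := (isPrimary_cardanoElement (x := x') hy3).exists_isCubicSymbol
  rw [h] at hform
  have hpform : (p : ℤ) ∣ x' ^ 2 + x' * y' + 8 * y' ^ 2 :=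
    hform ▸ (dvd_mul_right _ _).mul_left _
  have hpy : ¬ (p : ℤ) ∣ y' := not_dvd_of_dvd_form hxy' (Nat.prime_iff_prime_int.mp hp) hpform
  have hFn : F n = 1 := by
    rcases hn with rfl | ⟨rfl, h31⟩
    · exact map_one F
    · exact hF.cardanoElement_map_thirty_one hxy' h31
  have hFpm : F p * F m = 1 := by
    have := hF.cardanoElement_map_form hxy' hy3
    rwa [hform, map_mul, hFn, one_mul, map_mul] at this
  refine ⟨F, ?_, fun hy => ?_⟩
  · rw [hC.dvd_iff_map_eq_one hp hpe hF hpy ?_ (by rw [trace_cardanoElement])]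
    · exact ⟨fun h => by rwa [h, one_mul] at hFpm, fun h => by rwa [h, mul_one] at hFpm⟩
    · rw [norm_cardanoElement]
      exact (Int.modEq_iff_dvd.mpr (by simpa using hpform.mul_left 27)).symm
  · exact hF.map_two_ne_one (odd_norm_cardanoElement (hodd hy))
      ((by decide : Odd (3 : ℤ)).mul ((even_two_mul _).add_odd (hodd hy)))

theorem dvd_of_form_eq (hC : IsCordonnier C) (hp : p.Prime) (hpe : ¬ p ∣ 3 * 29 * 31) {x y : ℤ}
    (h : x ^ 2 + x * y + 8 * y ^ 2 = p) : (p : ℤ) ∣ C p := by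
  have hxy : IsCoprime x y :=
    isCoprime_of_squarefree_form (h ▸ (Nat.prime_iff_prime_int.mp hp).squarefree)
  obtain ⟨F, hF, -⟩ := hC.exists_dvd_iff_map_eq_one hp hpe hxy (by rw [h, mul_one]) (by decide)
  exact hF.mpr (map_one F)

theorem not_dvd_of_form_eq_mul_two (hC : IsCordonnier C) (hp : p.Prime) (hp2 : p ≠ 2)
    (hpe : ¬ p ∣ 3 * 29 * 31) {x y : ℤ} (h : x ^ 2 + x * y + 8 * y ^ 2 = p * 2) :
    ¬ (p : ℤ) ∣ C p := by
  have hsq : Squarefree (p * 2) :=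
    (Nat.squarefree_mul ((Nat.coprime_primes hp Nat.prime_two).mpr hp2)).mpr
      ⟨hp.prime.squarefree, Nat.prime_two.prime.squarefree⟩
  have hxy : IsCoprime x y :=
    isCoprime_of_squarefree_form (h ▸ by exact_mod_cast Int.squarefree_natCast.mpr hsq)
  have hy : Odd y := Int.not_even_iff_odd.mp fun hy =>
    not_dvd_of_dvd_form hxy Int.prime_two (h ▸ dvd_mul_left 2 _) hy.two_dvd
  obtain ⟨F, hF, hF2⟩ := hC.exists_dvd_iff_map_eq_one hp hpe hxy h (by decide)
  exact hF.not.mpr (hF2 hy)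

theorem exists_form_eq_of_dvd (hC : IsCordonnier C) (hp : p.Prime) (hp2 : p ≠ 2)
    (hpe : ¬ p ∣ 3 * 29 * 31) (h : (p : ℤ) ∣ C p) : ∃ x y : ℤ, x ^ 2 + x * y + 8 * y ^ 2 = p := by
  have : Fact p.Prime := ⟨hp⟩
  let k := AlgebraicClosure (ZMod p)
  have natCast_ne_zero {n : ℕ} (hn : ¬ p ∣ n) : (n : k) ≠ 0 := by
    rwa [Ne, CharP.cast_eq_zero_iff k p]
  have h2 := natCast_ne_zero (n := 2) (by rwa [Nat.prime_dvd_prime_iff_eq hp Nat.prime_two])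
  have h3 := natCast_ne_zero (n := 3) fun h => hpe (h.trans (by decide))
  have h29 := natCast_ne_zero (n := 29) fun h => hpe (h.trans (by decide))
  have h31 := natCast_ne_zero (n := 31) fun h => hpe (h.trans (by decide))
  push_cast at h2 h3 h29 h31
  obtain ⟨t₀, t₁, t₂, ht⟩ := exists_isRootTriple k
  obtain ⟨ht₀, ht₁, ht₂⟩ := (hC.dvd_iff_pow_char_eq_self h3 h29 h31 ht).mp h
  obtain ⟨β, hβ⟩ := exists_dvd_sq_add_self_add_eight ht h2 h3 ht₀ ht₁ ht₂
  have hp3 : p ≠ 3 := by rintro rfl; exact hpe (by decide)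
  obtain ⟨x, y, hform | hform⟩ := exists_form_eq_or_eq_mul_two hp hp3 hβ
  · exact ⟨x, y, hform⟩
  · exact absurd h (hC.not_dvd_of_form_eq_mul_two hp hp2 hpe hform)

end IsCordonnier

end Cordonnier

theorem cordonnier_divisibility (C : ℕ → ℤ)
    (h0 : C 0 = 0) (h1 : C 1 = 0) (h2 : C 2 = 1)
    (hrec : ∀ n, C (n + 3) = C (n + 2) + C n)
    (p : ℕ) (hp : p.Prime) (hpe : ¬ (p ∣ 2 * 3 * 29 * 31)) :
    (p : ℤ) ∣ C p ↔ ∃ X Y : ℤ, (p : ℤ) = X ^ 2 + 31 * Y ^ 2 := by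
  have hC : Cordonnier.IsCordonnier C := ⟨h0, h1, h2, hrec⟩
  have hp2 : p ≠ 2 := by rintro rfl; exact hpe (by decide)
  have hodd : Odd (p : ℤ) := by exact_mod_cast hp.odd_of_ne_two hp2
  have hpe : ¬ p ∣ 3 * 29 * 31 := fun h => hpe (h.trans (by decide))
  rw [← Cordonnier.exists_form_eq_iff_of_odd hodd]
  exact ⟨hC.exists_form_eq_of_dvd hp hp2 hpe, fun ⟨_, _, h⟩ => hC.dvd_of_form_eq hp hpe h⟩
end

section
/- Let f be a monic irreducible cubic polynomial with integer coefficients and let p be a prime not dividing 6·disc(f). Let L be the splitting field of f over Q, assumed non-abelian over Q (i.e. with Galois group S_3), and let 𝔅 be a prime ideal of the ring of integers of L above p, with decomposition group D(𝔅). Then N_p(f) = 3 if and only if #D(𝔅) = 1; N_p(f) = 0 if and only if #D(𝔅) = 3; and N_p(f) = 1 if and only if #D(𝔅) = 2. -/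
open Polynomial NumberField

/-!
Modulo a prime `p` not dividing the discriminant the three roots of `f` stay distinct, so reduction
modulo `𝔅` identifies them with the roots of `f` in the residue field of `𝔅`. An element of the
Galois group acting trivially on that residue field therefore fixes all roots, so the inertia group
is trivial and `D(𝔅)` is generated by a Frobenius element `σ`. The roots of `f` modulo `p`
correspond to the roots fixed by `σ`, and the order of a permutation of three letters is determined
by its number of fixed points.
-/

theorem orderOf_add_card_fixedPoints_of_ne_one {α : Type*} [Finite α] {σ : Equiv.Perm α}
    (hα : Nat.card α ≤ 3) (hσ : σ ≠ 1) :
    orderOf σ + Nat.card (Function.fixedPoints σ) = Nat.card α := by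
  classical
  cases nonempty_fintype α
  rw [Nat.card_eq_fintype_card] at hα
  obtain ⟨n, hn⟩ := Multiset.exists_mem_of_ne_zero (mt Equiv.Perm.cycleType_eq_zero.mp hσ)
  have two_le : 2 ≤ n := Equiv.Perm.two_le_of_mem_cycleType hn
  have cycleType_eq : σ.cycleType = {n} :=
    Equiv.Perm.cycleType_of_card_le_mem_cycleType_add_two (by lia) hn
  have le_card := σ.sum_cycleType_le
  rw [← σ.lcm_cycleType, Nat.card_eq_fintype_card, Nat.card_eq_fintype_card, σ.card_fixedPoints]
  simp only [cycleType_eq, Multiset.sum_singleton, Multiset.lcm_singleton, normalize_eq]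
    at le_card ⊢
  lia

theorem card_fixedPoints_eq_iff_orderOf_eq_of_card_eq_three {α : Type*} {σ : Equiv.Perm α}
    (hα : Nat.card α = 3) :
    (Nat.card (Function.fixedPoints σ) = 3 ↔ orderOf σ = 1) ∧
      (Nat.card (Function.fixedPoints σ) = 0 ↔ orderOf σ = 3) ∧
      (Nat.card (Function.fixedPoints σ) = 1 ↔ orderOf σ = 2) := by
  have : Finite α := Nat.finite_of_card_ne_zero (by lia)
  obtain rfl | hσ := eq_or_ne σ 1
  · have card_fixed : Nat.card (Function.fixedPoints (1 : Equiv.Perm α)) = 3 := by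
      rw [Equiv.Perm.coe_one, Function.fixedPoints_id, Nat.card_univ, hα]
    simp only [orderOf_one]
    lia
  · have order_add_fixed := orderOf_add_card_fixedPoints_of_ne_one hα.le hσ
    have order_pos := orderOf_pos σ
    have order_ne_one := mt orderOf_eq_one_iff.mp hσ
    lia

theorem pow_natCard_eq_self_iff_mem_range_algebraMap {k l : Type*} [Field k] [Finite k]
    [CommRing l] [IsDomain l] [Algebra k l] {y : l} :
    y ^ Nat.card k = y ↔ y ∈ Set.range (algebraMap k l) := by
  constructor
  · intro hy
    refine (splits_X_pow_nat_card_sub_X (K := k)).mem_range_of_isRoot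
      (FiniteField.X_pow_card_sub_X_ne_zero k Finite.one_lt_card) (i := algebraMap k l) ?_
    simp [hy]
  · rintro ⟨x, rfl⟩
    cases nonempty_fintype k
    rw [Nat.card_eq_fintype_card, ← map_pow, FiniteField.pow_card]

section RootReduction

variable {R S T : Type*} [CommRing R] [CommRing S] [CommRing T] [IsDomain S] [IsDomain T]
  [Algebra R S] [Algebra R T] {f : R[X]}

theorem aroots_eq_map_aroots_of_splits (hsplit : (f.map (algebraMap R S)).Splits)
    (hne : f.map (algebraMap R T) ≠ 0) (φ : S →ₐ[R] T) : f.aroots T = (f.aroots S).map φ := by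
  rw [← φ.comp_algebraMap, ← Polynomial.map_map] at hne
  have roots_map := hsplit.roots_map_of_ne_zero hne
  rwa [Polynomial.map_map, φ.comp_algebraMap] at roots_map

theorem nodup_aroots_of_separable_map (hsplit : (f.map (algebraMap R S)).Splits)
    (hsep : (f.map (algebraMap R T)).Separable) (φ : S →ₐ[R] T) : (f.aroots S).Nodup :=
  .of_map φ <| aroots_eq_map_aroots_of_splits hsplit hsep.ne_zero φ ▸ nodup_roots hsep

theorem bijOn_rootSet_of_separable_map (hsplit : (f.map (algebraMap R S)).Splits)
    (hsep : (f.map (algebraMap R T)).Separable) (φ : S →ₐ[R] T) :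
    Set.BijOn φ (f.rootSet S) (f.rootSet T) := by
  classical
  have nodup_map : ((f.aroots S).map φ).Nodup :=
    aroots_eq_map_aroots_of_splits hsplit hsep.ne_zero φ ▸ nodup_roots hsep
  have injOn : Set.InjOn φ (f.rootSet S) := fun x hx y hy ↦
    Multiset.inj_on_of_nodup_map nodup_map x (Multiset.mem_toFinset.mp hx) y
      (Multiset.mem_toFinset.mp hy)
  exact hsplit.image_rootSet_of_map_ne_zero φ hsep.ne_zero ▸ injOn.bijOn_image

theorem ncard_rootSet_eq_natDegree (hf : f.Monic) (hsplit : (f.map (algebraMap R S)).Splits)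
    (hnodup : (f.aroots S).Nodup) : (f.rootSet S).ncard = f.natDegree := by
  classical
  rw [rootSet_def, Set.ncard_coe_finset, Multiset.toFinset_card_of_nodup hnodup,
    ← hsplit.natDegree_eq_card_roots, hf.natDegree_map]

end RootReduction

section Frobenius

variable {R S G : Type*} [CommRing R] [CommRing S] [Algebra R S] [Group G] [MulSemiringAction G S]
  [SMulCommClass G R S] {Q : Ideal S} {σ : G} {f : R[X]}

open scoped Pointwise

theorem stabilizer_eq_zpowers_sup_inertia [Q.IsPrime] [Finite (S ⧸ Q)] (h : IsArithFrobAt R σ Q) :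
    MulAction.stabilizer G Q = Subgroup.zpowers σ ⊔ Q.inertia G := by
  refine le_antisymm (fun τ hτ ↦ ?_)
    (sup_le (Subgroup.zpowers_le.mpr h.mem_stabilizer) (Ideal.inertia_le_stabilizer Q))
  let P := Q.under R
  let _ : Field (S ⧸ Q) := (Finite.isField_of_domain (S ⧸ Q)).toField
  have : Finite (R ⧸ P) := h.finite_quotient
  let _ : Field (R ⧸ P) := (Finite.isField_of_domain (R ⧸ P)).toField
  let _ := Fintype.ofFinite (R ⧸ P)
  let ρ := Ideal.Quotient.stabilizerHom Q P G
  have map_frob :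
      ρ ⟨σ, h.mem_stabilizer⟩ = FiniteField.frobeniusAlgEquivOfAlgebraic (R ⧸ P) (S ⧸ Q) := by
    ext y
    obtain ⟨x, rfl⟩ := Ideal.Quotient.mk_surjective y
    simpa [Nat.card_eq_fintype_card] using! h.mk_apply x
  obtain ⟨n, hn⟩ :=
    (FiniteField.bijective_frobeniusAlgEquivOfAlgebraic_pow (R ⧸ P) (S ⧸ Q)).2 (ρ ⟨τ, hτ⟩)
  have mem_ker : (⟨σ, h.mem_stabilizer⟩ ^ n.1)⁻¹ * ⟨τ, hτ⟩ ∈ ρ.ker := by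
    rw [MonoidHom.mem_ker, map_mul, map_inv, map_pow, map_frob, ← hn, inv_mul_cancel]
  rw [Ideal.Quotient.ker_stabilizerHom] at mem_ker
  rw [← mul_inv_cancel_left (σ ^ n.1) τ]
  exact Subgroup.mul_mem_sup (Subgroup.npow_mem_zpowers σ n) mem_ker

variable [IsDomain S]

theorem inertia_eq_bot_of_injOn_rootSet [FaithfulSMul G (f.rootSet S)]
    (hinj : Set.InjOn (Ideal.Quotient.mk Q) (f.rootSet S)) : Q.inertia G = ⊥ := by
  refine (Subgroup.eq_bot_iff_forall _).mpr fun τ hτ ↦ ?_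
  refine FaithfulSMul.eq_of_smul_eq_smul fun x : f.rootSet S ↦ ?_
  rw [one_smul]
  exact Subtype.ext (hinj (τ • x).2 x.2 (Ideal.Quotient.eq.mpr (hτ x)))

theorem natCard_stabilizer_eq_orderOf_toPerm [Q.IsPrime] [Finite (S ⧸ Q)]
    [FaithfulSMul G (f.rootSet S)] (h : IsArithFrobAt R σ Q)
    (hinj : Set.InjOn (Ideal.Quotient.mk Q) (f.rootSet S)) :
    Nat.card (MulAction.stabilizer G Q) =
      orderOf (MulAction.toPerm σ : Equiv.Perm (f.rootSet S)) := by
  rw [stabilizer_eq_zpowers_sup_inertia h, inertia_eq_bot_of_injOn_rootSet hinj, sup_bot_eq,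
    Nat.card_zpowers]
  exact (orderOf_injective (MulAction.toPermHom G (f.rootSet S)) MulAction.toPerm_injective σ).symm

theorem mk_mem_range_algebraMap_iff_smul_eq [Q.IsPrime] {κ : Type*} [Field κ]
    [Algebra κ (S ⧸ Q)] (hκ : Nat.card κ = Nat.card (R ⧸ Q.under R)) (h : IsArithFrobAt R σ Q)
    (hinj : Set.InjOn (Ideal.Quotient.mk Q) (f.rootSet S)) {x : S} (hx : x ∈ f.rootSet S) :
    Ideal.Quotient.mk Q x ∈ Set.range (algebraMap κ (S ⧸ Q)) ↔ σ • x = x := by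
  have : Finite κ := Nat.finite_of_card_ne_zero (hκ ▸ h.card_pos.ne')
  have mk_smul : Ideal.Quotient.mk Q (σ • x) = Ideal.Quotient.mk Q x ^ Nat.card κ :=
    hκ ▸ h.mk_apply x
  rw [← pow_natCard_eq_self_iff_mem_range_algebraMap, ← mk_smul]
  exact hinj.eq_iff (smul_mem_rootSet σ hx) hx

theorem natCard_fixedPoints_toPerm_eq_ncard_rootSet [Q.IsPrime] {κ : Type*} [Field κ]
    [Algebra R κ] [Algebra κ (S ⧸ Q)] [IsScalarTower R κ (S ⧸ Q)]
    (hκ : Nat.card κ = Nat.card (R ⧸ Q.under R)) (h : IsArithFrobAt R σ Q)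
    (hbij : Set.BijOn (Ideal.Quotient.mk Q) (f.rootSet S) (f.rootSet (S ⧸ Q))) :
    Nat.card (Function.fixedPoints (MulAction.toPerm σ : Equiv.Perm (f.rootSet S))) =
      (f.rootSet κ).ncard := by
  have mem_rootSet_iff {z : κ} : algebraMap κ (S ⧸ Q) z ∈ f.rootSet (S ⧸ Q) ↔ z ∈ f.rootSet κ := by
    rw [mem_rootSet', mem_rootSet', aeval_algebraMap_apply, map_eq_zero,
      IsScalarTower.algebraMap_eq R κ (S ⧸ Q), ← Polynomial.map_map, Polynomial.map_ne_zero_iff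
        (algebraMap κ (S ⧸ Q)).injective]
  have image_eq : (f.rootSet S).domRestrict (Ideal.Quotient.mk Q) ''
        Function.fixedPoints (MulAction.toPerm σ) = algebraMap κ (S ⧸ Q) '' f.rootSet κ := by
    ext y
    constructor
    · rintro ⟨x, hx, rfl⟩
      obtain ⟨z, hz⟩ := (mk_mem_range_algebraMap_iff_smul_eq hκ h hbij.injOn x.2).mpr
        (congrArg Subtype.val hx)
      exact ⟨z, mem_rootSet_iff.mp (hz ▸ hbij.mapsTo x.2), hz⟩
    · rintro ⟨z, hz, rfl⟩
      obtain ⟨x, hx, mk_eq⟩ := hbij.surjOn (mem_rootSet_iff.mpr hz)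
      exact ⟨⟨x, hx⟩, Subtype.ext
        ((mk_mem_range_algebraMap_iff_smul_eq hκ h hbij.injOn hx).mp ⟨z, mk_eq.symm⟩), mk_eq⟩
  rw [Nat.card_coe_set_eq, ← Set.ncard_image_of_injective _ hbij.injOn.injective, image_eq,
    Set.ncard_image_of_injective _ (algebraMap κ (S ⧸ Q)).injective]

theorem ncard_rootSet_eq_iff_natCard_stabilizer_eq_of_natDegree_eq_three [Algebra.IsInvariant R S G]
    [FaithfulSMul G (f.rootSet S)] [Q.IsPrime] [Finite (S ⧸ Q)] {κ : Type*} [Field κ]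
    [Algebra R κ] [Algebra κ (S ⧸ Q)] [IsScalarTower R κ (S ⧸ Q)]
    (hκ : Nat.card κ = Nat.card (R ⧸ Q.under R)) (hf : f.Monic) (hdeg : f.natDegree = 3)
    (hsplit : (f.map (algebraMap R S)).Splits) (hsep : (f.map (algebraMap R κ)).Separable) :
    ((f.rootSet κ).ncard = 3 ↔ Nat.card (MulAction.stabilizer G Q) = 1) ∧
      ((f.rootSet κ).ncard = 0 ↔ Nat.card (MulAction.stabilizer G Q) = 3) ∧
      ((f.rootSet κ).ncard = 1 ↔ Nat.card (MulAction.stabilizer G Q) = 2) := by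
  have : Finite G := .of_injective _ (MulAction.toPerm_injective (β := f.rootSet S))
  obtain ⟨σ, hσ⟩ := IsArithFrobAt.exists_of_isInvariant R G Q
  have hsep' : (f.map (algebraMap R (S ⧸ Q))).Separable := by
    rw [IsScalarTower.algebraMap_eq R κ, ← Polynomial.map_map]
    exact hsep.map
  have hbij : Set.BijOn (Ideal.Quotient.mk Q) (f.rootSet S) (f.rootSet (S ⧸ Q)) :=
    bijOn_rootSet_of_separable_map hsplit hsep' (Ideal.Quotient.mkₐ R Q)
  have card_roots : Nat.card (f.rootSet S) = 3 := by
    rw [Nat.card_coe_set_eq, ← hdeg]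
    exact ncard_rootSet_eq_natDegree hf hsplit
      (nodup_aroots_of_separable_map hsplit hsep' (Ideal.Quotient.mkₐ R Q))
  rw [natCard_stabilizer_eq_orderOf_toPerm hσ hbij.injOn,
    ← natCard_fixedPoints_toPerm_eq_ncard_rootSet hκ hσ hbij]
  exact card_fixedPoints_eq_iff_orderOf_eq_of_card_eq_three card_roots

end Frobenius

section SplittingField

variable {A K L B : Type*} [CommRing A] [Field K] [Field L] [CommRing B]
  [Algebra A K] [Algebra K L] [Algebra A L] [IsScalarTower A K L]
  [Algebra A B] [Algebra B L] [IsScalarTower A B L] {f : A[X]}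

theorem splits_map_of_isIntegralClosure [IsIntegralClosure B A L] (hf : f.Monic)
    (hsplit : (f.map (algebraMap A L)).Splits) : (f.map (algebraMap A B)).Splits := by
  have injective : Function.Injective (algebraMap B L) :=
    IsIntegralClosure.algebraMap_injective B A L
  have : IsDomain B := injective.isDomain
  refine Splits.of_splits_map_of_injective injective ?_ fun x hx ↦ ?_
  · rwa [Polynomial.map_map, ← IsScalarTower.algebraMap_eq]
  · rw [Polynomial.map_map, ← IsScalarTower.algebraMap_eq] at hx
    exact IsIntegralClosure.isIntegral_iff.mp ⟨f, hf, (mem_aroots'.mp hx).2⟩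

theorem faithfulSMul_rootSet {G : Type*} [Group G] [MulSemiringAction G B] [SMulCommClass G A B]
    [MulSemiringAction G L] [SMulCommClass G K L] [FaithfulSMul G L] [SMulDistribClass G B L]
    [IsDomain B] [IsIntegralClosure B A L] [IsSplittingField K L (f.map (algebraMap A K))]
    (hf : f.Monic) : FaithfulSMul G (f.rootSet B) where
  eq_of_smul_eq_smul {σ τ} hστ := by
    have toAlgHom_eq : MulSemiringAction.toAlgHom K L σ = MulSemiringAction.toAlgHom K L τ := by
      refine AlgHom.ext_of_adjoin_eq_top
        (IsSplittingField.adjoin_rootSet L (f.map (algebraMap A K))) fun x hx ↦ ?_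
      rw [(hf.map _).mem_rootSet, aeval_map_algebraMap] at hx
      obtain ⟨y, rfl⟩ := (IsIntegralClosure.isIntegral_iff (A := B)).mp ⟨f, hf, hx⟩
      rw [aeval_algebraMap_eq_zero_iff_of_injective (IsIntegralClosure.algebraMap_injective B A L),
        ← hf.mem_rootSet] at hx
      have smul_eq : σ • y = τ • y := congrArg Subtype.val (hστ ⟨y, hx⟩)
      change σ • algebraMap B L y = τ • algebraMap B L y
      rw [← algebraMap.coe_smul', smul_eq, algebraMap.coe_smul']
    exact FaithfulSMul.eq_of_smul_eq_smul fun x : L ↦ DFunLike.congr_fun toAlgHom_eq x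

open scoped Pointwise

theorem comap_galRestrict_eq_self_iff [IsFractionRing A K] [Algebra.IsAlgebraic K L]
    [IsIntegralClosure B A L] [MulSemiringAction Gal(L/K) B] [SMulDistribClass Gal(L/K) B L]
    {σ : Gal(L/K)} {I : Ideal B} :
    I.comap (galRestrict A K L B σ) = I ↔ σ ∈ MulAction.stabilizer Gal(L/K) I := by
  have galRestrict_apply (x : B) : galRestrict A K L B σ x = σ • x :=
    IsIntegralClosure.algebraMap_injective B A L <| by
      rw [algebraMap_galRestrict_apply, algebraMap.smul', AlgEquiv.smul_def]
  rw [← Subgroup.inv_mem_iff, MulAction.mem_stabilizer_iff]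
  refine Eq.congr_left (Ideal.ext fun x ↦ ?_)
  rw [Ideal.mem_comap, galRestrict_apply, Ideal.mem_inv_pointwise_smul_iff]

theorem natCard_comap_galRestrict_eq_self [IsFractionRing A K] [Algebra.IsAlgebraic K L]
    [IsIntegralClosure B A L] [MulSemiringAction Gal(L/K) B] [SMulDistribClass Gal(L/K) B L]
    (I : Ideal B) : Nat.card {σ : Gal(L/K) // I.comap (galRestrict A K L B σ) = I} =
      Nat.card (MulAction.stabilizer Gal(L/K) I) :=
  Nat.card_congr (Equiv.subtypeEquivRight fun _ ↦ comap_galRestrict_eq_self_iff)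

end SplittingField

theorem separable_map_toPoly_of_map_discr_ne_zero {R F : Type*} [CommRing R] [Field F]
    {P : Cubic R} (φ : R →+* F) (ha : φ P.a ≠ 0) (hP : φ P.discr ≠ 0) :
    (P.toPoly.map φ).Separable := by
  have map_discr : (P.map φ).discr = φ P.discr := by
    simp only [Cubic.discr, Cubic.map, map_add, map_sub, map_mul, map_pow, map_ofNat]
  have hsplit := SplittingField.splits (P.map φ).toPoly
  rw [← Cubic.map_toPoly, ← nodup_aroots_iff_of_splits (Cubic.ne_zero_of_a_ne_zero ha) hsplit,
    aroots, ← Cubic.map_roots]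
  exact (Cubic.discr_ne_zero_iff_roots_nodup ha hsplit).mp (map_discr ▸ hP)

theorem charP_quotient_of_comap_eq_span {S : Type*} [CommRing S] {Q : Ideal S} {p : ℕ}
    (hQ : Q.comap (algebraMap ℤ S) = Ideal.span {(p : ℤ)}) : CharP (S ⧸ Q) p where
  cast_eq_zero_iff n := by
    rw [← Int.natCast_dvd_natCast, ← Ideal.mem_span_singleton, ← hQ, Ideal.mem_comap,
      ← Ideal.Quotient.eq_zero_iff_mem]
    simp

open scoped Pointwise in
theorem ncard_rootSet_zmod_eq_iff_natCard_stabilizer_eq {f : ℤ[X]} (hf : f.Monic)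
    (hdeg : f.natDegree = 3) {p : ℕ} [Fact p.Prime]
    (hsep : (f.map (algebraMap ℤ (ZMod p))).Separable) {L : Type*} [Field L] [NumberField L]
    [IsSplittingField ℚ L (f.map (algebraMap ℤ ℚ))] {𝔅 : Ideal (𝓞 L)} [𝔅.IsPrime]
    (h𝔅 : 𝔅.comap (algebraMap ℤ (𝓞 L)) = Ideal.span {(p : ℤ)}) :
    ((f.rootSet (ZMod p)).ncard = 3 ↔ Nat.card (MulAction.stabilizer Gal(L/ℚ) 𝔅) = 1) ∧
      ((f.rootSet (ZMod p)).ncard = 0 ↔ Nat.card (MulAction.stabilizer Gal(L/ℚ) 𝔅) = 3) ∧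
      ((f.rootSet (ZMod p)).ncard = 1 ↔ Nat.card (MulAction.stabilizer Gal(L/ℚ) 𝔅) = 2) := by
  have mem_𝔅 : algebraMap ℤ (𝓞 L) p ∈ 𝔅 :=
    Ideal.mem_comap.mp (h𝔅 ▸ Ideal.mem_span_singleton_self (p : ℤ))
  have ne_bot : 𝔅 ≠ ⊥ := by
    refine (Submodule.ne_bot_iff 𝔅).mpr ⟨_, mem_𝔅, ?_⟩
    simp [NeZero.ne p]
  have : Finite (𝓞 L ⧸ 𝔅) := Ideal.finiteQuotientOfFreeOfNeBot 𝔅 ne_bot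
  have : CharP (𝓞 L ⧸ 𝔅) p := charP_quotient_of_comap_eq_span h𝔅
  let _ := ZMod.algebra (𝓞 L ⧸ 𝔅) p
  have hsplit : (f.map (algebraMap ℤ (𝓞 L))).Splits := by
    refine splits_map_of_isIntegralClosure (L := L) hf ?_
    rw [IsScalarTower.algebraMap_eq ℤ ℚ L, ← Polynomial.map_map]
    exact IsSplittingField.splits L (f.map (algebraMap ℤ ℚ))
  have : Normal ℚ L := Normal.of_isSplittingField (f.map (algebraMap ℤ ℚ))
  have : IsGalois ℚ L := ⟨⟩
  have : FaithfulSMul Gal(L/ℚ) (f.rootSet (𝓞 L)) :=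
    faithfulSMul_rootSet (K := ℚ) (L := L) hf
  have card_residueField : Nat.card (ZMod p) = Nat.card (ℤ ⧸ 𝔅.under ℤ) := by
    rw [Ideal.under_def, h𝔅, Nat.card_zmod, Int.card_ideal_quot]
  exact ncard_rootSet_eq_iff_natCard_stabilizer_eq_of_natDegree_eq_three card_residueField hf hdeg
    hsplit hsep

theorem decomposition_group_nonabelian_general (a b c : ℤ)
    (f : Polynomial ℤ) (hf : f = X ^ 3 + C a * X ^ 2 + C b * X + C c)
    (p : ℕ) [Fact p.Prime]
    (hp : ¬ ((p : ℤ) ∣ 18 * a * b * c - 4 * a ^ 3 * c + a ^ 2 * b ^ 2 - 4 * b ^ 3 - 27 * c ^ 2))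
    (L : Type*) [Field L] [NumberField L] [IsSplittingField ℚ L (f.map (Int.castRingHom ℚ))]
    (𝔅 : Ideal (𝓞 L)) (h𝔅 : 𝔅.IsPrime)
    (habove : 𝔅.comap (algebraMap ℤ (𝓞 L)) = Ideal.span {(p : ℤ)}) :
    let N := (f.map (Int.castRingHom (ZMod p))).roots.toFinset.card
    let D := Nat.card {σ : L ≃ₐ[ℚ] L // 𝔅.comap (galRestrict ℤ ℚ L (𝓞 L) σ) = 𝔅}
    (N = 3 ↔ D = 1) ∧ (N = 0 ↔ D = 3) ∧ (N = 1 ↔ D = 2) := by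
  intro N D
  have hcubic : f = Cubic.toPoly ⟨1, a, b, c⟩ := by simp [hf, Cubic.toPoly]
  have hmonic : f.Monic := hcubic ▸ Cubic.monic_of_a_eq_one'
  have hdeg : f.natDegree = 3 := hcubic ▸ Cubic.natDegree_of_a_ne_zero' one_ne_zero
  have hdiscr : Int.castRingHom (ZMod p) (Cubic.discr ⟨1, a, b, c⟩) ≠ 0 := by
    rw [Int.coe_castRingHom, Ne, ZMod.intCast_zmod_eq_zero_iff_dvd]
    convert! hp using 2
    rw [Cubic.discr]
    ring
  have hsep : (f.map (Int.castRingHom (ZMod p))).Separable :=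
    hcubic ▸ separable_map_toPoly_of_map_discr_ne_zero _ (by simp) hdiscr
  have hN : N = (f.rootSet (ZMod p)).ncard := by
    rw [rootSet_def, Set.ncard_coe_finset]
    rfl
  have hD : D = _ := natCard_comap_galRestrict_eq_self 𝔅
  rw [hN, hD]
  exact ncard_rootSet_zmod_eq_iff_natCard_stabilizer_eq hmonic hdeg hsep habove

theorem decomposition_group_nonabelian (a b c : ℤ)
    (f : Polynomial ℤ) (hf : f = X ^ 3 + C a * X ^ 2 + C b * X + C c)
    (hirr : Irreducible (f.map (Int.castRingHom ℚ)))
    (p : ℕ) [Fact p.Prime]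
    (hpe : ¬ ((p : ℤ) ∣ 6 * (18 * a * b * c - 4 * a ^ 3 * c + a ^ 2 * b ^ 2
      - 4 * b ^ 3 - 27 * c ^ 2)))
    (L : Type) [Field L] [NumberField L]
    [IsSplittingField ℚ L (f.map (Int.castRingHom ℚ))]
    (hnab : ∃ σ τ : L ≃ₐ[ℚ] L, σ * τ ≠ τ * σ)
    (𝔅 : Ideal (𝓞 L)) (h𝔅 : 𝔅.IsPrime)
    (habove : 𝔅.comap (algebraMap ℤ (𝓞 L)) = Ideal.span {(p : ℤ)}) :
    let N := (f.map (Int.castRingHom (ZMod p))).roots.toFinset.card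
    let D := Nat.card {σ : L ≃ₐ[ℚ] L // 𝔅.comap (galRestrict ℤ ℚ L (𝓞 L) σ) = 𝔅}
    (N = 3 ↔ D = 1) ∧ (N = 0 ↔ D = 3) ∧ (N = 1 ↔ D = 2) := by
  exact decomposition_group_nonabelian_general a b c f hf p (mt (Dvd.dvd.mul_left · 6) hpe) L
    𝔅 h𝔅 habove
end

section
/- Let (u_n) be defined by u_0 = 0, u_1 = -1, u_2 = -1 and u_{n+3} = -u_{n+1} - u_n (characteristic polynomial f = x^3 + x + 1, disc(f) = -31). Then for any prime p not in {3, 31}, p divides u_{p-1} if and only if there exist integers X, Y such that 4p = X^2 + 31Y^2. -/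
/-!
Let `a`, `b`, `c` be the roots of `x ^ 3 + A * x + B` in an algebraic closure of `𝔽_p`. Up to the
square root of the discriminant, `u (p - 1)` is an alternating sum of the `a ^ 2 * a ^ p`, and it
vanishes exactly when the Frobenius fixes the three roots.

Suppose `4 * n = X ^ 2 + (4 * A ^ 3 + 27 * B ^ 2) * Y ^ 2` with `p ∣ n`. Then the cubes of the two
Lagrange resolvents of the roots are, up to a common factor, the reductions of an Eisenstein
integer `α = (X + 3 * B * Y) / 2 + 3 * B * Y * ω` and of its conjugate, and
`norm α = n - A ^ 3 * Y ^ 2`. By cubic reciprocity, proved through Jacobi sums, the square of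
Frobenius therefore fixes the ratio of the resolvents exactly when the cubic residue character `χ`
of `α` is trivial at `p`. Moreover `χ n = χ A ^ 3 * χ Y ^ 2 = 1`, since `Y` divides the imaginary
part of `α`.

For `A = B = 1` and `n = p * 2 ^ e` with `e ≠ 0` and `Y` odd, also `χ 2 ≠ 1`, so the cubic splits
modulo `p` if and only if `3 ∣ e`. The reduced forms of discriminant `-31` show that if the cubic
splits then `4 * p` or `8 * p` is of the form `X ^ 2 + 31 * Y ^ 2`, and the latter, being the case
`e = 1`, is impossible. Conversely, composing a representation of `4 * p` with `4 * 8 = 1 + 31`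
gives the case `e = 3`. Passing from `e` to `e + 3` in this way also swaps the residues `1` and `2`
of `n` modulo `3`, and the residue `2` makes `X` and `Y` prime to `3`, as reciprocity requires.
-/

lemma eq_one_of_pow_eq_one_of_map_eq_one {R S : Type*} [CommRing R] [IsDomain R] [CommRing S]
    (φ : R →+* S) {n : ℕ} (hn : (n : S) ≠ 0) {z : R} (hz : z ^ n = 1) (hφ : φ z = 1) : z = 1 := by
  by_contra hne
  have hsum : ∑ i ∈ Finset.range n, z ^ i = 0 := by
    refine (mul_eq_zero.1 ?_).resolve_right (sub_ne_zero.2 hne)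
    rw [geom_sum_mul, hz, sub_self]
  apply hn
  simpa [hφ] using congrArg φ hsum

lemma natCast_ne_zero_of_prime_ne (E : Type*) [AddMonoidWithOne E] {q r : ℕ} [CharP E q]
    (hq : q.Prime) (hr : r.Prime) (h : q ≠ r) : (r : E) ≠ 0 := by
  rwa [Ne, CharP.cast_eq_zero_iff E q, Nat.prime_dvd_prime_iff_eq hq hr]

lemma three_dvd_sq_sub_one {q : ℕ} (hq : q.Prime) (hq3 : q ≠ 3) : 3 ∣ q ^ 2 - 1 := by
  have : q.Coprime 3 := (Nat.coprime_primes hq Nat.prime_three).2 hq3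
  simpa using (Nat.modEq_iff_dvd' (pow_pos hq.pos 2)).1 (Nat.ModEq.pow_totient this).symm

lemma ne_three_of_isCoprime {q : ℕ} {n : ℤ} (h : IsCoprime (q : ℤ) (3 * n)) : q ≠ 3 := by
  rintro rfl
  exact absurd h.of_mul_right_left (by norm_num)

section GaussSum

lemma gaussSum_pow_prime_pow {R R' : Type*} [CommRing R] [Fintype R] [CommRing R'] (q : ℕ)
    [Fact q.Prime] [CharP R' q] (χ : MulChar R R') (ψ : AddChar R R') (k : ℕ) :
    gaussSum χ ψ ^ q ^ k = gaussSum (χ ^ q ^ k) (ψ ^ q ^ k) := by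
  induction k with
  | zero => simp
  | succ k ih => rw [pow_succ, pow_mul, ih, gaussSum_frob, ← pow_mul, ← pow_mul]

lemma apply_pow_mul_gaussSum_pow {R R' : Type*} [CommRing R] [Fintype R] [CommRing R'] {q : ℕ}
    [Fact q.Prime] [CharP R' q] (hq : IsUnit (q : R)) {χ : MulChar R R'} {k : ℕ}
    (hχ : χ ^ q ^ k = χ) (ψ : AddChar R R') :
    χ q ^ k * gaussSum χ ψ ^ q ^ k = gaussSum χ ψ := by
  rw [gaussSum_pow_prime_pow, hχ, AddChar.pow_mulShift]
  simpa using gaussSum_mulShift χ ψ (hq.unit ^ k)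

section CubicCharacter

variable {F E : Type*} [Field F] [Field E]

lemma mulChar_apply_pow_three {R R' : Type*} [CommMonoid R] [CommMonoidWithZero R']
    {χ : MulChar R R'} (h : orderOf χ = 3) {x : R} (hx : IsUnit x) : χ x ^ 3 = 1 := by
  rw [← MulChar.pow_apply' χ three_ne_zero, ← h, pow_orderOf_eq_one, MulChar.one_apply hx]

lemma mulChar_ne_one_of_orderOf_eq_three {R R' : Type*} [CommMonoid R] [CommMonoidWithZero R']
    {χ : MulChar R R'} (h : orderOf χ = 3) : χ ≠ 1 := by
  rintro rfl
  simp at h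

lemma mulChar_apply_neg_one_of_orderOf_eq_three {R R' : Type*} [CommRing R]
    [CommMonoidWithZero R'] {χ : MulChar R R'} (h : orderOf χ = 3) : χ (-1) = 1 := by
  have h3 : χ (-1) ^ 3 = 1 := mulChar_apply_pow_three h (by simp)
  have h2 : χ (-1) ^ 2 = 1 := by rw [← map_pow, neg_one_sq, map_one]
  rwa [pow_succ, h2, one_mul] at h3

variable [Fintype F]

lemma gaussSum_pow_three {χ : MulChar F E} (h : orderOf χ = 3) {ψ : AddChar F E}
    (hψ : ψ.IsPrimitive) : gaussSum χ ψ ^ 3 = Fintype.card F * jacobiSum χ χ := by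
  have := gaussSum_pow_eq_prod_jacobiSum (χ := χ) (by lia) hψ
  simpa [h, mulChar_apply_neg_one_of_orderOf_eq_three h] using this

lemma isUnit_natCast_of_card_ne_zero {E : Type*} [AddMonoidWithOne E] {q : ℕ} [Fact q.Prime]
    [CharP E q] (hcard : (Fintype.card F : E) ≠ 0) : IsUnit (q : F) := by
  rw [isUnit_iff_ne_zero]
  intro h
  have horder : addOrderOf (1 : F) = q := addOrderOf_eq_prime (by simpa using h) one_ne_zero
  exact hcard ((CharP.cast_eq_zero_iff E q _).2 (horder ▸ addOrderOf_dvd_card))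

/-- The exponent treats `q ≡ 1` and `q ≡ 2` modulo `3` alike: `3 ∣ q ^ 2 - 1`, so `χ` is fixed by
the square of Frobenius. -/
lemma card_mul_jacobiSum_pow {q : ℕ} [hq : Fact q.Prime] [CharP E q] (hq3 : q ≠ 3)
    (hcard : (Fintype.card F : E) ≠ 0) {χ : MulChar F E} (h : orderOf χ = 3) {ψ : AddChar F E}
    (hψ : ψ.IsPrimitive) :
    (Fintype.card F * jacobiSum χ χ) ^ ((q ^ 2 - 1) / 3) = χ q := by
  have hqF : IsUnit (q : F) := isUnit_natCast_of_card_ne_zero hcard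
  have hdvd := three_dvd_sq_sub_one hq.1 hq3
  have hsplit : q ^ 2 = q ^ 2 - 1 + 1 := (Nat.sub_add_cancel (pow_pos hq.1.pos 2)).symm
  have hχ : χ ^ q ^ 2 = χ := by
    rw [hsplit, pow_succ, orderOf_dvd_iff_pow_eq_one.1 (h ▸ hdvd), one_mul]
  have hg : χ q ^ 2 * gaussSum χ ψ ^ (q ^ 2 - 1) = 1 := by
    refine mul_right_cancel₀ (gaussSum_ne_zero_of_nontrivial hcard
      (mulChar_ne_one_of_orderOf_eq_three h) hψ) ?_
    rw [one_mul, mul_assoc, ← pow_succ, ← hsplit, apply_pow_mul_gaussSum_pow hqF hχ]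
  rw [← gaussSum_pow_three h hψ, ← pow_mul, Nat.mul_div_cancel' hdvd]
  linear_combination χ q * hg - gaussSum χ ψ ^ (q ^ 2 - 1) * mulChar_apply_pow_three h hqF

lemma orderOf_ringHomComp {R R' R'' : Type*} [CommMonoid R] [CommRing R'] [IsDomain R']
    [CommRing R''] (f : R' →+* R'') (χ : MulChar R R') (hf : (orderOf χ : R'') ≠ 0) :
    orderOf (χ.ringHomComp f) = orderOf χ := by
  refine orderOf_eq_orderOf_iff.2 fun m ↦ ?_
  rw [MulChar.ringHomComp_pow]
  refine ⟨fun h ↦ MulChar.ext fun x ↦ ?_, fun h ↦ by rw [h, MulChar.ringHomComp_one]⟩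
  rw [MulChar.one_apply x.isUnit]
  refine eq_one_of_pow_eq_one_of_map_eq_one f hf ?_ ?_
  · rw [← MulChar.pow_apply_coe, pow_right_comm, pow_orderOf_eq_one, one_pow,
      MulChar.one_apply x.isUnit]
  · rw [← MulChar.ringHomComp_apply, h, MulChar.one_apply x.isUnit]

lemma jacobiSum_inv_pow {q : ℕ} [hq : Fact q.Prime] [CharP E q] (hq3 : q ≠ 3)
    (hcard : (Fintype.card F : E) ≠ 0) {χ : MulChar F E} (h : orderOf χ = 3) :
    jacobiSum χ⁻¹ χ⁻¹ ^ ((q ^ 2 - 1) / 3) = χ q * jacobiSum χ χ ^ ((q ^ 2 - 1) / 3) := by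
  have hchar : ringChar E ≠ ringChar F := by
    intro heq
    apply hcard
    rw [ringChar.spec, heq, ← ringChar.spec, FiniteField.cast_card_eq_zero]
  let ψ := AddChar.FiniteField.primitiveChar F E hchar
  let ι := algebraMap E (CyclotomicField ψ.n E)
  have : CharP (CyclotomicField ψ.n E) q := charP_of_injective_algebraMap ι.injective q
  have hcard' : (Fintype.card F : CyclotomicField ψ.n E) ≠ 0 := by
    rwa [← map_natCast ι, Ne, map_eq_zero_iff ι ι.injective]
  have hord : orderOf (χ.ringHomComp ι) = 3 := by
    rw [orderOf_ringHomComp ι χ ?_, h]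
    rw [h]
    exact natCast_ne_zero_of_prime_ne _ hq.1 Nat.prime_three hq3
  have hJ := card_mul_jacobiSum_pow hq3 hcard' hord ψ.prim
  have hJ' := card_mul_jacobiSum_pow hq3 hcard' ((orderOf_inv _).trans hord) ψ.prim
  have hχq := mulChar_apply_pow_three hord (isUnit_natCast_of_card_ne_zero hcard')
  rw [MulChar.inv_apply_eq_inv', mul_pow] at hJ'
  rw [mul_pow] at hJ
  apply ι.injective
  rw [map_mul, map_pow, map_pow, ← jacobiSum_ringHomComp, ← jacobiSum_ringHomComp,
    ← MulChar.ringHomComp_inv, ← MulChar.ringHomComp_apply]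
  apply mul_left_cancel₀ (pow_ne_zero ((q ^ 2 - 1) / 3) hcard')
  rw [hJ', mul_left_comm, hJ, inv_eq_iff_eq_inv, ← sq]
  exact (inv_eq_of_mul_eq_one_left (by rw [← hχq]; ring)).symm

end CubicCharacter

end GaussSum

section EisensteinIntegers

open QuadraticAlgebra

lemma dvd_of_dvd_im_mul_star {a b P : ℤ} (hP : Prime P) {π α : QuadraticAlgebra ℤ a b}
    (hπ : norm π = P) (hα : P ∣ norm α) (him : P ∣ (α * star π).im) : π ∣ α := by
  have hre : P ∣ (α * star π).re := by
    have hnorm : P ∣ norm (α * star π) := by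
      rw [map_mul]
      exact hα.mul_right _
    obtain ⟨y, hy⟩ := him
    obtain ⟨k, hk⟩ := hnorm
    rw [norm_def] at hk
    refine hP.dvd_of_dvd_pow (n := 2)
      ⟨k - b * (α * star π).re * y + a * (α * star π).im * y, ?_⟩
    linear_combination hk - (b * (α * star π).re - a * (α * star π).im) * hy
  obtain ⟨x, hx⟩ := hre
  obtain ⟨y, hy⟩ := him
  refine ⟨⟨x, y⟩, ?_⟩
  have hcancel : (P : QuadraticAlgebra ℤ a b) * α = P * (π * ⟨x, y⟩) := by
    have hxy : α * star π = P * ⟨x, y⟩ := by ext <;> simp [hx, hy]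
    have hππ : (P : QuadraticAlgebra ℤ a b) = π * star π :=
      hπ ▸ algebraMap_norm_eq_mul_star π
    linear_combination π * hxy + α * hππ
  ext
  · exact mul_left_cancel₀ hP.ne_zero (by simpa using congrArg re hcancel)
  · exact mul_left_cancel₀ hP.ne_zero (by simpa using congrArg im hcancel)

lemma dvd_or_star_dvd {a b P : ℤ} (hP : Prime P) {π α : QuadraticAlgebra ℤ a b}
    (hπ : norm π = P) (hα : P ∣ norm α) : π ∣ α ∨ star π ∣ α := by
  have him : P ∣ (α * star π).im * (α * star (star π)).im := by
    obtain ⟨k, hk⟩ := hα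
    rw [norm_def] at hπ hk
    refine ⟨α.im ^ 2 - π.im ^ 2 * k, ?_⟩
    simp only [im_mul, re_star, im_star]
    linear_combination α.im ^ 2 * hπ - π.im ^ 2 * hk
  exact (hP.dvd_or_dvd him).imp (dvd_of_dvd_im_mul_star hP hπ hα)
    (dvd_of_dvd_im_mul_star hP (by rw [QuadraticAlgebra.norm_star, hπ]) hα)

/-- The ring `ℤ[ω]` of Eisenstein integers, where `ω ^ 2 = -1 - ω`. -/
abbrev EisensteinInt := QuadraticAlgebra ℤ (-1) (-1)

namespace EisensteinInt

lemma norm_eq (z : EisensteinInt) : norm z = z.re ^ 2 - z.re * z.im + z.im ^ 2 := by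
  rw [norm_def]
  ring

lemma norm_pos {z : EisensteinInt} (hz : z ≠ 0) : 0 < norm z := by
  rw [norm_eq]
  by_contra h
  have him : z.im = 0 := by nlinarith [sq_nonneg (2 * z.re - z.im), sq_nonneg z.im]
  have hre : z.re = 0 := by
    rw [him] at h
    nlinarith
  exact hz (by ext <;> simp [him, hre])

instance : IsDomain EisensteinInt := by
  have : NoZeroDivisors EisensteinInt := ⟨fun {a b} h ↦ by
    by_contra! hab
    have hmul := mul_pos (norm_pos hab.1) (norm_pos hab.2)
    simp [← map_mul, h] at hmul⟩
  exact NoZeroDivisors.to_isDomain _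

lemma mul_star_self (z : EisensteinInt) : z * star z = ((norm z : ℤ) : EisensteinInt) :=
  (algebraMap_norm_eq_mul_star z).symm

lemma mul_star_of_pow_three_eq_one {z : EisensteinInt} (h : z ^ 3 = 1) : z * star z = 1 := by
  have hz : z ≠ 0 := by
    rintro rfl
    simp at h
  have hnorm : norm z ^ 3 = 1 := by rw [← map_pow, h, map_one]
  rw [mul_star_self, (pow_eq_one_iff_of_nonneg (norm_pos hz).le three_ne_zero).1 hnorm,
    Int.cast_one]

lemma isPrimitiveRoot_omega : IsPrimitiveRoot (ω : EisensteinInt) 3 := by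
  have : Fact (Nat.Prime 3) := ⟨Nat.prime_three⟩
  have horder : orderOf (ω : EisensteinInt) = 3 :=
    orderOf_eq_prime (by ext <;> simp [pow_succ])
      fun h ↦ by simpa using congrArg QuadraticAlgebra.re h
  exact horder ▸ IsPrimitiveRoot.orderOf _

lemma omega_relation : (ω : EisensteinInt) ^ 2 + ω + 1 = 0 := by
  ext <;> simp [pow_two]

lemma map_omega_relation {E : Type*} [CommRing E] (φ : EisensteinInt →+* E) :
    φ ω ^ 2 + φ ω + 1 = 0 := by
  simpa using congrArg φ omega_relation

lemma map_omega_pow_sq {E : Type*} [CommRing E] (φ : EisensteinInt →+* E) {q : ℕ}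
    (hq : q.Prime) (hq3 : q ≠ 3) : φ ω ^ q ^ 2 = φ ω := by
  obtain ⟨m, hm⟩ := three_dvd_sq_sub_one hq hq3
  rw [show q ^ 2 = 3 * m + 1 by have := pow_pos hq.pos 2; lia, pow_succ, pow_mul, ← map_pow,
    isPrimitiveRoot_omega.pow_eq_one, map_one, one_pow, one_mul]

lemma map_eq {E : Type*} [CommRing E] (φ : EisensteinInt →+* E) (z : EisensteinInt) :
    φ z = z.re + z.im * φ ω := by
  conv_lhs => rw [show z = (z.re : EisensteinInt) + (z.im : EisensteinInt) * ω by ext <;> simp]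
  rw [map_add, map_mul, map_intCast, map_intCast]

lemma map_star_eq {E : Type*} [CommRing E] (φ : EisensteinInt →+* E) (z : EisensteinInt) :
    φ (star z) = z.re - z.im - z.im * φ ω := by
  rw [map_eq, re_star, im_star]
  push_cast
  ring

lemma nonempty_ringHom_of_isAlgClosed (E : Type*) [Field E] [IsAlgClosed E] :
    Nonempty (EisensteinInt →+* E) := by
  obtain ⟨w, hw⟩ := IsAlgClosed.exists_root
    (Polynomial.C (1 : E) * Polynomial.X ^ 2 + Polynomial.C 1 * Polynomial.X + Polynomial.C 1)
    (by rw [Polynomial.degree_quadratic one_ne_zero]; norm_num)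
  simp only [Polynomial.IsRoot, map_one, one_mul, Polynomial.eval_add, Polynomial.eval_pow,
    Polynomial.eval_X, Polynomial.eval_one] at hw
  refine ⟨(QuadraticAlgebra.lift (R := ℤ) ⟨w, ?_⟩).toRingHom⟩
  simp only [neg_smul, one_smul]
  linear_combination hw

lemma ringHomComp_star {R : Type*} [CommMonoid R] {χ : MulChar R EisensteinInt}
    (h : orderOf χ = 3) : χ.ringHomComp (starRingEnd EisensteinInt) = χ⁻¹ := by
  refine eq_inv_of_mul_eq_one_right (MulChar.ext fun x ↦ ?_)
  rw [MulChar.mul_apply, MulChar.one_apply x.isUnit, MulChar.ringHomComp_apply,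
    starRingEnd_apply, mul_star_of_pow_three_eq_one (mulChar_apply_pow_three h x.isUnit)]

lemma norm_jacobiSum {F : Type*} [Field F] [Fintype F] {χ : MulChar F EisensteinInt}
    (h : orderOf χ = 3) : norm (jacobiSum χ χ) = Fintype.card F := by
  let ι := algebraMap EisensteinInt (FractionRing EisensteinInt)
  have hι : Function.Injective ι := IsFractionRing.injective _ _
  have : CharZero (FractionRing EisensteinInt) := charZero_of_injective_algebraMap hι
  have hchar : ringChar (FractionRing EisensteinInt) ≠ ringChar F := by
    rw [ringChar.eq_zero]
    exact (CharP.ringChar_ne_zero_of_finite F).symm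
  have hχ := (MulChar.ringHomComp_ne_one_iff hι).2 (mulChar_ne_one_of_orderOf_eq_three h)
  have hχχ : χ.ringHomComp ι * χ.ringHomComp ι ≠ 1 := by
    rw [← MulChar.ringHomComp_mul, MulChar.ringHomComp_ne_one_iff hι, ← sq]
    exact pow_ne_one_of_lt_orderOf two_ne_zero (by lia)
  have hJ := jacobiSum_mul_jacobiSum_inv hchar hχ hχ hχχ
  rw [MulChar.ringHomComp_inv, jacobiSum_ringHomComp, jacobiSum_ringHomComp, ← map_mul,
    ← ringHomComp_star h, jacobiSum_ringHomComp, starRingEnd_apply, mul_star_self,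
    map_intCast] at hJ
  exact_mod_cast hJ

/-- An Eisenstein integer is primary if it is congruent modulo `3` to a rational integer prime
to `3` (up to sign, the classical condition `α ≡ 2`); this is where cubic reciprocity holds
without a correcting unit. -/
def IsPrimary (α : EisensteinInt) : Prop :=
  3 ∣ α.im ∧ ¬ 3 ∣ α.re

namespace IsPrimary

variable {α β : EisensteinInt}

lemma not_three_dvd_norm (h : IsPrimary α) : ¬ 3 ∣ norm α := by
  obtain ⟨⟨k, hk⟩, hre⟩ := h
  rintro ⟨l, hl⟩
  rw [norm_eq, hk] at hl
  exact hre (Int.prime_three.dvd_of_dvd_pow (n := 2)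
    ⟨l + α.re * k - 3 * k ^ 2, by linear_combination hl⟩)

lemma of_mul_right (h : IsPrimary α) (hmul : IsPrimary (α * β)) : IsPrimary β := by
  obtain ⟨⟨k, hk⟩, hre⟩ := h
  obtain ⟨⟨l, hl⟩, hmul_re⟩ := hmul
  simp only [im_mul, re_mul, hk] at hl hmul_re
  constructor
  · exact (Int.prime_three.dvd_or_dvd
      ⟨l - k * β.re + k * β.im, by linear_combination hl⟩).resolve_left hre
  · rintro ⟨m, hm⟩
    exact hmul_re ⟨α.re * m - k * β.im, by rw [hm]; ring⟩

lemma star (h : IsPrimary α) : IsPrimary (star α) := by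
  obtain ⟨him, hre⟩ := h
  simp only [IsPrimary, re_star, im_star]
  omega

lemma ne_zero (h : IsPrimary α) : α ≠ 0 := by
  rintro rfl
  exact h.2 (dvd_zero 3)

lemma eq_intCast_of_norm_eq_one (h : IsPrimary α) (hnorm : norm α = 1) : ∃ n : ℤ, α = n := by
  obtain ⟨⟨k, hk⟩, -⟩ := h
  rw [norm_eq, hk] at hnorm
  have hk0 : k = 0 := by nlinarith [sq_nonneg (2 * α.re - 3 * k), sq_nonneg k]
  exact ⟨α.re, by ext <;> simp [hk, hk0]⟩

end IsPrimary

lemma isPrimary_jacobiSum {F : Type*} [Field F] [Fintype F] {χ : MulChar F EisensteinInt}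
    (h : orderOf χ = 3) : IsPrimary (jacobiSum χ χ) := by
  have h3 : χ ^ 3 = 1 := h ▸ pow_orderOf_eq_one χ
  obtain ⟨z, -, hz⟩ := exists_jacobiSum_eq_neg_one_add (by norm_num : 2 < 3) h3 h3
    (h ▸ χ.orderOf_dvd_card_sub_one) isPrimitiveRoot_omega
  have hω : ((ω : EisensteinInt) - 1) ^ 2 = ⟨0, -3⟩ := by ext <;> simp [pow_two]
  rw [hω] at hz
  constructor
  · refine ⟨z.im - z.re, ?_⟩
    rw [hz]
    simp only [im_add, im_neg, im_one, im_mul]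
    ring
  · simp [hz]

/-- `χ` has the properties of the cubic residue symbol `n ↦ (n / α)₃` on the rational integers.
Reciprocity is Euler's criterion for `star α / α` at every place `φ` above `q`, raised to the
power `q ± 1` so that `q ≡ 1` and `q ≡ 2` modulo `3` have a common shape. -/
structure IsCubicResidueCharacter (α : EisensteinInt) (χ : ℤ →* EisensteinInt) : Prop where
  map_add_norm_mul : ∀ m k, χ (m + norm α * k) = χ m
  pow_three : ∀ {n}, IsCoprime n (norm α) → χ n ^ 3 = 1
  reciprocity : ∀ (q : ℕ) [Fact q.Prime], IsCoprime (q : ℤ) (3 * norm α) →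
    ∀ φ : EisensteinInt →+* AlgebraicClosure (ZMod q),
      φ (star α) ^ ((q ^ 2 - 1) / 3) = φ (χ q) * φ α ^ ((q ^ 2 - 1) / 3)

namespace IsCubicResidueCharacter

variable {α β : EisensteinInt} {χ χ' : ℤ →* EisensteinInt}

lemma star (h : IsCubicResidueCharacter α χ) :
    IsCubicResidueCharacter (star α) ((starRingEnd EisensteinInt).toMonoidHom.comp χ) where
  map_add_norm_mul m k := by simp [h.map_add_norm_mul]
  pow_three {n} hn := by
    rw [QuadraticAlgebra.norm_star] at hn
    simp [← map_pow, h.pow_three hn]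
  reciprocity q _ hq φ := by
    rw [QuadraticAlgebra.norm_star] at hq
    simpa [starRingEnd_apply] using h.reciprocity q hq (φ.comp (starRingEnd EisensteinInt))

lemma mul (h : IsCubicResidueCharacter α χ) (h' : IsCubicResidueCharacter β χ') :
    IsCubicResidueCharacter (α * β) (χ * χ') where
  map_add_norm_mul m k := by
    rw [map_mul, MonoidHom.mul_apply, MonoidHom.mul_apply, mul_assoc, h.map_add_norm_mul,
      mul_left_comm, h'.map_add_norm_mul]
  pow_three {n} hn := by
    rw [map_mul] at hn
    rw [MonoidHom.mul_apply, mul_pow, h.pow_three hn.of_mul_right_left,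
      h'.pow_three hn.of_mul_right_right, one_mul]
  reciprocity q _ hq φ := by
    rw [map_mul] at hq
    have hqα := h.reciprocity q (hq.of_isCoprime_of_dvd_right ⟨norm β, by ring⟩) φ
    have hqβ := h'.reciprocity q (hq.of_isCoprime_of_dvd_right ⟨norm α, by ring⟩) φ
    simp only [star_mul, map_mul, mul_pow, MonoidHom.mul_apply]
    rw [hqα, hqβ]
    ring

lemma of_intCast (n : ℤ) : IsCubicResidueCharacter n 1 where
  map_add_norm_mul _ _ := rfl
  pow_three _ := one_pow 3
  reciprocity q _ _ φ := by
    rw [show Star.star (n : EisensteinInt) = n by ext <;> simp, MonoidHom.one_apply, map_one,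
      one_mul]

lemma of_jacobiSum {P : ℕ} [hP : Fact P.Prime] {χ : MulChar (ZMod P) EisensteinInt}
    (h : orderOf χ = 3) : IsCubicResidueCharacter (jacobiSum χ χ)
      (χ.toMonoidHom.comp (Int.castRingHom (ZMod P)).toMonoidHom) where
  map_add_norm_mul m k := by simp [norm_jacobiSum h]
  pow_three {n} hn := by
    rw [norm_jacobiSum h, ZMod.card] at hn
    exact mulChar_apply_pow_three h ((ZMod.coe_int_isUnit_iff_isCoprime n P).2 hn.symm)
  reciprocity q hq hqP φ := by
    rw [norm_jacobiSum h, ZMod.card] at hqP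
    have hq3 : q ≠ 3 := ne_three_of_isCoprime hqP
    have hqP : q ≠ P := by
      rintro rfl
      simpa [Nat.isCoprime_iff_coprime, hq.1.ne_one] using hqP.of_mul_right_right
    have hord : orderOf (χ.ringHomComp φ) = 3 := by
      rw [orderOf_ringHomComp φ χ ?_, h]
      rw [h]
      exact natCast_ne_zero_of_prime_ne _ hq.1 Nat.prime_three hq3
    have hcard : (Fintype.card (ZMod P) : AlgebraicClosure (ZMod q)) ≠ 0 := by
      rw [ZMod.card]
      exact natCast_ne_zero_of_prime_ne _ hq.1 hP.1 hqP
    have := jacobiSum_inv_pow hq3 hcard hord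
    rw [MulChar.ringHomComp_inv, ← ringHomComp_star h, jacobiSum_ringHomComp,
      jacobiSum_ringHomComp, jacobiSum_ringHomComp] at this
    simpa [starRingEnd_apply] using this

end IsCubicResidueCharacter

lemma natCast_dvd_of_dvd_norm {P : ℕ} (hP : P.Prime) (hP3 : P % 3 = 2) {α : EisensteinInt}
    (h : (P : ℤ) ∣ norm α) : (P : EisensteinInt) ∣ α := by
  have : Fact P.Prime := ⟨hP⟩
  have hnorm : (α.re : ZMod P) ^ 2 - α.re * α.im + α.im ^ 2 = 0 := by
    rw [norm_eq] at h
    exact_mod_cast (ZMod.intCast_zmod_eq_zero_iff_dvd _ P).2 h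
  have him : (α.im : ZMod P) = 0 := by
    by_contra him
    have hu : (-α.re / α.im : ZMod P) ^ 2 + -α.re / α.im + 1 = 0 := by
      field_simp
      linear_combination hnorm
    have horder : orderOf (-α.re / α.im : ZMod P) = 3 := by
      have : Fact (Nat.Prime 3) := ⟨Nat.prime_three⟩
      refine orderOf_eq_prime ?_ fun h1 ↦ ?_
      · linear_combination (-α.re / α.im - 1 : ZMod P) * hu
      · refine natCast_ne_zero_of_prime_ne (ZMod P) hP Nat.prime_three (by lia) ?_
        rw [h1] at hu
        push_cast
        linear_combination hu
    have := horder ▸ ZMod.orderOf_dvd_card_sub_one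
      (p := P) (a := -α.re / α.im) fun h0 ↦ by simp [h0] at hu
    lia
  have hre : (α.re : ZMod P) = 0 := by simpa [him] using hnorm
  obtain ⟨x, hx⟩ := (ZMod.intCast_zmod_eq_zero_iff_dvd _ P).1 hre
  obtain ⟨y, hy⟩ := (ZMod.intCast_zmod_eq_zero_iff_dvd _ P).1 him
  exact ⟨⟨x, y⟩, by ext <;> simp [hx, hy]⟩

lemma IsPrimary.exists_dvd_of_prime_dvd_norm {α : EisensteinInt} (hα : IsPrimary α) {P : ℕ}
    (hP : P.Prime) (hPα : (P : ℤ) ∣ norm α) :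
    ∃ π, IsPrimary π ∧ 1 < norm π ∧ π ∣ α ∧ ∃ χ, IsCubicResidueCharacter π χ := by
  have : Fact P.Prime := ⟨hP⟩
  have hP1 : (1 : ℤ) < P := by exact_mod_cast hP.one_lt
  have hP3 : ¬ 3 ∣ P := fun h ↦ hα.not_three_dvd_norm ((Int.natCast_dvd_natCast.2 h).trans hPα)
  obtain hP3 | hP3 : P % 3 = 1 ∨ P % 3 = 2 := by lia
  · obtain ⟨χ, hχ⟩ := MulChar.exists_mulChar_orderOf (ZMod P) (n := 3)
      (by rw [ZMod.card]; lia) isPrimitiveRoot_omega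
    have hJ := isPrimary_jacobiSum hχ
    have hnorm : norm (jacobiSum χ χ) = P := by rw [norm_jacobiSum hχ, ZMod.card]
    have hchar := IsCubicResidueCharacter.of_jacobiSum hχ
    obtain h | h := dvd_or_star_dvd (Nat.prime_iff_prime_int.1 hP) hnorm hPα
    · exact ⟨_, hJ, by rwa [hnorm], h, _, hchar⟩
    · exact ⟨_, hJ.star, by rwa [QuadraticAlgebra.norm_star, hnorm], h, _, hchar.star⟩
  · refine ⟨((P : ℤ) : EisensteinInt), ⟨by simp, by rw [re_intCast, Int.cast_id]; lia⟩,
      ?_, ?_, _, .of_intCast P⟩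
    · rw [norm_intCast, Int.cast_id]
      nlinarith
    · exact_mod_cast natCast_dvd_of_dvd_norm hP hP3 hPα

/-- Factoring off primary divisors of prime norm leaves a primary integer of norm `1`, hence a
rational integer. -/
lemma IsPrimary.exists_isCubicResidueCharacter {α : EisensteinInt} (hα : IsPrimary α) :
    ∃ χ, IsCubicResidueCharacter α χ := by
  induction hn : (norm α).natAbs using Nat.strong_induction_on generalizing α with
  | _ n ih =>
    by_cases h1 : n = 1
    · obtain ⟨m, rfl⟩ := hα.eq_intCast_of_norm_eq_one (by have := norm_pos hα.ne_zero; lia)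
      exact ⟨1, .of_intCast m⟩
    obtain ⟨P, hP, hPn⟩ := Nat.exists_prime_and_dvd h1
    obtain ⟨π, hπ, hπ1, ⟨β, rfl⟩, χ, hχ⟩ := hα.exists_dvd_of_prime_dvd_norm hP
      (Int.natCast_dvd.2 (hn ▸ hPn))
    have hβ := hπ.of_mul_right hα
    have hβ0 := norm_pos hβ.ne_zero
    have hlt : (norm β).natAbs < n := by
      rw [← hn, map_mul, Int.natAbs_mul]
      exact lt_mul_left (by lia) (by lia)
    obtain ⟨χ', hχ'⟩ := ih _ hlt hβ rfl
    exact ⟨_, hχ.mul hχ'⟩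

namespace IsCubicResidueCharacter

variable {α : EisensteinInt} {χ : ℤ →* EisensteinInt}

lemma map_prime_eq_one_of_dvd_im (h : IsCubicResidueCharacter α χ) {q : ℕ} [hq : Fact q.Prime]
    (hcop : IsCoprime (q : ℤ) (3 * norm α)) (him : (q : ℤ) ∣ α.im) : χ q = 1 := by
  obtain ⟨φ⟩ := nonempty_ringHom_of_isAlgClosed (AlgebraicClosure (ZMod q))
  have hstar : φ (Star.star α) = φ α := by
    have him0 := (CharP.intCast_eq_zero_iff (AlgebraicClosure (ZMod q)) q α.im).2 him
    rw [map_eq φ α, map_star_eq, him0]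
    ring
  have hα : φ α ≠ 0 := by
    intro h0
    have hnorm := congrArg φ (mul_star_self α)
    rw [map_mul, h0, zero_mul, map_intCast, eq_comm, CharP.intCast_eq_zero_iff _ q] at hnorm
    exact (Nat.prime_iff_prime_int.1 hq.1).not_isUnit
      (hcop.of_mul_right_right.isUnit_of_dvd' dvd_rfl hnorm)
  have h3 : ((3 : ℕ) : AlgebraicClosure (ZMod q)) ≠ 0 :=
    natCast_ne_zero_of_prime_ne _ hq.1 Nat.prime_three (ne_three_of_isCoprime hcop)
  refine eq_one_of_pow_eq_one_of_map_eq_one φ h3 (h.pow_three hcop.of_mul_right_right) ?_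
  have hrec := h.reciprocity q hcop φ
  rw [hstar] at hrec
  exact (mul_eq_right₀ (pow_ne_zero _ hα)).1 hrec.symm

lemma map_neg (h : IsCubicResidueCharacter α χ) (n : ℤ) : χ (-n) = χ n := by
  have h3 : χ (-1) ^ 3 = 1 := h.pow_three isCoprime_one_left.neg_left
  have h2 : χ (-1) ^ 2 = 1 := by rw [← map_pow, neg_one_sq, map_one]
  have h1 : χ (-1) = 1 := by rwa [pow_succ, h2, one_mul] at h3
  rw [neg_eq_neg_one_mul n, map_mul, h1, one_mul]

lemma map_eq_one_of_dvd_im (h : IsCubicResidueCharacter α χ) {m : ℤ}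
    (hcop : IsCoprime m (3 * norm α)) (him : m ∣ α.im) : χ m = 1 := by
  have hnat (k : ℕ) (hcop : IsCoprime (k : ℤ) (3 * norm α)) (him : (k : ℤ) ∣ α.im) :
      χ k = 1 := by
    induction k using induction_on_primes with
    | zero => exact absurd (isCoprime_zero_left.1 hcop) (by simp [Int.isUnit_iff])
    | one => simp
    | prime_mul q k hq ih =>
      have : Fact q.Prime := ⟨hq⟩
      push_cast at hcop him ⊢
      rw [map_mul, h.map_prime_eq_one_of_dvd_im hcop.of_mul_left_left (dvd_of_mul_right_dvd him),
        ih hcop.of_mul_left_right (dvd_of_mul_left_dvd him), one_mul]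
  obtain hm | hm := m.natAbs_eq <;> rw [hm] at hcop him ⊢
  · exact hnat _ hcop him
  · rw [h.map_neg]
    exact hnat _ (IsCoprime.neg_left_iff _ _ |>.1 hcop) (neg_dvd.1 him)

lemma map_two_ne_one (h : IsCubicResidueCharacter α χ) (hnorm : ¬ 2 ∣ norm α)
    (him : ¬ 2 ∣ α.im) : χ 2 ≠ 1 := by
  intro h2
  obtain ⟨φ⟩ := nonempty_ringHom_of_isAlgClosed (AlgebraicClosure (ZMod 2))
  have hcop : IsCoprime ((2 : ℕ) : ℤ) (3 * norm α) :=
    (Nat.prime_iff_prime_int.1 Nat.prime_two).coprime_iff_not_dvd.2 (by lia)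
  have hrec := h.reciprocity 2 hcop φ
  have hchar : (2 : AlgebraicClosure (ZMod 2)) = 0 := CharTwo.two_eq_zero
  refine him ((CharP.intCast_eq_zero_iff (AlgebraicClosure (ZMod 2)) 2 α.im).1 ?_)
  rw [Nat.cast_two, h2, map_one, one_mul, map_eq φ α, map_star_eq] at hrec
  norm_num only [pow_one] at hrec
  linear_combination -hrec - α.im * φ ω * hchar

end IsCubicResidueCharacter

/-- Modulo `norm α = n - A ^ 3 * Y ^ 2`, `n` is the product of a cube and of the square of
a divisor of `α.im`. -/
lemma exists_character_of_four_mul_eq {A B n X Y : ℤ}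
    (h : 4 * n = X ^ 2 + (4 * A ^ 3 + 27 * B ^ 2) * Y ^ 2) (hn : IsCoprime n (A * Y))
    (hX : ¬ 3 ∣ X) (hY : ¬ 3 ∣ Y) :
    ∃ α χ, IsCubicResidueCharacter α χ ∧ 2 * α.re = X + 3 * B * Y ∧ α.im = 3 * B * Y ∧
      norm α = n - A ^ 3 * Y ^ 2 ∧ χ n = 1 := by
  obtain ⟨t, ht⟩ : 2 ∣ X + 3 * B * Y := by
    have : 2 ∣ X ^ 2 + (3 * B * Y) ^ 2 := ⟨2 * n - (2 * A ^ 3 + 9 * B ^ 2) * Y ^ 2, by lia⟩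
    simpa [Int.even_add, Int.even_pow', ← even_iff_two_dvd] using this
  let α : EisensteinInt := ⟨t, 3 * B * Y⟩
  have hα : IsPrimary α := ⟨⟨B * Y, mul_assoc _ _ _⟩, by dsimp only [α]; lia⟩
  have hnorm : norm α = n - A ^ 3 * Y ^ 2 := by
    rw [norm_eq]
    dsimp only [α]
    linarith [show 4 * (t ^ 2 - t * (3 * B * Y) + (3 * B * Y) ^ 2) = 4 * (n - A ^ 3 * Y ^ 2) by
      linear_combination (3 * B * Y - X - 2 * t) * ht - h]
  obtain ⟨χ, hχ⟩ := hα.exists_isCubicResidueCharacter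
  have hA : IsCoprime A (norm α) := by
    rw [hnorm, show n - A ^ 3 * Y ^ 2 = n + A * -(A ^ 2 * Y ^ 2) by ring]
    exact hn.of_mul_right_left.symm.add_mul_left_right _
  have hYα : IsCoprime Y (3 * norm α) := by
    refine (Int.prime_three.coprime_iff_not_dvd.2 hY).symm.mul_right ?_
    rw [hnorm, show n - A ^ 3 * Y ^ 2 = n + Y * -(A ^ 3 * Y) by ring]
    exact hn.of_mul_right_right.symm.add_mul_left_right _
  refine ⟨α, χ, hχ, ht.symm, rfl, hnorm, ?_⟩
  have hnχ : χ n = χ A ^ 3 * χ Y ^ 2 := by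
    rw [← map_pow, ← map_pow, ← map_mul, ← hχ.map_add_norm_mul (A ^ 3 * Y ^ 2) 1, hnorm, mul_one,
      add_sub_cancel]
  rw [hnχ, hχ.pow_three hA, hχ.map_eq_one_of_dvd_im hYα (dvd_mul_left _ _), one_pow, one_mul]

end EisensteinInt

end EisensteinIntegers

section DepressedCubic

/-- `a`, `b`, `c` are the three roots of `x ^ 3 + A * x + B`, with multiplicity. -/
structure IsRootTriple {E : Type*} [CommRing E] (A B a b c : E) : Prop where
  sum : a + b + c = 0
  sum_mul : a * b + b * c + c * a = A
  mul : a * b * c = -B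

/-- The square root `(a - b) * (b - c) * (c - a)` of the discriminant of a cubic with roots
`a`, `b`, `c`. -/
def sqrtDiscr {E : Type*} [CommRing E] (a b c : E) : E :=
  (a - b) * (b - c) * (c - a)

/-- The Lagrange resolvent `a + w * b + w ^ 2 * c` of three numbers, for a cube root of unity
`w`. -/
def lagrangeResolvent {E : Type*} [CommRing E] (w a b c : E) : E :=
  a + w * b + w ^ 2 * c

lemma exists_isRootTriple {E : Type*} [Field E] [IsAlgClosed E] (A B : E) :
    ∃ a b c, IsRootTriple A B a b c := by
  let P : Cubic E := ⟨1, 0, A, B⟩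
  have hP : P.a ≠ 0 := one_ne_zero
  obtain ⟨a, b, c, h⟩ := (Cubic.splits_iff_roots_eq_three (φ := RingHom.id E) hP).1
    (IsAlgClosed.splits _)
  have hb := Cubic.b_eq_three_roots hP h
  have hc := Cubic.c_eq_three_roots hP h
  have hd := Cubic.d_eq_three_roots hP h
  simp only [P, RingHom.id_apply, one_mul] at hb hc hd
  exact ⟨a, b, c, by linear_combination hb, by linear_combination -hc, by linear_combination hd⟩

lemma sqrtDiscr_swap {E : Type*} [CommRing E] (a b c : E) : sqrtDiscr b a c = -sqrtDiscr a b c := by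
  unfold sqrtDiscr
  ring

lemma sqrtDiscr_rotate {E : Type*} [CommRing E] (a b c : E) :
    sqrtDiscr b c a = sqrtDiscr a b c := by
  unfold sqrtDiscr
  ring

lemma map_sqrtDiscr {E E' : Type*} [CommRing E] [CommRing E'] (σ : E →+* E') (a b c : E) :
    σ (sqrtDiscr a b c) = sqrtDiscr (σ a) (σ b) (σ c) := by
  simp only [sqrtDiscr, map_mul, map_sub]

lemma map_lagrangeResolvent {E E' : Type*} [CommRing E] [CommRing E'] (σ : E →+* E')
    (w a b c : E) : σ (lagrangeResolvent w a b c) = lagrangeResolvent (σ w) (σ a) (σ b) (σ c) := by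
  simp only [lagrangeResolvent, map_mul, map_add, map_pow]

namespace IsRootTriple

section CommRing

variable {E : Type*} [CommRing E] {A B a b c : E}

lemma rotate (h : IsRootTriple A B a b c) : IsRootTriple A B b c a where
  sum := by rw [← h.sum]; ring
  sum_mul := by rw [← h.sum_mul]; ring
  mul := by rw [← h.mul]; ring

lemma swap (h : IsRootTriple A B a b c) : IsRootTriple A B b a c where
  sum := by rw [← h.sum]; ring
  sum_mul := by rw [← h.sum_mul]; ring
  mul := by rw [← h.mul]; ring

lemma map (h : IsRootTriple A B a b c) {σ : E →+* E} (hA : σ A = A) (hB : σ B = B) :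
    IsRootTriple A B (σ a) (σ b) (σ c) where
  sum := by rw [← map_add, ← map_add, h.sum, map_zero]
  sum_mul := by simp only [← map_mul, ← map_add, h.sum_mul, hA]
  mul := by rw [← map_mul, ← map_mul, h.mul, map_neg, hB]

lemma cubic_eq_mul (h : IsRootTriple A B a b c) (x : E) :
    x ^ 3 + A * x + B = (x - a) * (x - b) * (x - c) := by
  linear_combination x ^ 2 * h.sum - x * h.sum_mul + h.mul

lemma sqrtDiscr_sq (h : IsRootTriple A B a b c) :
    sqrtDiscr a b c ^ 2 = -(4 * A ^ 3 + 27 * B ^ 2) := by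
  obtain ⟨hsum, rfl, hmul⟩ := h
  obtain rfl : c = -a - b := by linear_combination hsum
  obtain rfl : B = -(a * b * (-a - b)) := by rw [hmul, neg_neg]
  unfold sqrtDiscr
  ring

lemma lagrangeResolvent_eq (h : IsRootTriple A B a b c) {w : E} (hw : w ^ 2 + w + 1 = 0) :
    lagrangeResolvent w a b c = 2 * a + b + (a + 2 * b) * w := by
  unfold lagrangeResolvent
  linear_combination w ^ 2 * h.sum - (a + b) * hw

lemma lagrangeResolvent_mul (h : IsRootTriple A B a b c) {w : E} (hw : w ^ 2 + w + 1 = 0) :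
    lagrangeResolvent w a b c * lagrangeResolvent w b a c = -3 * A * w := by
  rw [h.lagrangeResolvent_eq hw, h.swap.lagrangeResolvent_eq hw, ← h.sum_mul]
  obtain rfl : c = -a - b := by linear_combination h.sum
  linear_combination (a + 2 * b) * (b + 2 * a) * hw

lemma two_mul_lagrangeResolvent_pow_three (h : IsRootTriple A B a b c) {w : E}
    (hw : w ^ 2 + w + 1 = 0) : 2 * lagrangeResolvent w a b c ^ 3 =
      -27 * B - 3 * (1 + 2 * w) * sqrtDiscr a b c := by
  rw [h.lagrangeResolvent_eq hw]
  obtain ⟨hsum, -, hmul⟩ := h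
  obtain rfl : c = -a - b := by linear_combination hsum
  obtain rfl : B = -(a * b * (-a - b)) := by rw [hmul, neg_neg]
  unfold sqrtDiscr
  linear_combination 2 * ((a + 2 * b) ^ 3 * (w - 1) + 3 * (a + 2 * b) ^ 2 * (2 * a + b)) * hw

lemma three_mul_eq_lagrangeResolvent_add (h : IsRootTriple A B a b c) {w : E}
    (hw : w ^ 2 + w + 1 = 0) :
    3 * a = lagrangeResolvent w a b c + w ^ 2 * lagrangeResolvent w b a c := by
  rw [h.lagrangeResolvent_eq hw, h.swap.lagrangeResolvent_eq hw]
  linear_combination (-2 * b - a - (b + 2 * a) * (w - 1)) * hw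

lemma sqrtDiscr_mul_eq_sum (h : IsRootTriple A B a b c) {u : ℕ → E} (h0 : u 0 = 0)
    (h1 : u 1 = -A) (h2 : u 2 = -B) (hrec : ∀ n, u (n + 3) = -A * u (n + 1) - B * u n) (n : ℕ) :
    sqrtDiscr a b c * u n =
      -(a ^ (n + 3) * (b - c) + b ^ (n + 3) * (c - a) + c ^ (n + 3) * (a - b)) := by
  have ha : a ^ 3 + A * a + B = 0 := by rw [h.cubic_eq_mul]; ring
  have hb : b ^ 3 + A * b + B = 0 := by rw [h.cubic_eq_mul]; ring
  have hc : c ^ 3 + A * c + B = 0 := by rw [h.cubic_eq_mul]; ring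
  obtain ⟨hsum, hA, hB⟩ := h
  obtain rfl : c = -a - b := by linear_combination hsum
  induction n using Nat.strong_induction_on with
  | _ n ih =>
    obtain _ | _ | _ | n := n
    · rw [h0, mul_zero]
      linear_combination (b - (-a - b)) * ha + (-a - b - a) * hb + (a - b) * hc
    · rw [zero_add, h1, ← hA]
      unfold sqrtDiscr
      ring
    · rw [zero_add, h2, ← neg_neg B, ← hB]
      unfold sqrtDiscr
      ring
    · rw [hrec]
      linear_combination -A * ih (n + 1) (by lia) - B * ih n (by lia)
        + a ^ (n + 3) * (b - (-a - b)) * ha + b ^ (n + 3) * (-a - b - a) * hb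
        + (-a - b) ^ (n + 3) * (a - b) * hc

end CommRing

section IsDomain

variable {E : Type*} [CommRing E] [IsDomain E] {A B a b c : E}

lemma eq_iff_sum_eq_zero {a' b' c' : E} (h : IsRootTriple A B a b c)
    (h' : IsRootTriple A B a' b' c') (hA : A ≠ 0) (hB : B ≠ 0) :
    a ^ 2 * a' * (b - c) + b ^ 2 * b' * (c - a) + c ^ 2 * c' * (a - b) = 0 ↔
      a' = a ∧ b' = b ∧ c' = c := by
  constructor
  · intro hsum
    have ha : a ≠ 0 := by
      rintro rfl
      exact hB (by linear_combination h.mul)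
    have hab : a * b' = a' * b := by
      apply mul_left_cancel₀ hA
      obtain rfl : c = -a - b := by linear_combination h.sum
      linear_combination hsum - (a * b' - a' * b) * h.sum_mul - (a + b) ^ 2 * (a - b) * h'.sum
    have hac : a * c' = a' * c := by linear_combination a * h'.sum - a' * h.sum - hab
    have hsq : a' ^ 2 = a ^ 2 := by
      apply mul_left_cancel₀ hA
      linear_combination a ^ 2 * h'.sum_mul - a' ^ 2 * h.sum_mul - (a * a' + a * c') * hab
        - (a * a' + a' * b) * hac
    have hcube : a' ^ 3 = a ^ 3 := by
      apply mul_left_cancel₀ hB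
      linear_combination a' ^ 3 * h.mul - a ^ 3 * h'.mul + a ^ 2 * a' * c' * hab
        + a * a' ^ 2 * b * hac
    have haa : a' = a := by
      apply mul_left_cancel₀ (pow_ne_zero 2 ha)
      linear_combination hcube - a' * hsq
    rw [haa] at hab hac
    exact ⟨haa, mul_left_cancel₀ ha hab, mul_left_cancel₀ ha hac⟩
  · rintro ⟨rfl, rfl, rfl⟩
    linear_combination -((a' - b') * (b' - c') * (c' - a')) * h.sum

lemma lagrangeResolvent_mul_ne_zero (h : IsRootTriple A B a b c) {w : E}
    (hw : w ^ 2 + w + 1 = 0) (hA : A ≠ 0) (h3 : (3 : E) ≠ 0) :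
    lagrangeResolvent w a b c * lagrangeResolvent w b a c ≠ 0 := by
  have hw0 : w ≠ 0 := by
    rintro rfl
    simp at hw
  rw [h.lagrangeResolvent_mul hw, neg_mul, neg_mul, neg_ne_zero]
  exact mul_ne_zero (mul_ne_zero h3 hA) hw0

lemma map_eq_of_map_map_eq (h : IsRootTriple A B a b c) {σ : E →+* E} (hA : σ A = A)
    (hB : σ B = B) (hσa : σ (σ a) = a) (hV : σ (sqrtDiscr a b c) = sqrtDiscr a b c)
    (hV0 : sqrtDiscr a b c ≠ 0) (h2 : (2 : E) ≠ 0) : σ a = a := by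
  have hσ := h.map hA hB
  have hne : σ (sqrtDiscr a b c) ≠ -sqrtDiscr a b c := by
    rw [hV, Ne, eq_neg_iff_add_eq_zero, ← two_mul]
    exact mul_ne_zero h2 hV0
  have hroot : (σ a - a) * (σ a - b) * (σ a - c) = 0 := by
    rw [← h.cubic_eq_mul, hσ.cubic_eq_mul, sub_self, zero_mul, zero_mul]
  obtain (hroot | hroot) | hroot := by simpa only [mul_eq_zero, sub_eq_zero] using hroot
  · exact hroot
  · rw [hroot] at hσa
    have hσc : σ c = c := by linear_combination hσ.sum - h.sum - hroot - hσa
    exact absurd (by rw [map_sqrtDiscr, hroot, hσa, hσc, sqrtDiscr_swap]) hne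
  · rw [hroot] at hσa
    have hσb : σ b = b := by linear_combination hσ.sum - h.sum - hroot - hσa
    exact absurd (by rw [map_sqrtDiscr, hroot, hσa, hσb, sqrtDiscr_swap, sqrtDiscr_rotate]) hne

lemma map_eq_of_lagrangeResolvent (h : IsRootTriple A B a b c) {σ : E →+* E} (hA : σ A = A)
    (hB : σ B = B) {w : E} (hw : w ^ 2 + w + 1 = 0) (hσw : σ w = w)
    (hV : σ (sqrtDiscr a b c) = sqrtDiscr a b c) (hA0 : A ≠ 0) (h2 : (2 : E) ≠ 0)
    (h3 : (3 : E) ≠ 0) (hprop : σ (lagrangeResolvent w a b c) * lagrangeResolvent w b a c =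
      lagrangeResolvent w a b c * σ (lagrangeResolvent w b a c)) : σ a = a := by
  have hmul := h.lagrangeResolvent_mul hw
  have hpow := h.two_mul_lagrangeResolvent_pow_three hw
  have hadd := h.three_mul_eq_lagrangeResolvent_add hw
  set x := lagrangeResolvent w a b c
  set y := lagrangeResolvent w b a c
  have hxy : x * y ≠ 0 := h.lagrangeResolvent_mul_ne_zero hw hA0 h3
  have hx : x ≠ 0 := left_ne_zero_of_mul hxy
  have hy : y ≠ 0 := right_ne_zero_of_mul hxy
  have hσxy : σ x * σ y = x * y := by
    rw [← map_mul, hmul]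
    simp [hA, hσw, map_ofNat]
  have hsq : σ x ^ 2 = x ^ 2 := by
    apply mul_right_cancel₀ hy
    linear_combination σ x * hprop + x * hσxy
  have hcube : σ x ^ 3 = x ^ 3 := by
    apply mul_left_cancel₀ h2
    rw [hpow]
    simpa [hB, hσw, hV, map_ofNat] using congrArg σ hpow
  have hσx : σ x = x := by
    apply mul_left_cancel₀ (pow_ne_zero 2 hx)
    linear_combination hcube - σ x * hsq
  have hσy : σ y = y := by
    apply mul_left_cancel₀ hx
    linear_combination hσxy - σ y * hσx
  apply mul_left_cancel₀ h3
  have hσadd := congrArg σ hadd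
  simp only [map_mul, map_add, map_pow, map_ofNat, hσx, hσy, hσw] at hσadd
  rw [hσadd, hadd]

end IsDomain

end IsRootTriple

/-- `x ^ 3 + A * x + B` splits into linear factors over `𝔽_p`, expressed by its roots in the
algebraic closure being fixed by Frobenius. -/
def CubicSplitsMod (A B : ℤ) (p : ℕ) [Fact p.Prime] : Prop :=
  ∀ x : AlgebraicClosure (ZMod p), x ^ 3 + A * x + B = 0 → x ^ p = x

section Frobenius

variable {A B : ℤ} {p : ℕ} [hp : Fact p.Prime] {a b c : AlgebraicClosure (ZMod p)}

lemma IsRootTriple.cubicSplitsMod_iff (h : IsRootTriple (A : AlgebraicClosure (ZMod p)) B a b c) :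
    CubicSplitsMod A B p ↔ a ^ p = a ∧ b ^ p = b ∧ c ^ p = c := by
  constructor
  · refine fun hsplit ↦ ⟨hsplit a ?_, hsplit b ?_, hsplit c ?_⟩ <;> rw [h.cubic_eq_mul] <;> ring
  · rintro ⟨ha, hb, hc⟩ x hx
    rw [h.cubic_eq_mul] at hx
    obtain (rfl | rfl) | rfl := by simpa only [mul_eq_zero, sub_eq_zero] using hx
    exacts [ha, hb, hc]

lemma natCast_dvd_iff_cubicSplitsMod (hA : ¬ (p : ℤ) ∣ A) (hB : ¬ (p : ℤ) ∣ B)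
    (hD : ¬ (p : ℤ) ∣ 4 * A ^ 3 + 27 * B ^ 2) {u : ℕ → ℤ} (h0 : u 0 = 0) (h1 : u 1 = -A)
    (h2 : u 2 = -B) (hrec : ∀ n, u (n + 3) = -A * u (n + 1) - B * u n) :
    (p : ℤ) ∣ u (p - 1) ↔ CubicSplitsMod A B p := by
  obtain ⟨a, b, c, h⟩ := exists_isRootTriple (A : AlgebraicClosure (ZMod p)) B
  have hne {m : ℤ} (hm : ¬ (p : ℤ) ∣ m) : (m : AlgebraicClosure (ZMod p)) ≠ 0 :=
    fun hm0 ↦ hm ((CharP.intCast_eq_zero_iff _ p m).1 hm0)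
  have hV : sqrtDiscr a b c ≠ 0 := by
    rw [← pow_ne_zero_iff two_ne_zero, h.sqrtDiscr_sq, neg_ne_zero]
    exact_mod_cast hne hD
  have hfrob := h.map (σ := frobenius _ p) (map_intCast _ A) (map_intCast _ B)
  have hu := h.sqrtDiscr_mul_eq_sum (u := fun n ↦ (u n : AlgebraicClosure (ZMod p))) (by simp [h0])
    (by simp [h1]) (by simp [h2]) (fun n ↦ by simp [hrec]) (p - 1)
  rw [show p - 1 + 3 = 2 + p by have := hp.1.pos; lia] at hu
  rw [h.cubicSplitsMod_iff, ← CharP.intCast_eq_zero_iff (AlgebraicClosure (ZMod p)) p,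
    ← mul_eq_zero_iff_left hV, hu, neg_eq_zero]
  simpa only [frobenius_def, pow_add] using h.eq_iff_sum_eq_zero hfrob (hne hA) (hne hB)

lemma CubicSplitsMod.isSquare (h : CubicSplitsMod A B p) :
    IsSquare ((-(4 * A ^ 3 + 27 * B ^ 2) : ℤ) : ZMod p) := by
  let ι := ZMod.castHom dvd_rfl (AlgebraicClosure (ZMod p))
  obtain ⟨a, b, c, hroot⟩ := exists_isRootTriple (A : AlgebraicClosure (ZMod p)) B
  obtain ⟨ha, hb, hc⟩ := hroot.cubicSplitsMod_iff.1 h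
  have hV : sqrtDiscr a b c ^ p = sqrtDiscr a b c := by
    simpa [frobenius_def, ha, hb, hc] using map_sqrtDiscr (frobenius _ p) a b c
  obtain ⟨s, hs⟩ : sqrtDiscr a b c ∈ ι.fieldRange := by
    rwa [ZMod.fieldRange_castHom_eq_bot, Subfield.mem_bot_iff_pow_eq_self]
  refine ⟨s, ι.injective ?_⟩
  rw [← sq, map_pow, hs, hroot.sqrtDiscr_sq, map_intCast]
  push_cast
  ring

end Frobenius

end DepressedCubic

section CubicReciprocity

open EisensteinInt QuadraticAlgebra

lemma pow_sq_mul_eq_mul_pow_sq {E : Type*} [CommRing E] [IsDomain E] {p : ℕ} (hp : p.Prime)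
    (hp2 : p ≠ 2) (hp3 : p ≠ 3) {x y f f' k d Y : E} (hY : Y ≠ 0) (hx : Y * x ^ 3 = -(k * f'))
    (hy : Y * y ^ 3 = k * f) (hf : f' ^ ((p ^ 2 - 1) / 3) = d * f ^ ((p ^ 2 - 1) / 3)) :
    x ^ p ^ 2 * y = d * (x * y ^ p ^ 2) := by
  have hdvd := three_dvd_sq_sub_one hp hp3
  have hodd : p ^ 2 % 2 = 1 := Nat.odd_iff.1 (hp.odd_of_ne_two hp2).pow
  set m := (p ^ 2 - 1) / 3
  have hpm : p ^ 2 = 3 * m + 1 := by lia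
  have heven : Even m := Nat.even_iff.2 (by lia)
  have hxm := congrArg (· ^ m) hx
  have hym := congrArg (· ^ m) hy
  simp only [heven.neg_pow, mul_pow, ← pow_mul, hf] at hxm hym
  apply mul_left_cancel₀ (pow_ne_zero m hY)
  rw [hpm, pow_succ, pow_succ]
  linear_combination x * y * hxm - d * x * y * hym

lemma exists_isRootTriple_sqrtDiscr_mul {E : Type*} [Field E] [IsAlgClosed E] {A B X Y : E}
    (h : X ^ 2 + (4 * A ^ 3 + 27 * B ^ 2) * Y ^ 2 = 0) :
    ∃ a b c, IsRootTriple A B a b c ∧ sqrtDiscr a b c * Y = X := by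
  obtain ⟨a, b, c, hroot⟩ := exists_isRootTriple A B
  have hsq : (sqrtDiscr a b c * Y) ^ 2 = X ^ 2 := by
    linear_combination Y ^ 2 * hroot.sqrtDiscr_sq - h
  obtain hX | hX := sq_eq_sq_iff_eq_or_eq_neg.1 hsq
  · exact ⟨a, b, c, hroot, hX⟩
  · exact ⟨b, a, c, hroot.swap, by rw [sqrtDiscr_swap, neg_mul, hX, neg_neg]⟩

namespace EisensteinInt.IsCubicResidueCharacter

variable {A B X Y : ℤ} {α : EisensteinInt} {χ : ℤ →* EisensteinInt} {p : ℕ} [hp : Fact p.Prime]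
  {a b c : AlgebraicClosure (ZMod p)}

/-- Up to the common factor `3 * (1 + 2 * φ ω) / Y`, the cubes of the two Lagrange resolvents are
`-φ (star α)` and `φ α`. -/
lemma lagrangeResolvent_pow_mul (h : IsCubicResidueCharacter α χ) (hre : 2 * α.re = X + 3 * B * Y)
    (him : α.im = 3 * B * Y) (hp2 : p ≠ 2) (hcop : IsCoprime (p : ℤ) (3 * norm α))
    (hY : ¬ (p : ℤ) ∣ Y) (hroot : IsRootTriple (A : AlgebraicClosure (ZMod p)) B a b c)
    (hV : sqrtDiscr a b c * Y = X) (φ : EisensteinInt →+* AlgebraicClosure (ZMod p)) :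
    lagrangeResolvent (φ ω) a b c ^ p ^ 2 * lagrangeResolvent (φ ω) b a c =
      φ (χ p) * (lagrangeResolvent (φ ω) a b c * lagrangeResolvent (φ ω) b a c ^ p ^ 2) := by
  have hw := map_omega_relation φ
  have hre' := congrArg (Int.cast : ℤ → AlgebraicClosure (ZMod p)) hre
  have him' := congrArg (Int.cast : ℤ → AlgebraicClosure (ZMod p)) him
  push_cast at hre' him'
  have hp3 : p ≠ 3 := ne_three_of_isCoprime hcop
  have h2 : (2 : AlgebraicClosure (ZMod p)) ≠ 0 := by
    exact_mod_cast natCast_ne_zero_of_prime_ne _ hp.1 Nat.prime_two hp2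
  refine pow_sq_mul_eq_mul_pow_sq hp.1 hp2 hp3 (Y := (Y : AlgebraicClosure (ZMod p)))
    (k := 3 * (1 + 2 * φ ω)) (fun hY0 ↦ hY ((CharP.intCast_eq_zero_iff _ p Y).1 hY0)) ?_ ?_
    (h.reciprocity p hcop φ)
  · apply mul_left_cancel₀ h2
    rw [map_star_eq]
    linear_combination Y * hroot.two_mul_lagrangeResolvent_pow_three hw
      - 3 * (1 + 2 * φ ω) * hV + 3 * (1 + 2 * φ ω) * (hre' - 2 * (1 + φ ω) * him')
      - 36 * B * Y * hw
  · have hpow := hroot.swap.two_mul_lagrangeResolvent_pow_three hw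
    rw [sqrtDiscr_swap] at hpow
    apply mul_left_cancel₀ h2
    rw [map_eq φ α]
    linear_combination Y * hpow + 3 * (1 + 2 * φ ω) * hV
      - 3 * (1 + 2 * φ ω) * (hre' + 2 * φ ω * him') - 36 * B * Y * hw

lemma root_pow_eq (h : IsCubicResidueCharacter α χ) (hre : 2 * α.re = X + 3 * B * Y)
    (him : α.im = 3 * B * Y) (hp2 : p ≠ 2) (hcop : IsCoprime (p : ℤ) (3 * norm α))
    (hA : ¬ (p : ℤ) ∣ A) (hY : ¬ (p : ℤ) ∣ Y) (hX : ¬ (p : ℤ) ∣ X)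
    (hroot : IsRootTriple (A : AlgebraicClosure (ZMod p)) B a b c)
    (hV : sqrtDiscr a b c * Y = X) (hχ : χ p = 1) : a ^ p = a := by
  obtain ⟨φ⟩ := nonempty_ringHom_of_isAlgClosed (AlgebraicClosure (ZMod p))
  have hw := map_omega_relation φ
  have hp3 : p ≠ 3 := ne_three_of_isCoprime hcop
  have h2 : (2 : AlgebraicClosure (ZMod p)) ≠ 0 := by
    exact_mod_cast natCast_ne_zero_of_prime_ne _ hp.1 Nat.prime_two hp2
  have h3 : (3 : AlgebraicClosure (ZMod p)) ≠ 0 := by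
    exact_mod_cast natCast_ne_zero_of_prime_ne _ hp.1 Nat.prime_three hp3
  have hne {m : ℤ} (hm : ¬ (p : ℤ) ∣ m) : (m : AlgebraicClosure (ZMod p)) ≠ 0 :=
    fun hm0 ↦ hm ((CharP.intCast_eq_zero_iff _ p m).1 hm0)
  let σ := frobenius (AlgebraicClosure (ZMod p)) p
  have hσV : σ (sqrtDiscr a b c) = sqrtDiscr a b c := by
    apply mul_right_cancel₀ (hne hY)
    rw [hV, ← map_intCast σ Y, ← map_mul, hV, map_intCast]
  have hσσ (z) : (σ.comp σ) z = z ^ p ^ 2 := by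
    simp only [σ, RingHom.comp_apply, frobenius_def, ← pow_mul, sq]
  have hσw : (σ.comp σ) (φ ω) = φ ω := by rw [hσσ, map_omega_pow_sq φ hp.1 hp3]
  have hprop := h.lagrangeResolvent_pow_mul hre him hp2 hcop hY hroot hV φ
  rw [hχ, map_one, one_mul, ← hσσ, ← hσσ] at hprop
  have hσσa := hroot.map_eq_of_lagrangeResolvent (map_intCast _ A) (map_intCast _ B) hw hσw
    (by rw [RingHom.comp_apply, hσV, hσV]) (hne hA) h2 h3 hprop
  exact hroot.map_eq_of_map_map_eq (map_intCast σ A) (map_intCast σ B) hσσa hσV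
    (left_ne_zero_of_mul (hV ▸ hne hX)) h2

lemma map_eq_one_of_root_pow_eq (h : IsCubicResidueCharacter α χ)
    (hre : 2 * α.re = X + 3 * B * Y) (him : α.im = 3 * B * Y) (hp2 : p ≠ 2)
    (hcop : IsCoprime (p : ℤ) (3 * norm α)) (hA : ¬ (p : ℤ) ∣ A) (hY : ¬ (p : ℤ) ∣ Y)
    (hroot : IsRootTriple (A : AlgebraicClosure (ZMod p)) B a b c)
    (hV : sqrtDiscr a b c * Y = X) (ha : a ^ p = a) (hb : b ^ p = b) (hc : c ^ p = c) :
    χ p = 1 := by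
  obtain ⟨φ⟩ := nonempty_ringHom_of_isAlgClosed (AlgebraicClosure (ZMod p))
  have hp3 : p ≠ 3 := ne_three_of_isCoprime hcop
  have h3 : ((3 : ℕ) : AlgebraicClosure (ZMod p)) ≠ 0 :=
    natCast_ne_zero_of_prime_ne _ hp.1 Nat.prime_three hp3
  have hA0 : (A : AlgebraicClosure (ZMod p)) ≠ 0 :=
    fun h0 ↦ hA ((CharP.intCast_eq_zero_iff _ p A).1 h0)
  have hfix {z : AlgebraicClosure (ZMod p)} (hz : z ^ p = z) : z ^ p ^ 2 = z := by
    rw [sq, pow_mul, hz, hz]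
  have hL := map_lagrangeResolvent (iterateFrobenius _ p 2) (φ ω) a b c
  have hL' := map_lagrangeResolvent (iterateFrobenius _ p 2) (φ ω) b a c
  simp only [iterateFrobenius_def, map_omega_pow_sq φ hp.1 hp3, hfix ha, hfix hb, hfix hc]
    at hL hL'
  have hprop := h.lagrangeResolvent_pow_mul hre him hp2 hcop hY hroot hV φ
  rw [hL, hL'] at hprop
  refine eq_one_of_pow_eq_one_of_map_eq_one φ h3 (h.pow_three hcop.of_mul_right_right) ?_
  exact (mul_eq_right₀ (hroot.lagrangeResolvent_mul_ne_zero (map_omega_relation φ) hA0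
    (by exact_mod_cast h3))).1 hprop.symm

lemma map_eq_one_iff_cubicSplitsMod (h : IsCubicResidueCharacter α χ)
    (hre : 2 * α.re = X + 3 * B * Y) (him : α.im = 3 * B * Y) (hp2 : p ≠ 2)
    (hcop : IsCoprime (p : ℤ) (3 * norm α)) (hA : ¬ (p : ℤ) ∣ A) (hY : ¬ (p : ℤ) ∣ Y)
    (hX : ¬ (p : ℤ) ∣ X) (hn : (p : ℤ) ∣ X ^ 2 + (4 * A ^ 3 + 27 * B ^ 2) * Y ^ 2) :
    χ p = 1 ↔ CubicSplitsMod A B p := by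
  have hn0 := (CharP.intCast_eq_zero_iff (AlgebraicClosure (ZMod p)) p _).2 hn
  push_cast at hn0
  obtain ⟨a, b, c, hroot, hV⟩ := exists_isRootTriple_sqrtDiscr_mul hn0
  rw [hroot.cubicSplitsMod_iff]
  constructor
  · have hfix {a b c} := h.root_pow_eq (a := a) (b := b) (c := c) hre him hp2 hcop hA hY hX
    exact fun hχ ↦ ⟨hfix hroot hV hχ, hfix hroot.rotate (by rwa [sqrtDiscr_rotate]) hχ,
      hfix hroot.rotate.rotate (by rwa [sqrtDiscr_rotate, sqrtDiscr_rotate]) hχ⟩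
  · rintro ⟨ha, hb, hc⟩
    exact h.map_eq_one_of_root_pow_eq hre him hp2 hcop hA hY hroot hV ha hb hc

end EisensteinInt.IsCubicResidueCharacter

lemma exists_character_map_eq_one_iff_cubicSplitsMod {A B X Y m : ℤ} {p : ℕ} [hp : Fact p.Prime]
    (hp2 : p ≠ 2) (hp3 : p ≠ 3) (hD : ¬ (p : ℤ) ∣ 4 * A ^ 3 + 27 * B ^ 2)
    (h : 4 * (p * m) = X ^ 2 + (4 * A ^ 3 + 27 * B ^ 2) * Y ^ 2)
    (hcop : IsCoprime (p * m) (A * Y)) (hX : ¬ 3 ∣ X) (hY : ¬ 3 ∣ Y) :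
    ∃ α χ, IsCubicResidueCharacter α χ ∧ α.im = 3 * B * Y ∧
      norm α = p * m - A ^ 3 * Y ^ 2 ∧ (χ m = 1 ↔ CubicSplitsMod A B p) := by
  obtain ⟨α, χ, hχ, hre, him, hnorm, hpm⟩ := exists_character_of_four_mul_eq h hcop hX hY
  have hpp : Prime (p : ℤ) := Nat.prime_iff_prime_int.1 hp.1
  have hpA : IsCoprime (p : ℤ) A := hcop.of_mul_left_left.of_mul_right_left
  have hpY : IsCoprime (p : ℤ) Y := hcop.of_mul_left_left.of_mul_right_right
  have hpnorm : IsCoprime (p : ℤ) (norm α) := by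
    rw [hnorm, show (p : ℤ) * m - A ^ 3 * Y ^ 2 = -(A ^ 3 * Y ^ 2) + p * m by ring]
    exact ((hpA.pow_right.mul_right hpY.pow_right).neg_right).add_mul_left_right m
  have hpX : ¬ (p : ℤ) ∣ X := by
    intro hX
    have hDY : (p : ℤ) ∣ (4 * A ^ 3 + 27 * B ^ 2) * Y ^ 2 := by
      rw [← Int.dvd_add_right (dvd_pow hX two_ne_zero), ← h]
      exact (dvd_mul_right _ _).mul_left 4
    exact (hpp.dvd_or_dvd hDY).elim hD
      fun hY ↦ hpp.coprime_iff_not_dvd.1 hpY (hpp.dvd_of_dvd_pow hY)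
  have hp3' : IsCoprime (p : ℤ) 3 :=
    Nat.isCoprime_iff_coprime.2 ((Nat.coprime_primes hp.1 Nat.prime_three).2 hp3)
  refine ⟨α, χ, hχ, him, hnorm, ?_⟩
  rw [← hχ.map_eq_one_iff_cubicSplitsMod hre him hp2 (hp3'.mul_right hpnorm)
    (hpp.coprime_iff_not_dvd.1 hpA) (hpp.coprime_iff_not_dvd.1 hpY) hpX
    (h ▸ (dvd_mul_right _ _).mul_left 4)]
  rw [map_mul] at hpm
  exact ⟨fun hm ↦ by rwa [hm, mul_one] at hpm, fun hp ↦ by rwa [hp, one_mul] at hpm⟩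

end CubicReciprocity

section BinaryForms

lemma exists_abs_add_two_mul_le {a : ℤ} (ha : 0 < a) (b : ℤ) : ∃ m, |b + 2 * a * m| ≤ a := by
  refine ⟨-((b + a) / (2 * a)), abs_le.2 ?_⟩
  have hnonneg := Int.emod_nonneg (b + a) (b := 2 * a) (by lia)
  have hlt := Int.emod_lt_of_pos (b + a) (b := 2 * a) (by lia)
  have hdiv := Int.mul_ediv_add_emod (b + a) (2 * a)
  constructor <;> linarith

lemma exists_reduced_form {a b c : ℤ} (ha : 0 < a) (hdisc : b ^ 2 < 4 * a * c) (x y : ℤ) :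
    ∃ a' b' c' x' y', 0 < a' ∧ |b'| ≤ a' ∧ a' ≤ c' ∧ b' ^ 2 - 4 * a' * c' = b ^ 2 - 4 * a * c ∧
      a' * x' ^ 2 + b' * x' * y' + c' * y' ^ 2 = a * x ^ 2 + b * x * y + c * y ^ 2 := by
  induction hN : a.toNat using Nat.strong_induction_on generalizing a b c x y with
  | _ N ih =>
    obtain ⟨m, hm⟩ := exists_abs_add_two_mul_le ha b
    let c' := a * m ^ 2 + b * m + c
    have hdisc' : (b + 2 * a * m) ^ 2 - 4 * a * c' = b ^ 2 - 4 * a * c := by ring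
    obtain hac | hca := le_or_gt a c'
    · exact ⟨a, _, c', x - m * y, y, ha, hm, hac, hdisc', by ring⟩
    · have hc' : 0 < c' := by nlinarith [sq_nonneg (b + 2 * a * m)]
      obtain ⟨a₁, b₁, c₁, x₁, y₁, h⟩ := ih c'.toNat (by lia) (a := c') (b := -(b + 2 * a * m))
        (c := a) hc' (by linarith) (-y) (x - m * y) rfl
      refine ⟨a₁, b₁, c₁, x₁, y₁, h.1, h.2.1, h.2.2.1, ?_, ?_⟩
      · rw [h.2.2.2.1, ← hdisc']
        ring
      · rw [h.2.2.2.2]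
        ring

lemma exists_reduced_mul_eq_sq_add {n : ℕ} {D : ℤ} (hn : Odd n) (hD : 0 < D) (hD4 : D % 4 = 3)
    (h : IsSquare ((-D : ℤ) : ZMod n)) :
    ∃ a b c X Y : ℤ, 0 < a ∧ |b| ≤ a ∧ a ≤ c ∧ b ^ 2 - 4 * a * c = -D ∧
      4 * a * n = X ^ 2 + D * Y ^ 2 := by
  obtain ⟨b, hb, hodd⟩ : ∃ b : ℤ, (n : ℤ) ∣ b ^ 2 + D ∧ Odd b := by
    obtain ⟨r, hr⟩ := h
    obtain ⟨s, rfl⟩ := ZMod.intCast_surjective r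
    have hs (k : ℤ) : (n : ℤ) ∣ (s + n * k) ^ 2 + D := by
      rw [← ZMod.intCast_zmod_eq_zero_iff_dvd]
      push_cast at hr ⊢
      rw [ZMod.natCast_self]
      linear_combination -hr
    obtain hs' | hs' := Int.even_or_odd s
    · exact ⟨_, hs 1, hs'.add_odd (by simpa using hn)⟩
    · exact ⟨_, hs 0, by simpa using hs'⟩
  obtain ⟨c, hc⟩ : 4 * (n : ℤ) ∣ b ^ 2 + D := by
    have hcop : IsCoprime (4 : ℤ) n :=
      Nat.isCoprime_iff_coprime.2 ((Nat.coprime_two_left.2 hn).pow_left 2)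
    obtain ⟨k, rfl⟩ := hodd
    refine hcop.mul_dvd ⟨k ^ 2 + k + (D + 1) / 4, ?_⟩ hb
    rw [mul_add, Int.mul_ediv_cancel' (by lia)]
    ring
  obtain ⟨a', b', c', x, y, ha', hab, hac, hdisc, hval⟩ :=
    exists_reduced_form (a := n) (b := b) (c := c) (by exact_mod_cast hn.pos) (by linarith) 1 0
  refine ⟨a', b', c', 2 * a' * x + b' * y, y, ha', hab, hac, by linarith, ?_⟩
  linear_combination -4 * a' * hval - y ^ 2 * (hdisc + hc)

lemma four_mul_or_eight_mul_eq_of_isSquare {n : ℕ} (hn : Odd n)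
    (h : IsSquare ((-31 : ℤ) : ZMod n)) :
    (∃ X Y : ℤ, 4 * (n : ℤ) = X ^ 2 + 31 * Y ^ 2) ∨
      ∃ X Y : ℤ, 8 * (n : ℤ) = X ^ 2 + 31 * Y ^ 2 := by
  obtain ⟨a, b, c, X, Y, ha, hab, hac, hdisc, hrep⟩ :=
    exists_reduced_mul_eq_sq_add hn (by norm_num) (by norm_num) h
  have ha3 : a ≤ 3 := by nlinarith [sq_abs b, abs_nonneg b]
  interval_cases a
  · exact .inl ⟨X, Y, hrep⟩
  · exact .inr ⟨X, Y, hrep⟩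
  · obtain ⟨hl, hu⟩ := abs_le.1 hab
    interval_cases b <;> omega

lemma exists_eq_principal_form {n X Y : ℤ} (h : 4 * n = X ^ 2 + 31 * Y ^ 2) :
    ∃ k, n = k ^ 2 + k * Y + 8 * Y ^ 2 := by
  obtain ⟨k, hk⟩ : 2 ∣ X - Y := by
    have : 2 ∣ X ^ 2 - Y ^ 2 := ⟨2 * n - 16 * Y ^ 2, by linear_combination -h⟩
    simpa [Int.even_sub, Int.even_pow', ← even_iff_two_dvd] using this
  obtain rfl : X = Y + 2 * k := by linear_combination hk
  exact ⟨k, by linarith⟩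

lemma exists_four_mul_eight_mul_eq {n X Y : ℤ} (h : 4 * n = X ^ 2 + 31 * Y ^ 2)
    (hodd : Odd n ∨ Odd Y) : ∃ X' Y' : ℤ, 4 * (8 * n) = X' ^ 2 + 31 * Y' ^ 2 ∧ Odd Y' := by
  obtain ⟨k, rfl⟩ := exists_eq_principal_form h
  obtain hk | hk := Int.even_or_odd k
  · have hn : Even (k ^ 2 + k * Y + 8 * Y ^ 2) := by
      obtain ⟨j, rfl⟩ := hk
      exact ⟨2 * j ^ 2 + j * Y + 4 * Y ^ 2, by ring⟩
    have hY : Odd Y := hodd.resolve_left (Int.not_odd_iff_even.2 hn)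
    exact ⟨k - 15 * Y, k + Y, by ring, hk.add_odd hY⟩
  · exact ⟨k + 16 * Y, k, by ring, hk⟩

lemma odd_of_eight_mul_eq {n X Y : ℤ} (hn : Odd n) (h : 8 * n = X ^ 2 + 31 * Y ^ 2) : Odd Y := by
  obtain ⟨k, hk⟩ := exists_eq_principal_form (n := 2 * n) (X := X) (Y := Y) (by linarith)
  by_contra hY
  obtain ⟨z, rfl⟩ := Int.not_odd_iff_even.1 hY
  obtain ⟨j, rfl⟩ : Even k := by
    have : Even (k ^ 2) := ⟨n - k * z - 16 * z ^ 2, by linarith⟩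
    exact (Int.even_pow.1 this).1
  exact Int.not_even_iff_odd.2 hn ⟨j ^ 2 + j * z + 8 * z ^ 2, by linarith⟩

end BinaryForms

section DiscriminantNegThirtyOne

open EisensteinInt

variable {p : ℕ} [hp : Fact p.Prime]

lemma not_dvd_four_mul_add (hp31 : p ≠ 31) : ¬ (p : ℤ) ∣ 4 * 1 ^ 3 + 27 * 1 ^ 2 := by
  intro h
  exact hp31 ((Nat.prime_dvd_prime_iff_eq hp.1 (by norm_num)).1 (by exact_mod_cast h))

lemma isCoprime_of_four_mul_eq {X Y : ℤ} {e : ℕ} (hp2 : p ≠ 2)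
    (h : 4 * (p * 2 ^ e) = X ^ 2 + 31 * Y ^ 2) (hY : Odd Y) :
    IsCoprime ((p : ℤ) * 2 ^ e) Y := by
  have hpp : Prime (p : ℤ) := Nat.prime_iff_prime_int.1 hp.1
  refine IsCoprime.mul_left ?_ (Int.isCoprime_two_left.2 hY).pow_left
  rw [hpp.coprime_iff_not_dvd]
  rintro ⟨y, rfl⟩
  obtain ⟨x, rfl⟩ : (p : ℤ) ∣ X := hpp.dvd_of_dvd_pow (n := 2)
    ⟨4 * 2 ^ e - 31 * p * y ^ 2, by linear_combination -h⟩
  have hdvd : (p : ℤ) ∣ 2 ^ (e + 2) := ⟨x ^ 2 + 31 * y ^ 2, by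
    apply mul_left_cancel₀ hpp.ne_zero
    linear_combination h⟩
  have := Nat.Prime.dvd_of_dvd_pow hp.1 (by exact_mod_cast hdvd : p ∣ 2 ^ (e + 2))
  exact hp2 ((Nat.prime_dvd_prime_iff_eq hp.1 Nat.prime_two).1 this)

lemma cubicSplitsMod_iff_three_dvd_of_not_three_dvd (hp2 : p ≠ 2) (hp3 : p ≠ 3) (hp31 : p ≠ 31)
    {X Y : ℤ} {e : ℕ} (he : e ≠ 0) (h : 4 * (p * 2 ^ e) = X ^ 2 + 31 * Y ^ 2) (hY : Odd Y)
    (hX3 : ¬ 3 ∣ X) (hY3 : ¬ 3 ∣ Y) : CubicSplitsMod 1 1 p ↔ 3 ∣ e := by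
  obtain ⟨α, χ, hχ, him, hnorm, hsplit⟩ :=
    exists_character_map_eq_one_iff_cubicSplitsMod (A := 1) (B := 1) (X := X) (Y := Y)
      (m := 2 ^ e) hp2 hp3 (not_dvd_four_mul_add hp31) (by linear_combination h)
      (by rw [one_mul]; exact isCoprime_of_four_mul_eq hp2 h hY) hX3 hY3
  have hodd : Odd (QuadraticAlgebra.norm α) := by
    rw [hnorm, one_pow, one_mul]
    exact ((Int.even_pow.2 ⟨even_two, he⟩).mul_left _).sub_odd hY.pow
  have h2 : χ 2 ≠ 1 := by
    refine hχ.map_two_ne_one (Int.two_dvd_ne_zero.2 (Int.odd_iff.1 hodd)) ?_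
    rw [him]
    exact Int.two_dvd_ne_zero.2 (Int.odd_iff.1 (Odd.mul (by decide) hY))
  have : Fact (Nat.Prime 3) := ⟨Nat.prime_three⟩
  rw [← hsplit, map_pow, ← orderOf_eq_prime (hχ.pow_three (Int.isCoprime_two_left.2 hodd)) h2,
    orderOf_dvd_iff_pow_eq_one]

lemma not_three_dvd_of_four_mul_eq {n X Y : ℤ} (h : 4 * n = X ^ 2 + 31 * Y ^ 2)
    (hn : n % 3 = 2) : ¬ 3 ∣ X ∧ ¬ 3 ∣ Y := by
  have hsq (z : ℤ) : z ^ 2 % 3 = 0 ∨ z ^ 2 % 3 = 1 := by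
    obtain hz | hz | hz : z % 3 = 0 ∨ z % 3 = 1 ∨ z % 3 = 2 := by lia
    all_goals simp [pow_two, Int.mul_emod, hz]
  have hdvd {z : ℤ} (hz : 3 ∣ z) : 3 ∣ z ^ 2 := dvd_pow hz two_ne_zero
  constructor <;> intro h3 <;> have := hdvd h3 <;> have := hsq X <;> have := hsq Y <;> lia

lemma cubicSplitsMod_iff_three_dvd (hp2 : p ≠ 2) (hp3 : p ≠ 3) (hp31 : p ≠ 31)
    {X Y : ℤ} {e : ℕ} (he : e ≠ 0) (h : 4 * (p * 2 ^ e) = X ^ 2 + 31 * Y ^ 2) (hY : Odd Y) :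
    CubicSplitsMod 1 1 p ↔ 3 ∣ e := by
  have hp3' : ¬ 3 ∣ (p : ℤ) * 2 ^ e := by
    have h3 := Int.prime_three
    rw [h3.dvd_mul, not_or]
    refine ⟨fun hd ↦ hp3 ?_, fun hd ↦ absurd (h3.dvd_of_dvd_pow hd) (by norm_num)⟩
    exact ((Nat.prime_dvd_prime_iff_eq Nat.prime_three hp.1).1 (by exact_mod_cast hd)).symm
  obtain hmod | hmod : ((p : ℤ) * 2 ^ e) % 3 = 2 ∨ ((p : ℤ) * 2 ^ e) % 3 = 1 := by lia
  · obtain ⟨hX3, hY3⟩ := not_three_dvd_of_four_mul_eq h hmod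
    exact cubicSplitsMod_iff_three_dvd_of_not_three_dvd hp2 hp3 hp31 he h hY hX3 hY3
  · obtain ⟨X', Y', h', hY'⟩ := exists_four_mul_eight_mul_eq h (.inr hY)
    obtain ⟨hX3, hY3⟩ := not_three_dvd_of_four_mul_eq h' (by lia)
    rw [cubicSplitsMod_iff_three_dvd_of_not_three_dvd hp2 hp3 hp31 (e := e + 3) (by lia)
      (by rw [← h']; ring) hY' hX3 hY3]
    lia

lemma cubicSplitsMod_iff_exists_four_mul_eq (hp2 : p ≠ 2) (hp3 : p ≠ 3) (hp31 : p ≠ 31) :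
    CubicSplitsMod 1 1 p ↔ ∃ X Y : ℤ, 4 * (p : ℤ) = X ^ 2 + 31 * Y ^ 2 := by
  have hodd : Odd p := hp.1.odd_of_ne_two hp2
  have hodd' : Odd (p : ℤ) := by exact_mod_cast hodd
  constructor
  · intro h
    refine (four_mul_or_eight_mul_eq_of_isSquare hodd h.isSquare).resolve_right ?_
    rintro ⟨X, Y, hXY⟩
    have := (cubicSplitsMod_iff_three_dvd (X := X) (Y := Y) hp2 hp3 hp31 one_ne_zero
      (by linear_combination hXY) (odd_of_eight_mul_eq hodd' hXY)).1 h
    lia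
  · rintro ⟨X, Y, hXY⟩
    obtain ⟨X', Y', h', hY'⟩ := exists_four_mul_eight_mul_eq hXY (.inl hodd')
    exact (cubicSplitsMod_iff_three_dvd (X := X') (Y := Y') hp2 hp3 hp31 three_ne_zero
      (by linear_combination h') hY').2 dvd_rfl

lemma eight_ne_sq_add (X Y : ℤ) : 8 ≠ X ^ 2 + 31 * Y ^ 2 := by
  intro h
  have hY : Y ^ 2 = 0 := by nlinarith [sq_nonneg X, sq_nonneg Y]
  have hX : |X| < 3 := abs_lt_of_sq_lt_sq (by lia) (by norm_num)
  obtain ⟨hl, hu⟩ := abs_lt.1 hX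
  interval_cases X <;> lia

end DiscriminantNegThirtyOne

theorem table1_disc31 (u : ℕ → ℤ)
    (h0 : u 0 = 0) (h1 : u 1 = -1) (h2 : u 2 = -1)
    (hrec : ∀ n, u (n + 3) = -u (n + 1) - u n)
    (p : ℕ) (hp : p.Prime) (hpe : p ∉ ({3, 31} : Set ℕ)) :
    (p : ℤ) ∣ u (p - 1) ↔ ∃ X Y : ℤ, 4 * (p : ℤ) = X ^ 2 + 31 * Y ^ 2 := by
  obtain ⟨hp3, hp31⟩ : p ≠ 3 ∧ p ≠ 31 := by simpa using hpe
  obtain rfl | hp2 := eq_or_ne p 2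
  · refine iff_of_false (by simp [h1]) ?_
    rintro ⟨X, Y, h⟩
    exact eight_ne_sq_add X Y (by simpa using h)
  have : Fact p.Prime := ⟨hp⟩
  have hp1 : ¬ (p : ℤ) ∣ 1 := by simpa [Int.natCast_dvd] using hp.ne_one
  rw [natCast_dvd_iff_cubicSplitsMod hp1 hp1 (not_dvd_four_mul_add hp31) h0 h1 h2
    (by simpa using hrec)]
  exact cubicSplitsMod_iff_exists_four_mul_eq hp2 hp3 hp31
end
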